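/- Let q be a braiding matrix with connected Dynkin diagram such that B_q is finite dimensional, let B be a pre-Nichols algebra of q with finite GKdim, and let i,j ∈ I_θ. Assume the rank-two Dynkin diagram (q_{ii}, q̃_{ij}, q_{jj}) of vertices i,j is one of: (−ζ^{−2}, ζ^{−1}, ζ) with ζ ∈ G_12' (type ufo(7)); (−ζ², ζ³, −1) with ζ ∈ G_12' (type ufo(8)); (ζ⁶, ζ, ζ^{−1}) with ζ ∈ G_24' (type ufo(9)); (−ζ, −ζ^{−3}, ζ⁵) with ζ ∈ G_15' (type ufo(11)); (−ζ, ζ^{−2}, ζ³) with ζ ∈ G_9' (type brj(2,3)); (ζ, −1, −1) with ζ ∈ G_6' (type G_2). Then [x_{3α_i+2α_j}, x_{ij}]_c = 0 in B. -/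

import Mathlib

/-
Common framework for formalizing statements from
"Finite GK-dimensional pre-Nichols algebras of (super)modular and unidentified type"
(Angiono, Campagnolo, Sanmarco).

We work over `ℂ` (an algebraically closed field of characteristic zero).
A braiding matrix is `q : Fin θ → Fin θ → ℂˣ`.  The tensor algebra `T(V)` of the
associated braided vector space of diagonal type is realized as the free algebra
on `Fin θ`.  The braided bialgebra structure on `T(V)` (the braided coproduct,
uniquely determined by the braiding matrix) is packaged in the structure
`BraidedStr`: its fields characterize it uniquely, so quantifying over
`S : BraidedStr θ q` is equivalent to using "the" braided coproduct.

A pre-Nichols algebra of `q` is the quotient `T(V)/I` by an ℕ₀-homogeneous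
(two-sided) braided bi-ideal `I` generated in degrees ≥ 2 (`IsPreNicholsIdeal`);
such an ideal is automatically contained in the defining ideal `Jq` of the
Nichols algebra, which is the largest such ideal.  A statement
"`x = 0` holds in the pre-Nichols algebra `T(V)/I`" is formalized as `x ∈ I`.
-/

open scoped TensorProduct

noncomputable section

namespace PreNicholsPaper

/-- The tensor algebra `T(V)` of the braided vector space of diagonal type of rank `θ`. -/
abbrev TV (θ : ℕ) := FreeAlgebra ℂ (Fin θ)

/-- The generator `x_i` of `T(V)`. -/
def gen (θ : ℕ) (i : Fin θ) : TV θ := FreeAlgebra.ι ℂ i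

/-- The monomial `x_{i_1} ⋯ x_{i_n}` associated to a word. -/
def wordElem (θ : ℕ) (w : List (Fin θ)) : TV θ := (w.map (gen θ)).prod

/-- The multidegree in `ℕ₀^θ` of a word. -/
def degW (θ : ℕ) (w : List (Fin θ)) : Fin θ → ℕ := fun i => w.count i

/-- `α_i`, the `i`-th canonical basis vector of `ℕ₀^θ`. -/
def δ (θ : ℕ) (i : Fin θ) : Fin θ → ℕ := fun k => if k = i then 1 else 0

/-- The bilinear form `ℕ₀^θ × ℕ₀^θ → ℂˣ` attached to the braiding matrix,
`q(α_i, α_j) = q_{ij}`, evaluated in `ℂ`. -/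
def qf {θ : ℕ} (q : Fin θ → Fin θ → ℂˣ) (a b : Fin θ → ℕ) : ℂ :=
  ∏ i : Fin θ, ∏ j : Fin θ, (q i j : ℂ) ^ (a i * b j)

/-- `q̃_{ij} = q_{ij} q_{ji}`. -/
def qtil {θ : ℕ} (q : Fin θ → Fin θ → ℂˣ) (i j : Fin θ) : ℂ := (q i j : ℂ) * (q j i : ℂ)

/-- The braided commutator `[u,v]_c = uv - q(a,b) vu` of elements `u, v`
which are homogeneous of multidegrees `a`, `b` respectively. -/
def brk {θ : ℕ} (q : Fin θ → Fin θ → ℂˣ) (a b : Fin θ → ℕ) (u v : TV θ) : TV θ :=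
  u * v - qf q a b • (v * u)

/-- `(ad_c x_i) y = x_i y - q(α_i, b) y x_i` for `y` homogeneous of multidegree `b`. -/
def ad1 {θ : ℕ} (q : Fin θ → Fin θ → ℂˣ) (i : Fin θ) (b : Fin θ → ℕ) (y : TV θ) : TV θ :=
  brk q (δ θ i) b (gen θ i) y

/-- The iterated braided adjoint `x_{i_1 i_2 ⋯ i_k} = (ad_c x_{i_1}) x_{i_2 ⋯ i_k}`. -/
def xw {θ : ℕ} (q : Fin θ → Fin θ → ℂˣ) : List (Fin θ) → TV θ
  | [] => 1
  | [i] => gen θ i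
  | i :: w => ad1 q i (degW θ w) (xw q w)

/-- `(ad_c x_i)^m x_j`. -/
def adpow {θ : ℕ} (q : Fin θ → Fin θ → ℂˣ) (i j : Fin θ) : ℕ → TV θ
  | 0 => gen θ j
  | m + 1 => ad1 q i (fun k => m * δ θ i k + δ θ j k) (adpow q i j m)

/-- The homogeneous component of total degree `n` of `T(V)`. -/
def homogTot (θ : ℕ) (n : ℕ) : Submodule ℂ (TV θ) :=
  Submodule.span ℂ {x | ∃ w : List (Fin θ), w.length = n ∧ x = wordElem θ w}

/-- The homogeneous component of multidegree `d ∈ ℕ₀^θ` of `T(V)`. -/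
def homogD (θ : ℕ) (d : Fin θ → ℕ) : Submodule ℂ (TV θ) :=
  Submodule.span ℂ {x | ∃ w : List (Fin θ), degW θ w = d ∧ x = wordElem θ w}

/-- The braided bialgebra structure on `T(V)` determined by the braiding matrix `q`:
the braided coproduct `Δ` together with the multiplication `mulB` of the braided
tensor product `T(V) ⊗ T(V)`.  These axioms determine `Δ` and `mulB` uniquely. -/
structure BraidedStr (θ : ℕ) (q : Fin θ → Fin θ → ℂˣ) where
  Δ : TV θ →ₗ[ℂ] TensorProduct ℂ (TV θ) (TV θ)
  mulB : TensorProduct ℂ (TV θ) (TV θ) →ₗ[ℂ]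
    TensorProduct ℂ (TV θ) (TV θ) →ₗ[ℂ] TensorProduct ℂ (TV θ) (TV θ)
  mulB_spec : ∀ (a d : TV θ) (wb wc : List (Fin θ)),
    mulB (a ⊗ₜ[ℂ] wordElem θ wb) (wordElem θ wc ⊗ₜ[ℂ] d)
      = qf q (degW θ wb) (degW θ wc) • ((a * wordElem θ wc) ⊗ₜ[ℂ] (wordElem θ wb * d))
  Δ_one : Δ 1 = 1 ⊗ₜ[ℂ] 1
  Δ_gen : ∀ i, Δ (gen θ i) = gen θ i ⊗ₜ[ℂ] 1 + 1 ⊗ₜ[ℂ] gen θ i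
  Δ_mul : ∀ u v : TV θ, Δ (u * v) = mulB (Δ u) (Δ v)

variable {θ : ℕ} {q : Fin θ → Fin θ → ℂˣ}

/-- `x` is a primitive element. -/
def IsPrimitiveIn (S : BraidedStr θ q) (x : TV θ) : Prop :=
  S.Δ x = x ⊗ₜ[ℂ] (1 : TV θ) + (1 : TV θ) ⊗ₜ[ℂ] x

/-- The submodule `I ⊗ T(V) + T(V) ⊗ J` of `T(V) ⊗ T(V)`. -/
def mixedPair (I J : Submodule ℂ (TV θ)) : Submodule ℂ (TensorProduct ℂ (TV θ) (TV θ)) :=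
  Submodule.span ℂ
    ({x | ∃ a b : TV θ, a ∈ I ∧ x = a ⊗ₜ[ℂ] b} ∪ {x | ∃ a b : TV θ, b ∈ J ∧ x = a ⊗ₜ[ℂ] b})

/-- The submodule `I ⊗ T(V) + T(V) ⊗ I` of `T(V) ⊗ T(V)`. -/
def mixedSub (I : Submodule ℂ (TV θ)) : Submodule ℂ (TensorProduct ℂ (TV θ) (TV θ)) :=
  mixedPair I I

/-- `I` is the defining ideal of a pre-Nichols algebra of `q`：an ℕ₀-homogeneous
two-sided (bi-)ideal of `T(V)` generated in degrees `≥ 2` which is also a coideal.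
Such an ideal is automatically contained in the defining ideal `Jq` of the Nichols
algebra, and the pre-Nichols algebra is the quotient `T(V)/I`. -/
structure IsPreNicholsIdeal (S : BraidedStr θ q) (I : Submodule ℂ (TV θ)) : Prop where
  mul_left : ∀ a x : TV θ, x ∈ I → a * x ∈ I
  mul_right : ∀ a x : TV θ, x ∈ I → x * a ∈ I
  homog_ge2 : I = Submodule.span ℂ {x | x ∈ I ∧ ∃ n, 2 ≤ n ∧ x ∈ homogTot θ n}
  coideal : ∀ x ∈ I, S.Δ x ∈ mixedSub I

/-- The defining ideal `J_q` of the Nichols algebra `B_q = T(V)/J_q`: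
the maximal homogeneous braided Hopf ideal generated in degrees `≥ 2`. -/
def Jq (S : BraidedStr θ q) : Submodule ℂ (TV θ) := sSup {I | IsPreNicholsIdeal S I}

/-- The standard filtration of `T(V)`: span of words of length `≤ n`. -/
def Wfil (θ : ℕ) (n : ℕ) : Submodule ℂ (TV θ) :=
  Submodule.span ℂ {x | ∃ w : List (Fin θ), w.length ≤ n ∧ x = wordElem θ w}

/-- The quotient algebra `T(V)/I` has finite Gelfand–Kirillov dimension, i.e.
the standard filtration of the (finitely generated) quotient has polynomial growth. -/
def FinGK (I : Submodule ℂ (TV θ)) : Prop :=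
  ∃ C d : ℕ, ∀ n : ℕ, Module.finrank ℂ ((Wfil θ n).map I.mkQ) ≤ C * (n + 1) ^ d

/-- The Gelfand–Kirillov dimension of the quotient algebra `T(V)/I`. -/
def GKdim (I : Submodule ℂ (TV θ)) : ℝ :=
  Filter.limsup
    (fun n : ℕ => Real.log (Module.finrank ℂ ((Wfil θ n).map I.mkQ)) / Real.log n)
    Filter.atTop

/-- `I` defines an eminent pre-Nichols algebra: it is a finite-GKdim pre-Nichols
algebra, and every finite-GKdim pre-Nichols algebra of `q` is a quotient of it. -/
def IsEminent (S : BraidedStr θ q) (I : Submodule ℂ (TV θ)) : Prop :=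
  IsPreNicholsIdeal S I ∧ FinGK I ∧
    ∀ I' : Submodule ℂ (TV θ), IsPreNicholsIdeal S I' → FinGK I' → I ≤ I'

/-- The Dynkin diagram of the braiding matrix `q`: vertices `Fin θ`, an edge between
`i ≠ j` iff `q̃_{ij} ≠ 1`. -/
def dynkin {θ : ℕ} (q : Fin θ → Fin θ → ℂˣ) : SimpleGraph (Fin θ) :=
  SimpleGraph.fromRel (fun i j => qtil q i j ≠ 1)

/-- The quantum number `(m)_t = 1 + t + ⋯ + t^{m-1}`. -/
def qnum (t : ℂ) (m : ℕ) : ℂ := ∑ k ∈ Finset.range m, t ^ k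

/-- The set of `n ∈ ℕ₀` such that `(n+1)_{q_{ii}} (1 - q_{ii}^n q̃_{ij}) = 0`,
i.e. such that `(ad_c x_i)^{n+1} x_j = 0` in the Nichols algebra.  The entry
`c_{ij}` of the generalized Cartan matrix is `-(min of this set)`. -/
def cSet {θ : ℕ} (q : Fin θ → Fin θ → ℂˣ) (i j : Fin θ) : Set ℕ :=
  {n | qnum (q i i : ℂ) (n + 1) * (1 - (q i i : ℂ) ^ n * qtil q i j) = 0}

/-- The generalized Cartan matrix of `q`. -/
def cij {θ : ℕ} (q : Fin θ → Fin θ → ℂˣ) (i j : Fin θ) : ℤ :=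
  if i = j then 2 else -(Int.ofNat (sInf (cSet q i j)))

/-- All entries `c_{ij}` are defined at the vertex `i`. -/
def reflectable {θ : ℕ} (q : Fin θ → Fin θ → ℂˣ) (i : Fin θ) : Prop :=
  ∀ j, j ≠ i → (cSet q i j).Nonempty

/-- The `i`-th reflection of the braiding matrix:
`(r_i q)_{jk} = q(s_i α_j, s_i α_k)` where `s_i α_j = α_j - c_{ij} α_i`. -/
def reflectMat {θ : ℕ} (q : Fin θ → Fin θ → ℂˣ) (i : Fin θ) : Fin θ → Fin θ → ℂˣ :=
  fun j k =>
    q j k * q j i ^ (-(cij q i k)) * q i k ^ (-(cij q i j)) * q i i ^ (cij q i j * cij q i k)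

/-- The reflection `s_i` acting on `ℤ^θ`. -/
def sRefl {θ : ℕ} (q : Fin θ → Fin θ → ℂˣ) (i : Fin θ) (β : Fin θ → ℤ) : Fin θ → ℤ :=
  fun k => β k - (if k = i then ∑ j, cij q i j * β j else 0)

/-- The (real) roots of `q`, together with the base points of the Weyl groupoid at
which they live: pairs `(q', β)` obtained from a simple root of `q` by iterated
reflections. -/
inductive ReachRoot {θ : ℕ} (q₀ : Fin θ → Fin θ → ℂˣ) :
    (Fin θ → Fin θ → ℂˣ) → (Fin θ → ℤ) → Prop
  | simple (j : Fin θ) : ReachRoot q₀ q₀ (fun k => if k = j then 1 else 0)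
  | reflect {q' : Fin θ → Fin θ → ℂˣ} {β : Fin θ → ℤ} (i : Fin θ) :
      ReachRoot q₀ q' β → ReachRoot q₀ (reflectMat q' i) (sRefl q' i β)

/-- `q` has a finite (generalized) root system: all reflections are defined at every
point of the Weyl groupoid, and the set of roots so obtained is finite. -/
def FiniteRootSystem {θ : ℕ} (q : Fin θ → Fin θ → ℂˣ) : Prop :=
  (∀ q' i, (∃ β, ReachRoot q q' β) → reflectable q' i) ∧
    Set.Finite {β : Fin θ → ℤ | ∃ q', ReachRoot q q' β}

/-- Conjecture (Andruskiewitsch–Angiono–Heckenberger): the root system of a Nichols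
algebra of diagonal type with finite Gelfand–Kirillov dimension is finite. -/
def AAH : Prop :=
  ∀ (θ : ℕ) (q : Fin θ → Fin θ → ℂˣ) (S : BraidedStr θ q), FinGK (Jq S) → FiniteRootSystem q

/-- The two-sided ideal of `T(V)` generated by a set. -/
def idealGen (θ : ℕ) (s : Set (TV θ)) : Submodule ℂ (TV θ) :=
  Submodule.span ℂ {x | ∃ g ∈ s, ∃ a b : TV θ, x = a * g * b}

end PreNicholsPaper

namespace PreNicholsPaper

/-!
Let `x` be a primitive element of `B = T(V)/I`, of degree `β`. Together with `x_i` or `x_j` or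
both it spans a braided vector space of diagonal type and of rank two or three, whose tensor
algebra maps to `B`. The leading parts of the kernel of this map form a pre-Nichols ideal, whose
quotient grows at most as fast as `B`, so its root system is finite by the AAH conjecture. Hence
`x = 0` whenever that braided vector space has an infinite root system.

Applied successively, this kills powers of `x_i` and `x_j`, elements `(ad_c x_i)^m x_j`, the
quantum Serre element of degree `α_i + 2α_j` or an element of degree `2α_i + 2α_j`. In types
`ufo(7)`, `ufo(9)`, `ufo(11)` and `brj(2,3)` the bracket `[x_{3α_i+2α_j}, x_{ij}]_c` is an
algebraic consequence of these relations; in types `ufo(8)` and `G₂` it is primitive modulo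
them, of a degree `4α_i + 3α_j` that is excluded in the same way.
-/

/-! ### Words and the bicharacter -/

section Words

variable {θ : ℕ}

lemma wordElem_nil (θ : ℕ) : wordElem θ [] = 1 := rfl

lemma wordElem_cons (i : Fin θ) (w : List (Fin θ)) :
    wordElem θ (i :: w) = gen θ i * wordElem θ w := by simp [wordElem]

lemma wordElem_append (v w : List (Fin θ)) :
    wordElem θ (v ++ w) = wordElem θ v * wordElem θ w := by simp [wordElem]

lemma wordElem_singleton (i : Fin θ) : wordElem θ [i] = gen θ i := by simp [wordElem]

/-- The basis of `T(V)` given by words. -/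
def wordBasis (θ : ℕ) : Module.Basis (List (Fin θ)) ℂ (TV θ) :=
  (FreeAlgebra.basisFreeMonoid ℂ (Fin θ)).reindex FreeMonoid.toList

lemma wordBasis_apply (w : List (Fin θ)) : wordBasis θ w = wordElem θ w := by
  simp [wordBasis, FreeAlgebra.basisFreeMonoid, FreeAlgebra.equivMonoidAlgebraFreeMonoid, wordElem,
    FreeMonoid.lift_apply]
  rfl

lemma TV.hom_ext {M : Type*} [AddCommMonoid M] [Module ℂ M] {f g : TV θ →ₗ[ℂ] M}
    (h : ∀ w, f (wordElem θ w) = g (wordElem θ w)) : f = g :=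
  (wordBasis θ).ext fun w => by rw [wordBasis_apply]; exact h w

lemma TV.tensor_hom_ext {M : Type*} [AddCommMonoid M] [Module ℂ M]
    {f g : TV θ ⊗[ℂ] TV θ →ₗ[ℂ] M}
    (h : ∀ v w, f (wordElem θ v ⊗ₜ wordElem θ w) = g (wordElem θ v ⊗ₜ wordElem θ w)) : f = g :=
  TensorProduct.ext (hom_ext fun v => hom_ext fun w => h v w)

lemma degW_nil : degW θ [] = 0 := by funext; simp [degW]

lemma degW_append (v w : List (Fin θ)) : degW θ (v ++ w) = degW θ v + degW θ w := by
  funext i; simp [degW]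

lemma degW_singleton (i : Fin θ) : degW θ [i] = δ θ i := by
  funext k
  by_cases h : k = i
  · simp [degW, δ, h]
  · simp [degW, δ, h, Ne.symm h]

lemma degW_cons (i : Fin θ) (w : List (Fin θ)) : degW θ (i :: w) = δ θ i + degW θ w := by
  rw [← degW_singleton, ← degW_append]; rfl

/-- The span of the words satisfying a predicate; the graded and filtered pieces `homogTot`,
`homogD` and `Wfil` are of this form. -/
def wordSpan (P : List (Fin θ) → Prop) : Submodule ℂ (TV θ) :=
  Submodule.span ℂ {x | ∃ w, P w ∧ x = wordElem θ w}

lemma wordElem_mem_wordSpan {P : List (Fin θ) → Prop} {w : List (Fin θ)} (hw : P w) :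
    wordElem θ w ∈ wordSpan P := Submodule.subset_span ⟨w, hw, rfl⟩

lemma wordSpan_le {P : List (Fin θ) → Prop} {M : Submodule ℂ (TV θ)} :
    wordSpan P ≤ M ↔ ∀ w, P w → wordElem θ w ∈ M :=
  Submodule.span_le.trans ⟨fun h w hw => h ⟨w, hw, rfl⟩, by rintro h _ ⟨w, hw, rfl⟩; exact h w hw⟩

lemma wordSpan_mono {P Q : List (Fin θ) → Prop} (h : ∀ w, P w → Q w) :
    wordSpan P ≤ wordSpan Q :=
  wordSpan_le.2 fun w hw => wordElem_mem_wordSpan (h w hw)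

lemma mul_mem_wordSpan {P Q R : List (Fin θ) → Prop} (h : ∀ v w, P v → Q w → R (v ++ w))
    {x y : TV θ} (hx : x ∈ wordSpan P) (hy : y ∈ wordSpan Q) : x * y ∈ wordSpan R := by
  refine LinearMap.BilinMap.apply_apply_mem_of_mem_span _ _ _ (LinearMap.mul ℂ (TV θ)) ?_ x y hx hy
  rintro _ ⟨v, hv, rfl⟩ _ ⟨w, hw, rfl⟩
  rw [LinearMap.mul_apply', ← wordElem_append]
  exact wordElem_mem_wordSpan (h v w hv hw)

section AlgHom

variable {A : Type*} [Ring A] [Algebra ℂ A] (φ : TV θ →ₐ[ℂ] A) {M : Submodule ℂ A}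

lemma map_mul_mem_of_gen (hM : ∀ i, ∀ x ∈ M, φ (gen θ i) * x ∈ M) (a : TV θ) {x : A}
    (hx : x ∈ M) : φ a * x ∈ M := by
  induction a using FreeAlgebra.induction generalizing x with
  | grade0 r => rw [AlgHom.commutes, ← Algebra.smul_def]; exact M.smul_mem r hx
  | grade1 i => exact hM i x hx
  | mul a b ha hb => rw [map_mul, mul_assoc]; exact ha (hb hx)
  | add a b ha hb => rw [map_add, add_mul]; exact M.add_mem (ha hx) (hb hx)

lemma mul_map_mem_of_gen (hM : ∀ i, ∀ x ∈ M, x * φ (gen θ i) ∈ M) (a : TV θ) {x : A}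
    (hx : x ∈ M) : x * φ a ∈ M := by
  induction a using FreeAlgebra.induction generalizing x with
  | grade0 r =>
    rw [AlgHom.commutes, ← Algebra.commutes, ← Algebra.smul_def]; exact M.smul_mem r hx
  | grade1 i => exact hM i x hx
  | mul a b ha hb => rw [map_mul, ← mul_assoc]; exact hb (ha hx)
  | add a b ha hb => rw [map_add, mul_add]; exact M.add_mem (ha hx) (hb hx)

end AlgHom

/-- The automorphism `x_l ↦ c_l x_l` of `T(V)`. -/
def rescale (c : Fin θ → ℂ) : TV θ →ₐ[ℂ] TV θ := FreeAlgebra.lift ℂ fun l => c l • gen θ l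

lemma rescale_wordElem (c : Fin θ → ℂ) (w : List (Fin θ)) :
    rescale c (wordElem θ w) = (w.map c).prod • wordElem θ w := by
  induction w with
  | nil => rw [wordElem_nil, map_one, List.map_nil, List.prod_nil, one_smul]
  | cons i w ih =>
    have rescale_gen : rescale c (gen θ i) = c i • gen θ i := FreeAlgebra.lift_ι_apply _ _
    rw [wordElem_cons, map_mul, ih, rescale_gen, smul_mul_smul_comm, List.map_cons,
      List.prod_cons]

/-- The functional on `T(V)` reading off the coefficient of a word. -/
def wordCoeff (v : List (Fin θ)) : TV θ →ₗ[ℂ] ℂ := (wordBasis θ).coord v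

lemma wordCoeff_wordElem (v w : List (Fin θ)) :
    wordCoeff v (wordElem θ w) = if w = v then 1 else 0 := by
  rw [wordCoeff, ← wordBasis_apply, Module.Basis.coord_apply, Module.Basis.repr_self,
    Finsupp.single_apply]

lemma wordCoeff_mul_gen (k : Fin θ) (x : TV θ) :
    wordCoeff [k] (x * gen θ k) = wordCoeff [] x := by
  refine LinearMap.congr_fun (f := wordCoeff [k] ∘ₗ LinearMap.mulRight ℂ (gen θ k))
    (TV.hom_ext fun v => ?_) x
  have append_eq : v ++ [k] = [k] ↔ v = [] := by simp
  simp [← wordElem_singleton, ← wordElem_append, wordCoeff_wordElem, append_eq]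

lemma wordCoeff_gen_mul (k : Fin θ) (x : TV θ) :
    wordCoeff [k] (gen θ k * x) = wordCoeff [] x := by
  refine LinearMap.congr_fun (f := wordCoeff [k] ∘ₗ LinearMap.mulLeft ℂ (gen θ k))
    (TV.hom_ext fun v => ?_) x
  simp [← wordElem_cons, wordCoeff_wordElem]

lemma wordCoeff_nil_one : wordCoeff [] (1 : TV θ) = 1 := by
  rw [← wordElem_nil, wordCoeff_wordElem, if_pos rfl]

lemma wordCoeff_nil_mul_gen (x : TV θ) (i : Fin θ) : wordCoeff [] (x * gen θ i) = 0 := by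
  refine LinearMap.congr_fun (f := wordCoeff [] ∘ₗ LinearMap.mulRight ℂ (gen θ i)) (g := 0)
    (TV.hom_ext fun v => ?_) x
  simp [← wordElem_singleton, ← wordElem_append, wordCoeff_wordElem]

lemma wordCoeff_nil_gen_mul (i : Fin θ) (x : TV θ) : wordCoeff [] (gen θ i * x) = 0 := by
  refine LinearMap.congr_fun (f := wordCoeff [] ∘ₗ LinearMap.mulLeft ℂ (gen θ i)) (g := 0)
    (TV.hom_ext fun v => ?_) x
  simp [← wordElem_cons, wordCoeff_wordElem]

lemma wordCoeff_nil_gen (i : Fin θ) : wordCoeff [] (gen θ i) = 0 := by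
  rw [← mul_one (gen θ i), wordCoeff_nil_gen_mul]

end Words

section Bicharacter

variable {θ : ℕ} (q : Fin θ → Fin θ → ℂˣ)

lemma qf_zero_left (a : Fin θ → ℕ) : qf q 0 a = 1 := by simp [qf]

lemma qf_zero_right (a : Fin θ → ℕ) : qf q a 0 = 1 := by simp [qf]

lemma qf_add_left (a b c : Fin θ → ℕ) : qf q (a + b) c = qf q a c * qf q b c := by
  simp [qf, add_mul, pow_add, Finset.prod_mul_distrib]

lemma qf_add_right (a b c : Fin θ → ℕ) : qf q a (b + c) = qf q a b * qf q a c := by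
  simp [qf, mul_add, pow_add, Finset.prod_mul_distrib]

lemma qf_smul_left (n : ℕ) (a b : Fin θ → ℕ) : qf q (n • a) b = qf q a b ^ n := by
  induction n with
  | zero => simp [qf_zero_left]
  | succ n ih => rw [succ_nsmul, qf_add_left, ih, pow_succ]

lemma qf_smul_right (n : ℕ) (a b : Fin θ → ℕ) : qf q a (n • b) = qf q a b ^ n := by
  induction n with
  | zero => simp [qf_zero_right]
  | succ n ih => rw [succ_nsmul, qf_add_right, ih, pow_succ]

lemma qf_ne_zero (a b : Fin θ → ℕ) : qf q a b ≠ 0 := by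
  simp [qf, Finset.prod_ne_zero_iff]

lemma qf_δ (i j : Fin θ) : qf q (δ θ i) (δ θ j) = q i j := by
  rw [qf, Finset.prod_eq_single i, Finset.prod_eq_single j]
  · simp [δ]
  · intro b _ hb; simp [δ, hb]
  · simp
  · intro b _ hb; simp [δ, hb]
  · simp

lemma qf_degW_δ (w : List (Fin θ)) (k : Fin θ) :
    qf q (degW θ w) (δ θ k) = (w.map fun l => (q l k : ℂ)).prod := by
  induction w with
  | nil => rw [degW_nil, qf_zero_left, List.map_nil, List.prod_nil]
  | cons i w ih => rw [degW_cons, qf_add_left, qf_δ, ih, List.map_cons, List.prod_cons]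

lemma qf_δ_degW (k : Fin θ) (w : List (Fin θ)) :
    qf q (δ θ k) (degW θ w) = (w.map fun l => (q k l : ℂ)).prod := by
  induction w with
  | nil => rw [degW_nil, qf_zero_right, List.map_nil, List.prod_nil]
  | cons i w ih => rw [degW_cons, qf_add_right, qf_δ, ih, List.map_cons, List.prod_cons]

end Bicharacter

/-! ### The braided tensor square -/

section BraidedSquare

variable {θ : ℕ} (q : Fin θ → Fin θ → ℂˣ)

/-- The multiplication `(a ⊗ b)(c ⊗ d) = q(deg b, deg c) ac ⊗ bd` of the braided tensor product
`T(V) ⊗ T(V)`. -/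
def braidedMul : TV θ ⊗[ℂ] TV θ →ₗ[ℂ] TV θ ⊗[ℂ] TV θ →ₗ[ℂ] TV θ ⊗[ℂ] TV θ :=
  ((wordBasis θ).tensorProduct (wordBasis θ)).constr ℂ fun v =>
    ((wordBasis θ).tensorProduct (wordBasis θ)).constr ℂ fun w =>
      qf q (degW θ v.2) (degW θ w.1) • (wordElem θ (v.1 ++ w.1) ⊗ₜ[ℂ] wordElem θ (v.2 ++ w.2))

lemma braidedMul_wordElem (u v w x : List (Fin θ)) :
    braidedMul q (wordElem θ u ⊗ₜ wordElem θ v) (wordElem θ w ⊗ₜ wordElem θ x) =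
      qf q (degW θ v) (degW θ w) • (wordElem θ (u ++ w) ⊗ₜ[ℂ] wordElem θ (v ++ x)) := by
  have tmul_eq_basis (a b : List (Fin θ)) : wordElem θ a ⊗ₜ[ℂ] wordElem θ b =
      (wordBasis θ).tensorProduct (wordBasis θ) (a, b) := by
    rw [Module.Basis.tensorProduct_apply, wordBasis_apply, wordBasis_apply]
  rw [tmul_eq_basis u v, tmul_eq_basis w x, braidedMul, Module.Basis.constr_basis,
    Module.Basis.constr_basis]

lemma braidedMul_tmul_tmul (a d : TV θ) (v w : List (Fin θ)) :
    braidedMul q (a ⊗ₜ wordElem θ v) (wordElem θ w ⊗ₜ d) =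
      qf q (degW θ v) (degW θ w) • ((a * wordElem θ w) ⊗ₜ[ℂ] (wordElem θ v * d)) := by
  have bilinear_eq : (braidedMul q).compl₁₂ ((TensorProduct.mk ℂ _ _).flip (wordElem θ v))
        (TensorProduct.mk ℂ _ _ (wordElem θ w)) =
      qf q (degW θ v) (degW θ w) • (TensorProduct.mk ℂ _ _).compl₁₂
        (LinearMap.mulRight ℂ (wordElem θ w)) (LinearMap.mulLeft ℂ (wordElem θ v)) :=
    TV.hom_ext fun u => TV.hom_ext fun x => by
      simp [braidedMul_wordElem, wordElem_append]
  exact LinearMap.congr_fun₂ bilinear_eq a d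

lemma braidedMul_assoc (x y z : TV θ ⊗[ℂ] TV θ) :
    braidedMul q (braidedMul q x y) z = braidedMul q x (braidedMul q y z) := by
  have trilinear_eq : (braidedMul q).compr₂ (braidedMul q) =
      (LinearMap.llcomp ℂ _ _ _).compl₁₂ (braidedMul q) (braidedMul q) :=
    TV.tensor_hom_ext fun a b => TV.tensor_hom_ext fun c d => TV.tensor_hom_ext fun e f => by
      simp only [LinearMap.compr₂_apply, LinearMap.compl₁₂_apply, LinearMap.llcomp_apply,
        braidedMul_wordElem, map_smul, LinearMap.smul_apply, smul_smul, degW_append,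
        qf_add_left, qf_add_right, List.append_assoc]
      congr 1
      ring
  exact LinearMap.congr_fun (LinearMap.congr_fun₂ trilinear_eq x y) z

lemma braidedMul_one_left (x : TV θ ⊗[ℂ] TV θ) : braidedMul q (1 ⊗ₜ 1) x = x := by
  refine LinearMap.congr_fun (g := LinearMap.id) (TV.tensor_hom_ext fun v w => ?_) x
  rw [← wordElem_nil, braidedMul_wordElem, degW_nil, qf_zero_left, one_smul]
  rfl

lemma braidedMul_one_right (x : TV θ ⊗[ℂ] TV θ) : braidedMul q x (1 ⊗ₜ 1) = x := by
  refine LinearMap.congr_fun (f := (braidedMul q).flip (1 ⊗ₜ 1)) (g := LinearMap.id)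
    (TV.tensor_hom_ext fun v w => ?_) x
  rw [← wordElem_nil, LinearMap.flip_apply, braidedMul_wordElem, degW_nil, qf_zero_right, one_smul,
    List.append_nil, List.append_nil, LinearMap.id_apply]

/-- The braided tensor product algebra `T(V) ⊗ T(V)`: a type synonym, so that its multiplication
does not clash with the unbraided one. -/
def BraidedSquare (_q : Fin θ → Fin θ → ℂˣ) : Type := TV θ ⊗[ℂ] TV θ

namespace BraidedSquare

instance : AddCommGroup (BraidedSquare q) := inferInstanceAs (AddCommGroup (TV θ ⊗[ℂ] TV θ))

instance : Module ℂ (BraidedSquare q) := inferInstanceAs (Module ℂ (TV θ ⊗[ℂ] TV θ))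

instance : Mul (BraidedSquare q) := ⟨fun x y => braidedMul q x y⟩

instance : One (BraidedSquare q) := ⟨((1 : TV θ) ⊗ₜ[ℂ] (1 : TV θ) : TV θ ⊗[ℂ] TV θ)⟩

instance : Ring (BraidedSquare q) :=
  { (inferInstance : AddCommGroup (BraidedSquare q)), (inferInstance : Mul (BraidedSquare q)),
    (inferInstance : One (BraidedSquare q)) with
    left_distrib := fun x y z => map_add (braidedMul q x) y z
    right_distrib := fun x y z => LinearMap.map_add₂ (braidedMul q) x y z
    zero_mul := fun x => LinearMap.map_zero₂ (braidedMul q) x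
    mul_zero := fun x => map_zero (braidedMul q x)
    mul_assoc := braidedMul_assoc q
    one_mul := braidedMul_one_left q
    mul_one := braidedMul_one_right q }

instance : Algebra ℂ (BraidedSquare q) :=
  Algebra.ofModule (fun r x y => LinearMap.map_smul₂ (braidedMul q) r x y)
    (fun r x y => map_smul (braidedMul q x) r y)

/-- The identity of `T(V) ⊗ T(V)`, seen as a map to the braided tensor square. -/
def of : TV θ ⊗[ℂ] TV θ ≃ₗ[ℂ] BraidedSquare q := LinearEquiv.refl ℂ _

lemma one_def : (1 : BraidedSquare q) = of q (1 ⊗ₜ 1) := rfl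

lemma of_mul_of (x y : TV θ ⊗[ℂ] TV θ) : of q x * of q y = of q (braidedMul q x y) := rfl

/-- The embedding `x ↦ x ⊗ 1` of `T(V)` in the braided tensor square. -/
def inl : TV θ →ₐ[ℂ] BraidedSquare q :=
  AlgHom.ofLinearMap ((of q).toLinearMap ∘ₗ (TensorProduct.mk ℂ _ _).flip 1) rfl fun x y => by
    refine LinearMap.congr_fun (g := (LinearMap.mulLeft ℂ _) ∘ₗ _)
      (f := ((of q).toLinearMap ∘ₗ (TensorProduct.mk ℂ _ _).flip 1) ∘ₗ LinearMap.mulLeft ℂ x)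
      (TV.hom_ext fun w => ?_) y
    have h := braidedMul_tmul_tmul q x 1 [] w
    rw [degW_nil, qf_zero_left, one_smul, wordElem_nil, one_mul] at h
    exact congrArg (of q) h.symm

/-- The embedding `x ↦ 1 ⊗ x` of `T(V)` in the braided tensor square. -/
def inr : TV θ →ₐ[ℂ] BraidedSquare q :=
  AlgHom.ofLinearMap ((of q).toLinearMap ∘ₗ TensorProduct.mk ℂ _ _ 1) rfl fun x y => by
    refine LinearMap.congr_fun (g := (LinearMap.mulRight ℂ _) ∘ₗ _)
      (f := ((of q).toLinearMap ∘ₗ TensorProduct.mk ℂ _ _ 1) ∘ₗ LinearMap.mulRight ℂ y)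
      (TV.hom_ext fun v => ?_) x
    have h := braidedMul_tmul_tmul q 1 y v []
    rw [degW_nil, qf_zero_right, one_smul, wordElem_nil, mul_one] at h
    exact congrArg (of q) h.symm

lemma inl_apply (x : TV θ) : inl q x = of q (x ⊗ₜ 1) := rfl

lemma inr_apply (x : TV θ) : inr q x = of q (1 ⊗ₜ x) := rfl

lemma inl_mul_inr (x y : TV θ) : inl q x * inr q y = of q (x ⊗ₜ y) := by
  have h := braidedMul_tmul_tmul q x y [] []
  rw [degW_nil, qf_zero_left, one_smul, wordElem_nil, one_mul, mul_one] at h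
  rw [inl_apply, inr_apply, of_mul_of, h]

lemma inr_wordElem_mul_inl_wordElem (v w : List (Fin θ)) :
    inr q (wordElem θ v) * inl q (wordElem θ w) =
      qf q (degW θ v) (degW θ w) • (inl q (wordElem θ w) * inr q (wordElem θ v)) := by
  rw [inl_mul_inr, inl_apply, inr_apply, of_mul_of, braidedMul_tmul_tmul, map_smul, one_mul,
    mul_one]

lemma inr_mul_inl {a b : Fin θ → ℕ} {x y : TV θ} (hx : x ∈ homogD θ a) (hy : y ∈ homogD θ b) :
    inr q x * inl q y = qf q a b • (inl q y * inr q x) := by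
  have commutator_mem := LinearMap.BilinMap.apply_apply_mem_of_mem_span ⊥ _ _
    ((LinearMap.mul ℂ (BraidedSquare q)).compl₁₂ (inr q).toLinearMap (inl q).toLinearMap -
      qf q a b • (LinearMap.mul ℂ (BraidedSquare q)).flip.compl₁₂ (inr q).toLinearMap
        (inl q).toLinearMap) ?_ x y hx hy
  · exact sub_eq_zero.1 commutator_mem
  · rintro _ ⟨v, rfl, rfl⟩ _ ⟨w, rfl, rfl⟩
    exact sub_eq_zero.2 (inr_wordElem_mul_inl_wordElem q v w)

lemma inl_mul_inr_mul_inl_mul_inr {β γ : Fin θ → ℕ} {b c : TV θ} (hb : b ∈ homogD θ β)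
    (hc : c ∈ homogD θ γ) (a d : TV θ) :
    inl q a * inr q b * (inl q c * inr q d) =
      qf q β γ • (inl q (a * c) * inr q (b * d)) := by
  rw [mul_assoc, ← mul_assoc (inr q b), inr_mul_inl q hb hc, map_mul, map_mul,
    smul_mul_assoc, mul_smul_comm]
  simp only [mul_assoc]

variable {q}

lemma hom_ext {M : Type*} [AddCommMonoid M] [Module ℂ M] {f g : BraidedSquare q →ₗ[ℂ] M}
    (h : ∀ v w, f (inl q (wordElem θ v) * inr q (wordElem θ w)) =
      g (inl q (wordElem θ v) * inr q (wordElem θ w))) : f = g := by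
  have comp_of : f ∘ₗ (of q).toLinearMap = g ∘ₗ (of q).toLinearMap :=
    TV.tensor_hom_ext fun v w => by
      have hvw := h v w
      rwa [inl_mul_inr] at hvw
  exact comp_of

@[elab_as_elim]
lemma induction {P : BraidedSquare q → Prop} (x : BraidedSquare q) (zero : P 0)
    (mul : ∀ a b, P (inl q a * inr q b)) (add : ∀ x y, P x → P y → P (x + y)) : P x :=
  TensorProduct.induction_on (motive := fun y => P (of q y)) ((of q).symm x) zero
    (fun a b => by rw [← inl_mul_inr]; exact mul a b) add

end BraidedSquare

/-- The braided coproduct, as the algebra morphism to the braided tensor square that makes the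
generators primitive. -/
def braidedΔ : TV θ →ₐ[ℂ] BraidedSquare q :=
  FreeAlgebra.lift ℂ fun i => BraidedSquare.inl q (gen θ i) + BraidedSquare.inr q (gen θ i)

lemma braidedΔ_gen (i : Fin θ) :
    braidedΔ q (gen θ i) = BraidedSquare.inl q (gen θ i) + BraidedSquare.inr q (gen θ i) :=
  FreeAlgebra.lift_ι_apply _ _

/-- The braided bialgebra structure of `T(V)`. -/
def braidedStr : BraidedStr θ q where
  Δ := (BraidedSquare.of q).symm.toLinearMap ∘ₗ (braidedΔ q).toLinearMap
  mulB := braidedMul q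
  mulB_spec := braidedMul_tmul_tmul q
  Δ_one := congrArg (BraidedSquare.of q).symm (map_one (braidedΔ q))
  Δ_gen i := congrArg (BraidedSquare.of q).symm (braidedΔ_gen q i)
  Δ_mul u v := congrArg (BraidedSquare.of q).symm (map_mul (braidedΔ q) u v)

variable {q}

lemma BraidedStr.mulB_eq_braidedMul (S : BraidedStr θ q) : S.mulB = braidedMul q :=
  TV.tensor_hom_ext fun a b => TV.tensor_hom_ext fun c d => by
    rw [S.mulB_spec, braidedMul_tmul_tmul]

lemma BraidedStr.of_Δ (S : BraidedStr θ q) (x : TV θ) :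
    BraidedSquare.of q (S.Δ x) = braidedΔ q x := by
  refine LinearMap.congr_fun (f := (BraidedSquare.of q).toLinearMap ∘ₗ S.Δ)
    (g := (braidedΔ q).toLinearMap) (TV.hom_ext fun w => ?_) x
  change BraidedSquare.of q (S.Δ (wordElem θ w)) = braidedΔ q (wordElem θ w)
  induction w with
  | nil => rw [wordElem_nil, S.Δ_one, map_one, BraidedSquare.one_def]
  | cons i w ih =>
    rw [wordElem_cons, S.Δ_mul, map_mul, S.mulB_eq_braidedMul, ← BraidedSquare.of_mul_of, ih,
      S.Δ_gen, braidedΔ_gen, map_add, BraidedSquare.inl_apply, BraidedSquare.inr_apply]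

end BraidedSquare

/-! ### Contractions and coideals -/

section Contractions

variable {θ : ℕ} {q : Fin θ → Fin θ → ℂˣ}

namespace BraidedSquare

/-- The contraction `a ⊗ b ↦ f(a) b` of the braided tensor square with a functional. -/
def contractLeft (q : Fin θ → Fin θ → ℂˣ) (f : TV θ →ₗ[ℂ] ℂ) : BraidedSquare q →ₗ[ℂ] TV θ :=
  (TensorProduct.lid ℂ (TV θ)).toLinearMap ∘ₗ TensorProduct.map f LinearMap.id ∘ₗ
    (of q).symm.toLinearMap

/-- The contraction `a ⊗ b ↦ f(b) a` of the braided tensor square with a functional. -/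
def contractRight (q : Fin θ → Fin θ → ℂˣ) (f : TV θ →ₗ[ℂ] ℂ) : BraidedSquare q →ₗ[ℂ] TV θ :=
  (TensorProduct.rid ℂ (TV θ)).toLinearMap ∘ₗ TensorProduct.map LinearMap.id f ∘ₗ
    (of q).symm.toLinearMap

lemma contractLeft_inl_mul_inr (f : TV θ →ₗ[ℂ] ℂ) (x y : TV θ) :
    contractLeft q f (inl q x * inr q y) = f x • y := by
  rw [inl_mul_inr]; simp [contractLeft]

lemma contractRight_inl_mul_inr (f : TV θ →ₗ[ℂ] ℂ) (x y : TV θ) :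
    contractRight q f (inl q x * inr q y) = f y • x := by
  rw [inl_mul_inr]; simp [contractRight]

lemma contractLeft_mul_inr (f : TV θ →ₗ[ℂ] ℂ) (x : BraidedSquare q) (y : TV θ) :
    contractLeft q f (x * inr q y) = contractLeft q f x * y := by
  refine LinearMap.congr_fun (f := contractLeft q f ∘ₗ LinearMap.mulRight ℂ (inr q y))
    (g := LinearMap.mulRight ℂ y ∘ₗ contractLeft q f) (hom_ext fun v w => ?_) x
  simp only [LinearMap.comp_apply, LinearMap.mulRight_apply, mul_assoc, ← map_mul,
    contractLeft_inl_mul_inr, smul_mul_assoc]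

lemma contractRight_inl_mul (f : TV θ →ₗ[ℂ] ℂ) (y : TV θ) (x : BraidedSquare q) :
    contractRight q f (inl q y * x) = y * contractRight q f x := by
  refine LinearMap.congr_fun (f := contractRight q f ∘ₗ LinearMap.mulLeft ℂ (inl q y))
    (g := LinearMap.mulLeft ℂ y ∘ₗ contractRight q f) (hom_ext fun v w => ?_) x
  simp only [LinearMap.comp_apply, LinearMap.mulLeft_apply, ← mul_assoc, ← map_mul,
    contractRight_inl_mul_inr, mul_smul_comm]

lemma inr_mul_inl_gen (k : Fin θ) (x : TV θ) :
    inr q x * inl q (gen θ k) = inl q (gen θ k) * inr q (rescale (fun l => q l k) x) := by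
  refine LinearMap.congr_fun
    (f := LinearMap.mulRight ℂ (inl q (gen θ k)) ∘ₗ (inr q).toLinearMap)
    (g := LinearMap.mulLeft ℂ (inl q (gen θ k)) ∘ₗ (inr q).toLinearMap ∘ₗ
      (rescale fun l => (q l k : ℂ)).toLinearMap) (TV.hom_ext fun w => ?_) x
  have h := inr_wordElem_mul_inl_wordElem q w [k]
  rw [degW_singleton, qf_degW_δ, wordElem_singleton] at h
  simpa [rescale_wordElem] using h

lemma inr_gen_mul_inl (k : Fin θ) (x : TV θ) :
    inr q (gen θ k) * inl q x = inl q (rescale (fun l => q k l) x) * inr q (gen θ k) := by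
  refine LinearMap.congr_fun
    (f := LinearMap.mulLeft ℂ (inr q (gen θ k)) ∘ₗ (inl q).toLinearMap)
    (g := LinearMap.mulRight ℂ (inr q (gen θ k)) ∘ₗ (inl q).toLinearMap ∘ₗ
      (rescale fun l => (q k l : ℂ)).toLinearMap) (TV.hom_ext fun w => ?_) x
  have h := inr_wordElem_mul_inl_wordElem q [k] w
  rw [degW_singleton, qf_δ_degW, wordElem_singleton] at h
  simpa [rescale_wordElem] using h

lemma contractLeft_mul_inl_gen (k : Fin θ) (x : BraidedSquare q) :
    contractLeft q (wordCoeff [k]) (x * inl q (gen θ k)) =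
      rescale (fun l => q l k) (contractLeft q (wordCoeff []) x) := by
  refine LinearMap.congr_fun
    (f := contractLeft q (wordCoeff [k]) ∘ₗ LinearMap.mulRight ℂ (inl q (gen θ k)))
    (g := (rescale fun l => (q l k : ℂ)).toLinearMap ∘ₗ contractLeft q (wordCoeff []))
    (hom_ext fun v w => ?_) x
  simp only [LinearMap.comp_apply, LinearMap.mulRight_apply, AlgHom.toLinearMap_apply]
  rw [mul_assoc, inr_mul_inl_gen, ← mul_assoc, ← map_mul, contractLeft_inl_mul_inr,
    wordCoeff_mul_gen, contractLeft_inl_mul_inr, map_smul]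

lemma contractRight_inr_gen_mul (k : Fin θ) (x : BraidedSquare q) :
    contractRight q (wordCoeff [k]) (inr q (gen θ k) * x) =
      rescale (fun l => q k l) (contractRight q (wordCoeff []) x) := by
  refine LinearMap.congr_fun
    (f := contractRight q (wordCoeff [k]) ∘ₗ LinearMap.mulLeft ℂ (inr q (gen θ k)))
    (g := (rescale fun l => (q k l : ℂ)).toLinearMap ∘ₗ contractRight q (wordCoeff []))
    (hom_ext fun v w => ?_) x
  simp only [LinearMap.comp_apply, LinearMap.mulLeft_apply, AlgHom.toLinearMap_apply]
  rw [← mul_assoc, inr_gen_mul_inl, mul_assoc, ← map_mul, contractRight_inl_mul_inr,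
    wordCoeff_gen_mul, contractRight_inl_mul_inr, map_smul]

lemma contractLeft_nil_mul_inl_gen (k : Fin θ) (x : BraidedSquare q) :
    contractLeft q (wordCoeff []) (x * inl q (gen θ k)) = 0 := by
  refine LinearMap.congr_fun (g := 0)
    (f := contractLeft q (wordCoeff []) ∘ₗ LinearMap.mulRight ℂ (inl q (gen θ k)))
    (hom_ext fun v w => ?_) x
  rw [LinearMap.comp_apply, LinearMap.mulRight_apply, mul_assoc, inr_mul_inl_gen, ← mul_assoc,
    ← map_mul, contractLeft_inl_mul_inr, wordCoeff_nil_mul_gen, zero_smul, LinearMap.zero_apply]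

lemma contractRight_nil_inr_gen_mul (k : Fin θ) (x : BraidedSquare q) :
    contractRight q (wordCoeff []) (inr q (gen θ k) * x) = 0 := by
  refine LinearMap.congr_fun (g := 0)
    (f := contractRight q (wordCoeff []) ∘ₗ LinearMap.mulLeft ℂ (inr q (gen θ k)))
    (hom_ext fun v w => ?_) x
  rw [LinearMap.comp_apply, LinearMap.mulLeft_apply, ← mul_assoc, inr_gen_mul_inl, mul_assoc,
    ← map_mul, contractRight_inl_mul_inr, wordCoeff_nil_gen_mul, zero_smul, LinearMap.zero_apply]

lemma contractLeft_inl (f : TV θ →ₗ[ℂ] ℂ) (x : TV θ) : contractLeft q f (inl q x) = f x • 1 := by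
  rw [← contractLeft_inl_mul_inr (q := q), map_one, mul_one]

lemma contractRight_inl (f : TV θ →ₗ[ℂ] ℂ) (x : TV θ) :
    contractRight q f (inl q x) = f 1 • x := by
  rw [← contractRight_inl_mul_inr (q := q), map_one, mul_one]

lemma contractLeft_nil_braidedΔ (x : TV θ) :
    contractLeft q (wordCoeff []) (braidedΔ q x) = x := by
  refine LinearMap.congr_fun (g := LinearMap.id)
    (f := contractLeft q (wordCoeff []) ∘ₗ (braidedΔ q).toLinearMap) (TV.hom_ext fun w => ?_) x
  change contractLeft q (wordCoeff []) (braidedΔ q (wordElem θ w)) = wordElem θ w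
  induction w using List.reverseRecOn with
  | nil => rw [wordElem_nil, map_one, ← map_one (inl q), contractLeft_inl, wordCoeff_nil_one,
      one_smul]
  | append_singleton w i ih =>
    rw [wordElem_append, wordElem_singleton, map_mul, braidedΔ_gen, mul_add, map_add,
      contractLeft_nil_mul_inl_gen, contractLeft_mul_inr, ih, zero_add]

lemma contractRight_nil_braidedΔ (x : TV θ) :
    contractRight q (wordCoeff []) (braidedΔ q x) = x := by
  refine LinearMap.congr_fun (g := LinearMap.id)
    (f := contractRight q (wordCoeff []) ∘ₗ (braidedΔ q).toLinearMap) (TV.hom_ext fun w => ?_) x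
  change contractRight q (wordCoeff []) (braidedΔ q (wordElem θ w)) = wordElem θ w
  induction w with
  | nil => rw [wordElem_nil, map_one, ← map_one (inl q), contractRight_inl, wordCoeff_nil_one,
      one_smul]
  | cons i w ih =>
    rw [wordElem_cons, map_mul, braidedΔ_gen, add_mul, map_add,
      contractRight_nil_inr_gen_mul, contractRight_inl_mul, ih, add_zero]

/-- The subspace `I ⊗ T(V) + T(V) ⊗ I` of the braided tensor square. -/
def mixed (q : Fin θ → Fin θ → ℂˣ) (I : Submodule ℂ (TV θ)) : Submodule ℂ (BraidedSquare q) :=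
  (mixedSub I).map (of q).toLinearMap

variable {I : Submodule ℂ (TV θ)}

lemma mixed_le {M : Submodule ℂ (BraidedSquare q)} :
    mixed q I ≤ M ↔ (∀ a ∈ I, ∀ b, inl q a * inr q b ∈ M) ∧
      ∀ a, ∀ b ∈ I, inl q a * inr q b ∈ M := by
  simp only [mixed, mixedSub, mixedPair, Submodule.map_le_iff_le_comap, Submodule.span_le,
    Set.union_subset_iff, inl_mul_inr]
  refine ⟨fun h => ⟨fun a ha b => h.1 ⟨a, b, ha, rfl⟩, fun a b hb => h.2 ⟨a, b, hb, rfl⟩⟩,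
    fun h => ⟨?_, ?_⟩⟩
  · rintro _ ⟨a, b, ha, rfl⟩; exact h.1 a ha b
  · rintro _ ⟨a, b, hb, rfl⟩; exact h.2 a b hb

lemma inl_mul_inr_mem_mixed_left {x : TV θ} (hx : x ∈ I) (y : TV θ) :
    inl q x * inr q y ∈ mixed q I := (mixed_le.1 le_rfl).1 x hx y

lemma inl_mul_inr_mem_mixed_right (x : TV θ) {y : TV θ} (hy : y ∈ I) :
    inl q x * inr q y ∈ mixed q I := (mixed_le.1 le_rfl).2 x y hy

lemma contractLeft_mem_of_mem_mixed {f : TV θ →ₗ[ℂ] ℂ} (hf : f ∈ I.dualAnnihilator)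
    {x : BraidedSquare q} (hx : x ∈ mixed q I) : contractLeft q f x ∈ I := by
  have mixed_le_comap : mixed q I ≤ I.comap (contractLeft q f) := mixed_le.2
    ⟨fun a ha b => by
      rw [Submodule.mem_comap, contractLeft_inl_mul_inr,
        (Submodule.mem_dualAnnihilator f).1 hf a ha, zero_smul]
      exact I.zero_mem,
    fun a b hb => by
      rw [Submodule.mem_comap, contractLeft_inl_mul_inr]
      exact I.smul_mem _ hb⟩
  exact mixed_le_comap hx

lemma contractRight_mem_of_mem_mixed {f : TV θ →ₗ[ℂ] ℂ} (hf : f ∈ I.dualAnnihilator)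
    {x : BraidedSquare q} (hx : x ∈ mixed q I) : contractRight q f x ∈ I := by
  have mixed_le_comap : mixed q I ≤ I.comap (contractRight q f) := mixed_le.2
    ⟨fun a ha b => by
      rw [Submodule.mem_comap, contractRight_inl_mul_inr]
      exact I.smul_mem _ ha,
    fun a b hb => by
      rw [Submodule.mem_comap, contractRight_inl_mul_inr,
        (Submodule.mem_dualAnnihilator f).1 hf b hb, zero_smul]
      exact I.zero_mem⟩
  exact mixed_le_comap hx

end BraidedSquare

namespace IsPreNicholsIdeal

open BraidedSquare

variable {S : BraidedStr θ q} {I : Submodule ℂ (TV θ)}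

lemma wordCoeff_mem_dualAnnihilator (hI : IsPreNicholsIdeal S I) {v : List (Fin θ)}
    (hv : v.length ≤ 1) : wordCoeff v ∈ I.dualAnnihilator := by
  have span_le : I ≤ LinearMap.ker (wordCoeff v) := by
    rw [hI.homog_ge2, Submodule.span_le]
    rintro x ⟨-, n, hn, hx⟩
    refine wordSpan_le.2 (fun w hw => ?_) hx
    rw [LinearMap.mem_ker, wordCoeff_wordElem, if_neg]
    rintro rfl
    omega
  exact (Submodule.mem_dualAnnihilator _).2 span_le

lemma braidedΔ_mem_mixed (hI : IsPreNicholsIdeal S I) {x : TV θ} (hx : x ∈ I) :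
    braidedΔ q x ∈ mixed q I := by
  rw [← S.of_Δ]; exact Submodule.mem_map_of_mem (hI.coideal x hx)

/- Contract `Δ(x x_k) = Δ(x)(x_k ⊗ 1 + 1 ⊗ x_k)` with the coefficient of `x_k`, which vanishes on
`I`: the first summand becomes the rescaled `x`, and the second one lies in `I`. -/
lemma rescale_right_mem (hI : IsPreNicholsIdeal S I) (k : Fin θ) {x : TV θ} (hx : x ∈ I) :
    rescale (fun l => q l k) x ∈ I := by
  have hk : wordCoeff [k] ∈ I.dualAnnihilator := hI.wordCoeff_mem_dualAnnihilator le_rfl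
  have contract_mem := contractLeft_mem_of_mem_mixed hk
    (hI.braidedΔ_mem_mixed (hI.mul_right (gen θ k) x hx))
  rw [map_mul, braidedΔ_gen, mul_add, map_add, contractLeft_mul_inl_gen, contractLeft_mul_inr,
    contractLeft_nil_braidedΔ] at contract_mem
  exact (I.add_mem_iff_left (hI.mul_right _ _
    (contractLeft_mem_of_mem_mixed hk (hI.braidedΔ_mem_mixed hx)))).1 contract_mem

lemma rescale_left_mem (hI : IsPreNicholsIdeal S I) (k : Fin θ) {x : TV θ} (hx : x ∈ I) :
    rescale (fun l => q k l) x ∈ I := by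
  have hk : wordCoeff [k] ∈ I.dualAnnihilator := hI.wordCoeff_mem_dualAnnihilator le_rfl
  have contract_mem := contractRight_mem_of_mem_mixed hk
    (hI.braidedΔ_mem_mixed (hI.mul_left (gen θ k) x hx))
  rw [map_mul, braidedΔ_gen, add_mul, map_add, contractRight_inr_gen_mul, contractRight_inl_mul,
    contractRight_nil_braidedΔ] at contract_mem
  exact (I.add_mem_iff_right (hI.mul_left _ _
    (contractRight_mem_of_mem_mixed hk (hI.braidedΔ_mem_mixed hx)))).1 contract_mem

lemma mixed_mul_inl (hI : IsPreNicholsIdeal S I) (y : TV θ) {x : BraidedSquare q}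
    (hx : x ∈ mixed q I) : x * inl q y ∈ mixed q I := by
  refine mul_map_mem_of_gen (inl q) (fun k x hx => ?_) y hx
  have mixed_le_comap :
      mixed q I ≤ (mixed q I).comap (LinearMap.mulRight ℂ (inl q (gen θ k))) := by
    refine mixed_le.2 ⟨fun a ha b => ?_, fun a b hb => ?_⟩ <;>
      rw [Submodule.mem_comap, LinearMap.mulRight_apply, mul_assoc, inr_mul_inl_gen, ← mul_assoc,
        ← map_mul]
    · exact inl_mul_inr_mem_mixed_left (hI.mul_right _ _ ha) _
    · exact inl_mul_inr_mem_mixed_right _ (hI.rescale_right_mem k hb)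
  exact mixed_le_comap hx

lemma inr_mul_mixed (hI : IsPreNicholsIdeal S I) (y : TV θ) {x : BraidedSquare q}
    (hx : x ∈ mixed q I) : inr q y * x ∈ mixed q I := by
  refine map_mul_mem_of_gen (inr q) (fun k x hx => ?_) y hx
  have mixed_le_comap :
      mixed q I ≤ (mixed q I).comap (LinearMap.mulLeft ℂ (inr q (gen θ k))) := by
    refine mixed_le.2 ⟨fun a ha b => ?_, fun a b hb => ?_⟩ <;>
      rw [Submodule.mem_comap, LinearMap.mulLeft_apply, ← mul_assoc, inr_gen_mul_inl, mul_assoc,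
        ← map_mul]
    · exact inl_mul_inr_mem_mixed_left (hI.rescale_left_mem k ha) _
    · exact inl_mul_inr_mem_mixed_right _ (hI.mul_left _ _ hb)
  exact mixed_le_comap hx

lemma mixed_mul_inr (hI : IsPreNicholsIdeal S I) (y : TV θ) {x : BraidedSquare q}
    (hx : x ∈ mixed q I) : x * inr q y ∈ mixed q I := by
  have mixed_le_comap : mixed q I ≤ (mixed q I).comap (LinearMap.mulRight ℂ (inr q y)) := by
    refine mixed_le.2 ⟨fun a ha b => ?_, fun a b hb => ?_⟩ <;>
      rw [Submodule.mem_comap, LinearMap.mulRight_apply, mul_assoc, ← map_mul]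
    · exact inl_mul_inr_mem_mixed_left ha _
    · exact inl_mul_inr_mem_mixed_right _ (hI.mul_right _ _ hb)
  exact mixed_le_comap hx

lemma inl_mul_mixed (hI : IsPreNicholsIdeal S I) (y : TV θ) {x : BraidedSquare q}
    (hx : x ∈ mixed q I) : inl q y * x ∈ mixed q I := by
  have mixed_le_comap : mixed q I ≤ (mixed q I).comap (LinearMap.mulLeft ℂ (inl q y)) := by
    refine mixed_le.2 ⟨fun a ha b => ?_, fun a b hb => ?_⟩ <;>
      rw [Submodule.mem_comap, LinearMap.mulLeft_apply, ← mul_assoc, ← map_mul]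
    · exact inl_mul_inr_mem_mixed_left (hI.mul_left _ _ ha) _
    · exact inl_mul_inr_mem_mixed_right _ hb
  exact mixed_le_comap hx

lemma mixed_mul_right (hI : IsPreNicholsIdeal S I) (y : BraidedSquare q) {x : BraidedSquare q}
    (hx : x ∈ mixed q I) : x * y ∈ mixed q I := by
  induction y using BraidedSquare.induction with
  | zero => rw [mul_zero]; exact Submodule.zero_mem _
  | mul a b => rw [← mul_assoc]; exact hI.mixed_mul_inr b (hI.mixed_mul_inl a hx)
  | add y z hy hz => rw [mul_add]; exact Submodule.add_mem _ hy hz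

lemma mixed_mul_left (hI : IsPreNicholsIdeal S I) (y : BraidedSquare q) {x : BraidedSquare q}
    (hx : x ∈ mixed q I) : y * x ∈ mixed q I := by
  induction y using BraidedSquare.induction with
  | zero => rw [zero_mul]; exact Submodule.zero_mem _
  | mul a b => rw [mul_assoc]; exact hI.inl_mul_mixed a (hI.inr_mul_mixed b hx)
  | add y z hy hz => rw [add_mul]; exact Submodule.add_mem _ hy hz

end IsPreNicholsIdeal

end Contractions

/-! ### Functionals and gradings -/

section Functionals

variable {k M N N' : Type*} [Field k] [AddCommGroup M] [Module k M] [AddCommGroup N] [Module k N]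
  [AddCommGroup N'] [Module k N']

lemma exists_mem_dualAnnihilator_comp_eq (φ : M →ₗ[k] N) {I : Submodule k N} {f : M →ₗ[k] k}
    (hf : f ∈ (I.comap φ).dualAnnihilator) : ∃ g ∈ I.dualAnnihilator, g ∘ₗ φ = f := by
  rw [← I.ker_mkQ, ← LinearMap.ker_comp, ← LinearMap.range_dualMap_eq_dualAnnihilator_ker] at hf
  obtain ⟨g, rfl⟩ := hf
  refine ⟨g ∘ₗ I.mkQ, (Submodule.mem_dualAnnihilator _).2 fun x hx => ?_, rfl⟩
  rw [LinearMap.comp_apply, Submodule.mkQ_apply, (Submodule.Quotient.mk_eq_zero I).2 hx, map_zero]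

lemma finrank_map_le_finrank_map (P : Submodule k M) [FiniteDimensional k P] (f : M →ₗ[k] N)
    (g : M →ₗ[k] N') (h : ∀ x ∈ P, f x = 0 → g x = 0) :
    Module.finrank k (P.map g) ≤ Module.finrank k (P.map f) := by
  have rank_nullity_f := (f.domRestrict P).finrank_range_add_finrank_ker
  have rank_nullity_g := (g.domRestrict P).finrank_range_add_finrank_ker
  have ker_le := Submodule.finrank_mono (s := LinearMap.ker (f.domRestrict P))
    (t := LinearMap.ker (g.domRestrict P)) fun x hx => h x x.2 hx
  rw [LinearMap.range_domRestrict] at rank_nullity_f rank_nullity_g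
  omega

end Functionals

section Gradings

variable {θ : ℕ}

instance finiteDimensional_Wfil (n : ℕ) : FiniteDimensional ℂ (Wfil θ n) := by
  have Wfil_eq_span : Wfil θ n = Submodule.span ℂ (wordElem θ '' {w | w.length ≤ n}) := by
    simp only [Wfil, Set.image, Set.mem_ofPred_eq, eq_comm]
  rw [Wfil_eq_span]
  exact FiniteDimensional.span_of_finite ℂ ((List.finite_length_le (Fin θ) n).image _)

lemma Wfil_mono : Monotone (Wfil θ) := fun _ _ h => wordSpan_mono fun _ hw => hw.trans h

lemma homogTot_le_Wfil (n : ℕ) : homogTot θ n ≤ Wfil θ n := wordSpan_mono fun _ hw => hw.le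

instance finiteDimensional_homogTot (n : ℕ) : FiniteDimensional ℂ (homogTot θ n) :=
  Submodule.finiteDimensional_of_le (homogTot_le_Wfil n)

lemma Wfil_succ_le (n : ℕ) : Wfil θ (n + 1) ≤ Wfil θ n ⊔ homogTot θ (n + 1) := by
  refine wordSpan_le.2 fun w hw => ?_
  rcases Nat.lt_or_ge w.length (n + 1) with h | h
  · exact Submodule.mem_sup_left (wordElem_mem_wordSpan (Nat.le_of_lt_succ h))
  · exact Submodule.mem_sup_right (wordElem_mem_wordSpan (hw.antisymm h))

lemma mul_mem_homogTot {m n : ℕ} {x y : TV θ} (hx : x ∈ homogTot θ m) (hy : y ∈ homogTot θ n) :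
    x * y ∈ homogTot θ (m + n) :=
  mul_mem_wordSpan (fun v w hv hw => by rw [List.length_append, hv, hw]) hx hy

lemma mul_mem_homogD {a b : Fin θ → ℕ} {x y : TV θ} (hx : x ∈ homogD θ a) (hy : y ∈ homogD θ b) :
    x * y ∈ homogD θ (a + b) :=
  mul_mem_wordSpan (fun v w hv hw => by rw [degW_append, hv, hw]) hx hy

lemma one_mem_homogD : (1 : TV θ) ∈ homogD θ 0 := wordElem_mem_wordSpan (w := []) degW_nil

lemma gen_mem_homogD (i : Fin θ) : gen θ i ∈ homogD θ (δ θ i) := by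
  rw [← wordElem_singleton]; exact wordElem_mem_wordSpan (degW_singleton i)

lemma gen_mem_homogTot (i : Fin θ) : gen θ i ∈ homogTot θ 1 := by
  rw [← wordElem_singleton]; exact wordElem_mem_wordSpan rfl

lemma sum_degW (w : List (Fin θ)) : ∑ i, degW θ w i = w.length := by
  induction w with
  | nil => simp [degW_nil]
  | cons i w ih =>
    simp only [degW_cons, Pi.add_apply, Finset.sum_add_distrib, ih, List.length_cons]
    simp [δ, add_comm]

lemma homogD_le_homogTot (d : Fin θ → ℕ) : homogD θ d ≤ homogTot θ (∑ i, d i) :=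
  wordSpan_mono fun w hw => by rw [← hw, sum_degW]

lemma wordCoeff_eq_zero_of_mem_wordSpan {P : List (Fin θ) → Prop} {v : List (Fin θ)} (hv : ¬ P v)
    {x : TV θ} (hx : x ∈ wordSpan P) : wordCoeff v x = 0 :=
  wordSpan_le (M := LinearMap.ker (wordCoeff v)).2 (fun w hw => by
    rw [LinearMap.mem_ker, wordCoeff_wordElem, if_neg]
    rintro rfl
    exact hv hw) hx

/-- The span of the words of length `< n`. -/
def Wlt (θ n : ℕ) : Submodule ℂ (TV θ) := wordSpan fun w => w.length < n

lemma gen_mul_mem_Wlt {n : ℕ} (i : Fin θ) {x : TV θ} (hx : x ∈ Wlt θ n) :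
    gen θ i * x ∈ Wlt θ (n + 1) :=
  mul_mem_wordSpan (fun v w hv hw => by rw [List.length_append, hv]; omega)
    (gen_mem_homogTot i) hx

lemma mul_gen_mem_Wlt {n : ℕ} (i : Fin θ) {x : TV θ} (hx : x ∈ Wlt θ n) :
    x * gen θ i ∈ Wlt θ (n + 1) :=
  mul_mem_wordSpan (fun v w hv hw => by rw [List.length_append, hw]; omega) hx
    (gen_mem_homogTot i)

lemma disjoint_homogTot_Wlt (n : ℕ) : Disjoint (homogTot θ n) (Wlt θ n) := by
  refine Submodule.disjoint_def.2 fun x hx hlt => (wordBasis θ).ext_elem fun v => ?_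
  rw [map_zero, Finsupp.zero_apply, ← Module.Basis.coord_apply]
  by_cases hv : v.length = n
  · exact wordCoeff_eq_zero_of_mem_wordSpan hv.not_lt hlt
  · exact wordCoeff_eq_zero_of_mem_wordSpan hv hx

end Gradings

namespace BraidedSquare

variable {θ : ℕ} {q : Fin θ → Fin θ → ℂˣ}

lemma mem_mixedSub_of_map_mkQ_eq_zero {I : Submodule ℂ (TV θ)} {x : TV θ ⊗[ℂ] TV θ}
    (hx : TensorProduct.map I.mkQ I.mkQ x = 0) : x ∈ mixedSub I := by
  rw [← LinearMap.mem_ker, TensorProduct.map_ker (f := I.subtype) (f' := I.subtype)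
    (LinearMap.exact_subtype_mkQ I) I.mkQ_surjective
    (LinearMap.exact_subtype_mkQ I) I.mkQ_surjective] at hx
  have range_lTensor_le : LinearMap.range (LinearMap.lTensor (TV θ) I.subtype) ≤ mixedSub I := by
    rintro _ ⟨y, rfl⟩
    induction y using TensorProduct.induction_on with
    | zero => rw [map_zero]; exact Submodule.zero_mem _
    | tmul a b => exact Submodule.subset_span (Or.inr ⟨a, b, b.2, rfl⟩)
    | add x y hx hy => rw [map_add]; exact add_mem hx hy
  have range_rTensor_le : LinearMap.range (LinearMap.rTensor (TV θ) I.subtype) ≤ mixedSub I := by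
    rintro _ ⟨y, rfl⟩
    induction y using TensorProduct.induction_on with
    | zero => rw [map_zero]; exact Submodule.zero_mem _
    | tmul a b => exact Submodule.subset_span (Or.inl ⟨a, b, a.2, rfl⟩)
    | add x y hx hy => rw [map_add]; exact add_mem hx hy
  exact sup_le range_lTensor_le range_rTensor_le hx

lemma mem_mixed_iff {I : Submodule ℂ (TV θ)} {x : BraidedSquare q} :
    x ∈ mixed q I ↔ ∀ f ∈ I.dualAnnihilator, ∀ g ∈ I.dualAnnihilator,
      g (contractLeft q f x) = 0 := by
  refine ⟨fun hx f hf g hg =>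
    (Submodule.mem_dualAnnihilator g).1 hg _ (contractLeft_mem_of_mem_mixed hf hx), fun h => ?_⟩
  refine ⟨(of q).symm x, mem_mixedSub_of_map_mkQ_eq_zero ?_, rfl⟩
  let b := Module.Basis.ofVectorSpace ℂ (TV θ ⧸ I)
  have coord_mem (m) : b.coord m ∘ₗ I.mkQ ∈ I.dualAnnihilator :=
    (Submodule.mem_dualAnnihilator _).2 fun y hy => by
      rw [LinearMap.comp_apply, Submodule.mkQ_apply, (Submodule.Quotient.mk_eq_zero I).2 hy,
        map_zero]
  refine (b.tensorProduct b).ext_elem fun ⟨m, n⟩ => ?_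
  rw [map_zero, Finsupp.zero_apply, ← h _ (coord_mem m) _ (coord_mem n)]
  have coord_comp : (b.tensorProduct b).coord (m, n) ∘ₗ TensorProduct.map I.mkQ I.mkQ ∘ₗ
      (of q).symm.toLinearMap = (b.coord n ∘ₗ I.mkQ) ∘ₗ contractLeft q (b.coord m ∘ₗ I.mkQ) :=
    hom_ext fun v w => by
      simp only [LinearMap.comp_apply, contractLeft_inl_mul_inr]
      simp [inl_mul_inr, mul_comm]
  exact LinearMap.congr_fun coord_comp x

/-- The component of total degree `n` of the braided tensor square. -/
def homogSquare (q : Fin θ → Fin θ → ℂˣ) (n : ℕ) : Submodule ℂ (BraidedSquare q) :=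
  Submodule.span ℂ {x | ∃ v w : List (Fin θ), v.length + w.length = n ∧
    x = inl q (wordElem θ v) * inr q (wordElem θ w)}

lemma homogSquare_le {n : ℕ} {M : Submodule ℂ (BraidedSquare q)} :
    homogSquare q n ≤ M ↔ ∀ v w : List (Fin θ), v.length + w.length = n →
      inl q (wordElem θ v) * inr q (wordElem θ w) ∈ M :=
  Submodule.span_le.trans ⟨fun h v w hvw => h ⟨v, w, hvw, rfl⟩, by
    rintro h _ ⟨v, w, hvw, rfl⟩; exact h v w hvw⟩

lemma inl_mul_inr_mem_homogSquare {n : ℕ} {v w : List (Fin θ)} (h : v.length + w.length = n) :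
    inl q (wordElem θ v) * inr q (wordElem θ w) ∈ homogSquare q n :=
  homogSquare_le.1 le_rfl v w h

lemma braidedΔ_gen_mul_mem_homogSquare (i : Fin θ) {n : ℕ} {x : BraidedSquare q}
    (hx : x ∈ homogSquare q n) : braidedΔ q (gen θ i) * x ∈ homogSquare q (n + 1) := by
  refine (homogSquare_le (M := (homogSquare q (n + 1)).comap
    (LinearMap.mulLeft ℂ (braidedΔ q (gen θ i))))).2 (fun v w hvw => ?_) hx
  rw [Submodule.mem_comap, LinearMap.mulLeft_apply, braidedΔ_gen, add_mul]
  refine add_mem ?_ ?_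
  · rw [← mul_assoc, ← map_mul, ← wordElem_cons]
    exact inl_mul_inr_mem_homogSquare (by rw [List.length_cons]; omega)
  · rw [← mul_assoc, ← wordElem_singleton, inr_wordElem_mul_inl_wordElem, smul_mul_assoc,
      mul_assoc, ← map_mul, ← wordElem_append]
    exact Submodule.smul_mem _ _ (inl_mul_inr_mem_homogSquare (by
      rw [List.length_append, List.length_singleton]; omega))

lemma braidedΔ_wordElem_mem_homogSquare (w : List (Fin θ)) :
    braidedΔ q (wordElem θ w) ∈ homogSquare q w.length := by
  induction w with
  | nil => simpa [wordElem_nil] using inl_mul_inr_mem_homogSquare (q := q) (v := []) (w := []) rfl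
  | cons i w ih =>
    rw [wordElem_cons, map_mul]; exact braidedΔ_gen_mul_mem_homogSquare i ih

lemma braidedΔ_mem_homogSquare {n : ℕ} {x : TV θ} (hx : x ∈ homogTot θ n) :
    braidedΔ q x ∈ homogSquare q n :=
  wordSpan_le (M := (homogSquare q n).comap (braidedΔ q).toLinearMap).2
    (fun w hw => by subst hw; exact braidedΔ_wordElem_mem_homogSquare w) hx

lemma apply_contractLeft_eq_zero {a b n : ℕ} (hn : n < a + b) {f g : TV θ →ₗ[ℂ] ℂ}
    (hf : f ∈ (Wlt θ a).dualAnnihilator) (hg : g ∈ (Wlt θ b).dualAnnihilator)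
    {x : BraidedSquare q} (hx : x ∈ homogSquare q n) : g (contractLeft q f x) = 0 := by
  rw [Submodule.mem_dualAnnihilator] at hf hg
  refine (homogSquare_le (M := LinearMap.ker (g ∘ₗ contractLeft q f))).2 (fun v w hvw => ?_) hx
  rw [LinearMap.mem_ker, LinearMap.comp_apply, contractLeft_inl_mul_inr, map_smul, smul_eq_mul]
  rcases Nat.lt_or_ge v.length a with hv | hv
  · rw [hf _ (wordElem_mem_wordSpan hv), zero_mul]
  · rw [hg _ (wordElem_mem_wordSpan (by omega)), mul_zero]

lemma apply_contractLeft_eq_sum {n : ℕ} {f g : TV θ →ₗ[ℂ] ℂ} {F G : ℕ → TV θ →ₗ[ℂ] ℂ}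
    (hF : ∀ a, F a ∈ (Wlt θ a).dualAnnihilator) (hFf : ∀ a, ∀ x ∈ homogTot θ a, F a x = f x)
    (hG : ∀ a, G a ∈ (Wlt θ a).dualAnnihilator) (hGg : ∀ a, ∀ x ∈ homogTot θ a, G a x = g x)
    {x : BraidedSquare q} (hx : x ∈ homogSquare q n) :
    g (contractLeft q f x) =
      ∑ a ∈ Finset.range (n + 1), G (n - a) (contractLeft q (F a) x) := by
  have mem_ker := (homogSquare_le (M := LinearMap.ker (g ∘ₗ contractLeft q f -
    ∑ a ∈ Finset.range (n + 1), G (n - a) ∘ₗ contractLeft q (F a)))).2 (fun v w hvw => ?_) hx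
  · simpa [sub_eq_zero] using mem_ker
  simp only [LinearMap.mem_ker, LinearMap.sub_apply, LinearMap.sum_apply, LinearMap.comp_apply,
    contractLeft_inl_mul_inr, map_smul, smul_eq_mul, sub_eq_zero]
  rw [Finset.sum_eq_single v.length]
  · rw [hFf _ _ (wordElem_mem_wordSpan rfl), hGg _ _ (wordElem_mem_wordSpan (by omega))]
  · intro a _ hne
    rcases lt_or_gt_of_ne hne with h | h
    · rw [(Submodule.mem_dualAnnihilator _).1 (hG _) _ (wordElem_mem_wordSpan (by omega)),
        mul_zero]
    · rw [(Submodule.mem_dualAnnihilator _).1 (hF _) _ (wordElem_mem_wordSpan h), zero_mul]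
  · exact fun h => absurd (Finset.mem_range.2 (by omega)) h

end BraidedSquare

/-! ### Leading ideals -/

section LeadIdeal

open BraidedSquare

variable {θ : ℕ} {q : Fin θ → Fin θ → ℂˣ} {K : Submodule ℂ (TV θ)}

/-- The leading parts of degree `n` of the elements of `K`, together with zero. -/
def leadPart (K : Submodule ℂ (TV θ)) (n : ℕ) : Submodule ℂ (TV θ) :=
  homogTot θ n ⊓ (K ⊔ Wlt θ n)

/-- The span of the leading parts of the elements of `K`; when `K` is an ideal, this is the kernel
of the map from `T(V)` to the associated graded algebra of `T(V)/K`. -/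
def leadIdeal (K : Submodule ℂ (TV θ)) : Submodule ℂ (TV θ) := ⨆ n, leadPart K n

lemma leadPart_le_leadIdeal (n : ℕ) : leadPart K n ≤ leadIdeal K := le_iSup _ n

lemma gen_mul_mem_leadIdeal (hK : ∀ a x : TV θ, x ∈ K → a * x ∈ K) (i : Fin θ) {x : TV θ}
    (hx : x ∈ leadIdeal K) : gen θ i * x ∈ leadIdeal K := by
  refine iSup_le (a := (leadIdeal K).comap (LinearMap.mulLeft ℂ (gen θ i)))
    (fun n y hy => leadPart_le_leadIdeal (n + 1) ⟨?_, ?_⟩) hx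
  · rw [add_comm n]; exact mul_mem_homogTot (gen_mem_homogTot i) hy.1
  · obtain ⟨k, hk, w, hw, rfl⟩ := Submodule.mem_sup.1 hy.2
    rw [LinearMap.mulLeft_apply, mul_add]
    exact add_mem (Submodule.mem_sup_left (hK _ _ hk))
      (Submodule.mem_sup_right (gen_mul_mem_Wlt i hw))

lemma mul_gen_mem_leadIdeal (hK : ∀ a x : TV θ, x ∈ K → x * a ∈ K) (i : Fin θ) {x : TV θ}
    (hx : x ∈ leadIdeal K) : x * gen θ i ∈ leadIdeal K := by
  refine iSup_le (a := (leadIdeal K).comap (LinearMap.mulRight ℂ (gen θ i)))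
    (fun n y hy => leadPart_le_leadIdeal (n + 1) ⟨mul_mem_homogTot hy.1 (gen_mem_homogTot i), ?_⟩)
    hx
  obtain ⟨k, hk, w, hw, rfl⟩ := Submodule.mem_sup.1 hy.2
  rw [add_mul]
  exact add_mem (Submodule.mem_sup_left (hK _ _ hk))
    (Submodule.mem_sup_right (mul_gen_mem_Wlt i hw))

lemma leadPart_eq_bot (hK : Disjoint (Wfil θ 1) K) {n : ℕ} (hn : n < 2) : leadPart K n = ⊥ := by
  refine (Submodule.eq_bot_iff _).2 fun x hx => ?_
  obtain ⟨k, hk, w, hw, rfl⟩ := Submodule.mem_sup.1 hx.2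
  have hw_mem : w ∈ Wfil θ 1 := wordSpan_mono (fun v (hv : v.length < n) => by omega) hw
  have hkw_mem : k + w ∈ Wfil θ 1 := Wfil_mono (by omega) (homogTot_le_Wfil n hx.1)
  obtain rfl : k = 0 :=
    Submodule.disjoint_def.1 hK k ((Submodule.add_mem_iff_left _ hw_mem).1 hkw_mem) hk
  rw [zero_add] at hx ⊢
  exact Submodule.disjoint_def.1 (disjoint_homogTot_Wlt n) w hx.1 hw

lemma exists_lift_mem_dualAnnihilator {f : TV θ →ₗ[ℂ] ℂ} (hf : f ∈ (leadIdeal K).dualAnnihilator)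
    (n : ℕ) : ∃ g ∈ K.dualAnnihilator, g ∈ (Wlt θ n).dualAnnihilator ∧
      ∀ x ∈ homogTot θ n, g x = f x := by
  obtain ⟨g, hg, hgf⟩ := exists_mem_dualAnnihilator_comp_eq (homogTot θ n).subtype
    (I := K ⊔ Wlt θ n) (f := f ∘ₗ (homogTot θ n).subtype)
    ((Submodule.mem_dualAnnihilator _).2 fun x hx => (Submodule.mem_dualAnnihilator f).1 hf x
      (leadPart_le_leadIdeal n ⟨x.2, hx⟩))
  rw [Submodule.dualAnnihilator_sup_eq] at hg
  exact ⟨g, hg.1, hg.2, fun x hx => LinearMap.congr_fun hgf ⟨x, hx⟩⟩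

lemma braidedΔ_mem_mixed_leadIdeal (hK : ∀ x ∈ K, braidedΔ q x ∈ mixed q K) {x : TV θ}
    (hx : x ∈ leadIdeal K) : braidedΔ q x ∈ mixed q (leadIdeal K) := by
  refine iSup_le (a := (mixed q (leadIdeal K)).comap (braidedΔ q).toLinearMap)
    (fun n y hy => mem_mixed_iff.2 fun f hf g hg => ?_) hx
  choose F hFK hF hFf using exists_lift_mem_dualAnnihilator hf
  choose G hGK hG hGg using exists_lift_mem_dualAnnihilator hg
  rw [AlgHom.toLinearMap_apply,
    apply_contractLeft_eq_sum hF hFf hG hGg (braidedΔ_mem_homogSquare hy.1)]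
  refine Finset.sum_eq_zero fun a _ => ?_
  obtain ⟨k, hk, w, hw, rfl⟩ := Submodule.mem_sup.1 hy.2
  have lower_vanish : w ∈ LinearMap.ker (G (n - a) ∘ₗ contractLeft q (F a) ∘ₗ
      (braidedΔ q).toLinearMap) :=
    wordSpan_le.2 (fun v (hv : v.length < n) => apply_contractLeft_eq_zero (by omega)
      (hF a) (hG (n - a)) (braidedΔ_wordElem_mem_homogSquare v)) hw
  rw [map_add, map_add, map_add, mem_mixed_iff.1 (hK k hk) _ (hFK a) _ (hGK (n - a)), zero_add]
  exact lower_vanish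

lemma isPreNicholsIdeal_leadIdeal (S : BraidedStr θ q)
    (hleft : ∀ a x : TV θ, x ∈ K → a * x ∈ K) (hright : ∀ a x : TV θ, x ∈ K → x * a ∈ K)
    (hΔ : ∀ x ∈ K, braidedΔ q x ∈ mixed q K) (hdisj : Disjoint (Wfil θ 1) K) :
    IsPreNicholsIdeal S (leadIdeal K) where
  mul_left a _ hx :=
    map_mul_mem_of_gen (AlgHom.id ℂ _) (fun i _ hy => gen_mul_mem_leadIdeal hleft i hy) a hx
  mul_right a _ hx :=
    mul_map_mem_of_gen (AlgHom.id ℂ _) (fun i _ hy => mul_gen_mem_leadIdeal hright i hy) a hx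
  homog_ge2 := by
    refine le_antisymm (iSup_le fun n x hx => ?_) (Submodule.span_le.2 fun x hx => hx.1)
    rcases Nat.lt_or_ge n 2 with hn | hn
    · rw [leadPart_eq_bot hdisj hn] at hx
      exact (Submodule.mem_bot ℂ).1 hx ▸ Submodule.zero_mem _
    · exact Submodule.subset_span ⟨leadPart_le_leadIdeal n hx, n, hn, hx.1⟩
  coideal x hx := by
    obtain ⟨y, hy, hyx⟩ := braidedΔ_mem_mixed_leadIdeal hΔ hx
    rw [← S.of_Δ] at hyx
    exact (of q).injective hyx ▸ hy

end LeadIdeal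

/-! ### Braided subspaces of primitive elements -/

section BraidedSubspace

open BraidedSquare

variable {θ : ℕ} {q : Fin θ → Fin θ → ℂˣ}

lemma qf_sum_left {ι : Type*} (s : Finset ι) (f : ι → Fin θ → ℕ) (b : Fin θ → ℕ) :
    qf q (∑ a ∈ s, f a) b = ∏ a ∈ s, qf q (f a) b := by
  classical
  induction s using Finset.induction_on with
  | empty => simp [qf_zero_left]
  | insert a s ha ih => rw [Finset.sum_insert ha, qf_add_left, ih, Finset.prod_insert ha]

lemma qf_sum_right {ι : Type*} (s : Finset ι) (a : Fin θ → ℕ) (f : ι → Fin θ → ℕ) :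
    qf q a (∑ b ∈ s, f b) = ∏ b ∈ s, qf q a (f b) := by
  classical
  induction s using Finset.induction_on with
  | empty => simp [qf_zero_right]
  | insert b s hb ih => rw [Finset.sum_insert hb, qf_add_right, ih, Finset.prod_insert hb]

/-- The braiding matrix of a family of homogeneous elements of multidegrees `β a`. -/
def braidingOf (q : Fin θ → Fin θ → ℂˣ) {m : ℕ} (β : Fin m → Fin θ → ℕ) : Fin m → Fin m → ℂˣ :=
  fun a b => Units.mk0 (qf q (β a) (β b)) (qf_ne_zero q _ _)

variable {m : ℕ} {β : Fin m → Fin θ → ℕ} {y : Fin m → TV θ}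

lemma braidingOf_apply (a b : Fin m) : (braidingOf q β a b : ℂ) = qf q (β a) (β b) := rfl

lemma qf_braidingOf (c d : Fin m → ℕ) :
    qf (braidingOf q β) c d = qf q (∑ a, c a • β a) (∑ b, d b • β b) := by
  rw [qf_sum_left]
  refine Finset.prod_congr rfl fun a _ => ?_
  rw [qf_smul_left, qf_sum_right, ← Finset.prod_pow]
  refine Finset.prod_congr rfl fun b _ => ?_
  rw [braidingOf_apply, qf_smul_right, ← pow_mul, mul_comm]

lemma lift_gen (y : Fin m → TV θ) (a : Fin m) : FreeAlgebra.lift ℂ y (gen m a) = y a :=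
  FreeAlgebra.lift_ι_apply y a

lemma sum_δ_smul (β : Fin m → Fin θ → ℕ) (a : Fin m) : ∑ b, δ m a b • β b = β a := by
  simp [δ, ite_smul]

lemma lift_wordElem_mem_homogD (hy : ∀ a, y a ∈ homogD θ (β a)) (w : List (Fin m)) :
    FreeAlgebra.lift ℂ y (wordElem m w) ∈ homogD θ (∑ a, degW m w a • β a) := by
  induction w with
  | nil => simpa [wordElem_nil, degW_nil] using one_mem_homogD
  | cons a w ih =>
    rw [wordElem_cons, map_mul, lift_gen, degW_cons]
    simp only [Pi.add_apply, add_smul, Finset.sum_add_distrib, sum_δ_smul]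
    exact mul_mem_homogD (hy a) ih

/-- The linear map underlying `BraidedSquare.map`. -/
def BraidedSquare.mapLinear (q : Fin θ → Fin θ → ℂˣ) (β : Fin m → Fin θ → ℕ) (y : Fin m → TV θ) :
    BraidedSquare (braidingOf q β) →ₗ[ℂ] BraidedSquare q :=
  (of q).toLinearMap ∘ₗ TensorProduct.map (FreeAlgebra.lift ℂ y).toLinearMap
    (FreeAlgebra.lift ℂ y).toLinearMap ∘ₗ (of (braidingOf q β)).symm.toLinearMap

lemma BraidedSquare.mapLinear_inl_mul_inr (u v : TV m) :
    mapLinear q β y (inl _ u * inr _ v) =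
      inl q (FreeAlgebra.lift ℂ y u) * inr q (FreeAlgebra.lift ℂ y v) := by
  rw [inl_mul_inr, inl_mul_inr]
  rfl

lemma BraidedSquare.mapLinear_mul (hy : ∀ a, y a ∈ homogD θ (β a))
    (x z : BraidedSquare (braidingOf q β)) :
    mapLinear q β y (x * z) = mapLinear q β y x * mapLinear q β y z := by
  refine LinearMap.congr_fun₂ (f := (LinearMap.mul ℂ _).compr₂ (mapLinear q β y))
    (g := (LinearMap.mul ℂ _).compl₁₂ (mapLinear q β y) (mapLinear q β y))
    (hom_ext fun s t => hom_ext fun u v => ?_) x z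
  simp only [LinearMap.compr₂_apply, LinearMap.compl₁₂_apply, LinearMap.mul_apply']
  rw [inl_mul_inr_mul_inl_mul_inr _ (wordElem_mem_wordSpan rfl) (wordElem_mem_wordSpan rfl),
    map_smul, mapLinear_inl_mul_inr, mapLinear_inl_mul_inr, mapLinear_inl_mul_inr,
    inl_mul_inr_mul_inl_mul_inr q (lift_wordElem_mem_homogD hy t) (lift_wordElem_mem_homogD hy u),
    qf_braidingOf]
  simp only [map_mul]

/-- The morphism of braided tensor squares induced by a family of homogeneous elements. -/
def BraidedSquare.map (hy : ∀ a, y a ∈ homogD θ (β a)) :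
    BraidedSquare (braidingOf q β) →ₐ[ℂ] BraidedSquare q :=
  AlgHom.ofLinearMap (mapLinear q β y)
    (by simpa only [map_one, mul_one] using mapLinear_inl_mul_inr (q := q) (β := β) (y := y) 1 1)
    (mapLinear_mul hy)

lemma BraidedSquare.map_inl (hy : ∀ a, y a ∈ homogD θ (β a)) (u : TV m) :
    BraidedSquare.map (q := q) hy (inl _ u) = inl q (FreeAlgebra.lift ℂ y u) := by
  change mapLinear q β y (inl _ u) = _
  simpa only [map_one, mul_one] using mapLinear_inl_mul_inr (q := q) (β := β) (y := y) u 1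

lemma BraidedSquare.map_inr (hy : ∀ a, y a ∈ homogD θ (β a)) (u : TV m) :
    BraidedSquare.map (q := q) hy (inr _ u) = inr q (FreeAlgebra.lift ℂ y u) := by
  change mapLinear q β y (inr _ u) = _
  simpa only [map_one, one_mul] using mapLinear_inl_mul_inr (q := q) (β := β) (y := y) 1 u

lemma BraidedSquare.contractLeft_map (hy : ∀ a, y a ∈ homogD θ (β a)) (f : TV θ →ₗ[ℂ] ℂ)
    (x : BraidedSquare (braidingOf q β)) :
    contractLeft q f (BraidedSquare.map hy x) = FreeAlgebra.lift ℂ y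
      (contractLeft (braidingOf q β) (f ∘ₗ (FreeAlgebra.lift ℂ y).toLinearMap) x) := by
  induction x using BraidedSquare.induction with
  | zero => simp only [map_zero]
  | mul a b =>
    rw [map_mul, map_inl, map_inr, contractLeft_inl_mul_inr, contractLeft_inl_mul_inr, map_smul]
    rfl
  | add x z hx hz => simp only [map_add, hx, hz]

lemma mem_mixed_comap_of_map_mem_mixed (hy : ∀ a, y a ∈ homogD θ (β a))
    {I : Submodule ℂ (TV θ)} {x : BraidedSquare (braidingOf q β)}
    (hx : BraidedSquare.map hy x ∈ mixed q I) :
    x ∈ mixed (braidingOf q β) (I.comap (FreeAlgebra.lift ℂ y).toLinearMap) := by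
  refine mem_mixed_iff.2 fun f hf g hg => ?_
  obtain ⟨f', hf', rfl⟩ := exists_mem_dualAnnihilator_comp_eq _ hf
  obtain ⟨g', hg', rfl⟩ := exists_mem_dualAnnihilator_comp_eq _ hg
  have h := mem_mixed_iff.1 hx f' hf' g' hg'
  rwa [contractLeft_map] at h

/-- `x` is primitive in the quotient `T(V)/I`. -/
def IsPrimitiveMod (q : Fin θ → Fin θ → ℂˣ) (I : Submodule ℂ (TV θ)) (x : TV θ) : Prop :=
  braidedΔ q x - (inl q x + inr q x) ∈ mixed q I

namespace IsPreNicholsIdeal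

variable {S : BraidedStr θ q} {I : Submodule ℂ (TV θ)}

/-- The ideal `I ⊗ T(V) + T(V) ⊗ I` of the braided tensor square. -/
def mixedIdeal (hI : IsPreNicholsIdeal S I) : TwoSidedIdeal (BraidedSquare q) :=
  TwoSidedIdeal.mk' (mixed q I : Set (BraidedSquare q)) (Submodule.zero_mem _)
    (fun hx hy => Submodule.add_mem _ hx hy) (fun hx => Submodule.neg_mem _ hx)
    (fun hx => hI.mixed_mul_left _ hx) (fun hx => hI.mixed_mul_right _ hx)

/-- The braided tensor square of the pre-Nichols algebra `T(V)/I`. -/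
abbrev QuotientSquare (hI : IsPreNicholsIdeal S I) : Type := hI.mixedIdeal.ringCon.Quotient

/-- The projection of the braided tensor square of `T(V)` to that of `T(V)/I`. -/
def squareMk (hI : IsPreNicholsIdeal S I) : BraidedSquare q →ₐ[ℂ] hI.QuotientSquare :=
  hI.mixedIdeal.ringCon.mkₐ ℂ

lemma squareMk_eq_zero_iff (hI : IsPreNicholsIdeal S I) {x : BraidedSquare q} :
    hI.squareMk x = 0 ↔ x ∈ mixed q I := by
  have mk_eq_zero : hI.squareMk x = 0 ↔ x ∈ hI.mixedIdeal := by
    rw [TwoSidedIdeal.mem_iff, ← RingCon.eq]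
    rfl
  rw [mk_eq_zero, mixedIdeal, TwoSidedIdeal.mem_mk', SetLike.mem_coe]

lemma squareMk_braidedΔ (hI : IsPreNicholsIdeal S I) {x : TV θ} (hx : IsPrimitiveMod q I x) :
    hI.squareMk (braidedΔ q x) = hI.squareMk (inl q x) + hI.squareMk (inr q x) := by
  rw [← map_add, ← sub_eq_zero, ← map_sub, hI.squareMk_eq_zero_iff]
  exact hx

lemma squareMk_braidedΔ_lift (hI : IsPreNicholsIdeal S I) (hy : ∀ a, y a ∈ homogD θ (β a))
    (hprim : ∀ a, IsPrimitiveMod q I (y a)) (x : TV m) :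
    hI.squareMk (braidedΔ q (FreeAlgebra.lift ℂ y x)) =
      hI.squareMk (BraidedSquare.map hy (braidedΔ (braidingOf q β) x)) := by
  refine DFunLike.congr_fun (f := (hI.squareMk.comp (braidedΔ q)).comp (FreeAlgebra.lift ℂ y))
    (g := (hI.squareMk.comp (BraidedSquare.map hy)).comp (braidedΔ (braidingOf q β)))
    (FreeAlgebra.hom_ext (funext fun a => ?_)) x
  change hI.squareMk (braidedΔ q (FreeAlgebra.lift ℂ y (gen m a))) =
    hI.squareMk (BraidedSquare.map hy (braidedΔ (braidingOf q β) (gen m a)))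
  rw [braidedΔ_gen, map_add, map_inl, map_inr, lift_gen, map_add, hI.squareMk_braidedΔ (hprim a)]

lemma isPreNicholsIdeal_leadIdeal_comap (hI : IsPreNicholsIdeal S I)
    (S' : BraidedStr m (braidingOf q β)) (hy : ∀ a, y a ∈ homogD θ (β a))
    (hprim : ∀ a, IsPrimitiveMod q I (y a))
    (hind : Disjoint (Wfil m 1) (I.comap (FreeAlgebra.lift ℂ y).toLinearMap)) :
    IsPreNicholsIdeal S' (leadIdeal (I.comap (FreeAlgebra.lift ℂ y).toLinearMap)) := by
  refine isPreNicholsIdeal_leadIdeal S' (fun a x hx => ?_) (fun a x hx => ?_) (fun x hx => ?_) hind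
  · rw [Submodule.mem_comap, AlgHom.toLinearMap_apply, map_mul]
    exact hI.mul_left _ _ hx
  · rw [Submodule.mem_comap, AlgHom.toLinearMap_apply, map_mul]
    exact hI.mul_right _ _ hx
  · refine mem_mixed_comap_of_map_mem_mixed hy ?_
    rw [← hI.squareMk_eq_zero_iff, ← hI.squareMk_braidedΔ_lift hy hprim, hI.squareMk_eq_zero_iff]
    exact hI.braidedΔ_mem_mixed hx

end IsPreNicholsIdeal

lemma exists_lift_mem_Wfil (hy : ∀ a, y a ∈ homogD θ (β a)) :
    ∃ D, ∀ n, ∀ x ∈ homogTot m n, FreeAlgebra.lift ℂ y x ∈ Wfil θ (D * n) := by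
  refine ⟨∑ a, ∑ i, β a i, fun n => wordSpan_le (M := (Wfil θ _).comap
    (FreeAlgebra.lift ℂ y).toLinearMap).2 fun w (hw : w.length = n) => ?_⟩
  subst hw
  refine Wfil_mono ?_ (homogTot_le_Wfil _ (homogD_le_homogTot _ (lift_wordElem_mem_homogD hy w)))
  have count_le (a : Fin m) : degW m w a ≤ w.length := List.count_le_length
  calc ∑ i, (∑ a, degW m w a • β a) i = ∑ a, degW m w a * ∑ i, β a i := by
        simp only [Finset.sum_apply, Pi.smul_apply, smul_eq_mul, Finset.mul_sum]
        exact Finset.sum_comm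
    _ ≤ ∑ a, w.length * ∑ i, β a i :=
        Finset.sum_le_sum fun a _ => Nat.mul_le_mul_right _ (count_le a)
    _ = (∑ a, ∑ i, β a i) * w.length := by rw [← Finset.mul_sum, mul_comm]

lemma finrank_map_Wfil_le_sum (J : Submodule ℂ (TV m)) (n : ℕ) :
    Module.finrank ℂ ((Wfil m n).map J.mkQ) ≤
      ∑ k ∈ Finset.range (n + 1), Module.finrank ℂ ((homogTot m k).map J.mkQ) := by
  induction n with
  | zero =>
    rw [Finset.sum_range_one]
    exact Submodule.finrank_mono (Submodule.map_mono (wordSpan_mono fun w hw => Nat.le_zero.1 hw))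
  | succ n ih =>
    rw [Finset.sum_range_succ]
    refine (Submodule.finrank_mono (Submodule.map_mono (Wfil_succ_le n))).trans ?_
    rw [Submodule.map_sup]
    exact (Submodule.finrank_add_le_finrank_add_finrank _ _).trans (Nat.add_le_add_right ih _)

lemma FinGK.of_finrank_map_homogTot_le {J : Submodule ℂ (TV m)} {C d : ℕ}
    (h : ∀ n, Module.finrank ℂ ((homogTot m n).map J.mkQ) ≤ C * (n + 1) ^ d) : FinGK J := by
  refine ⟨C, d + 1, fun n => (finrank_map_Wfil_le_sum J n).trans ?_⟩
  calc ∑ k ∈ Finset.range (n + 1), Module.finrank ℂ ((homogTot m k).map J.mkQ)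
      ≤ ∑ _k ∈ Finset.range (n + 1), C * (n + 1) ^ d := by
        refine Finset.sum_le_sum fun k hk => (h k).trans ?_
        have := Finset.mem_range.1 hk
        gcongr
        omega
    _ = C * (n + 1) ^ (d + 1) := by
        rw [Finset.sum_const, Finset.card_range, smul_eq_mul]
        ring

lemma FinGK.mono {J J' : Submodule ℂ (TV m)} (hJ : FinGK J) (hle : J ≤ J') : FinGK J' := by
  obtain ⟨C, d, hCd⟩ := hJ
  refine ⟨C, d, fun n => (finrank_map_le_finrank_map _ J.mkQ J'.mkQ fun x _ hx => ?_).trans (hCd n)⟩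
  rw [Submodule.mkQ_apply, Submodule.Quotient.mk_eq_zero] at hx ⊢
  exact hle hx

lemma FinGK.leadIdeal_comap {I : Submodule ℂ (TV θ)} (hI : FinGK I)
    (hy : ∀ a, y a ∈ homogD θ (β a)) :
    FinGK (leadIdeal (I.comap (FreeAlgebra.lift ℂ y).toLinearMap)) := by
  obtain ⟨C, d, hCd⟩ := hI
  obtain ⟨D, hD⟩ := exists_lift_mem_Wfil hy
  set φ := (FreeAlgebra.lift ℂ y).toLinearMap
  refine FinGK.of_finrank_map_homogTot_le (C := C * (D + 1) ^ d) (d := d) fun n => ?_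
  calc Module.finrank ℂ ((homogTot m n).map (leadIdeal (I.comap φ)).mkQ)
      ≤ Module.finrank ℂ ((homogTot m n).map (I.mkQ ∘ₗ φ)) := by
        refine finrank_map_le_finrank_map _ _ _ fun x hx hx0 => ?_
        have hxI : φ x ∈ I := (Submodule.Quotient.mk_eq_zero I).1 hx0
        exact (Submodule.Quotient.mk_eq_zero _).2
          (leadPart_le_leadIdeal n ⟨hx, Submodule.mem_sup_left hxI⟩)
    _ ≤ Module.finrank ℂ ((Wfil θ (D * n)).map I.mkQ) := by
        rw [Submodule.map_comp]
        exact Submodule.finrank_mono (Submodule.map_mono (Submodule.map_le_iff_le_comap.2 (hD n)))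
    _ ≤ C * (D * n + 1) ^ d := hCd (D * n)
    _ ≤ C * ((D + 1) * (n + 1)) ^ d := by gcongr; nlinarith
    _ = C * (D + 1) ^ d * (n + 1) ^ d := by rw [mul_pow, mul_assoc]

theorem IsPreNicholsIdeal.finiteRootSystem_braidingOf {S : BraidedStr θ q}
    {I : Submodule ℂ (TV θ)} (hI : IsPreNicholsIdeal S I) (hGK : FinGK I) (hAAH : AAH)
    (hy : ∀ a, y a ∈ homogD θ (β a)) (hprim : ∀ a, IsPrimitiveMod q I (y a))
    (hind : Disjoint (Wfil m 1) (I.comap (FreeAlgebra.lift ℂ y).toLinearMap)) :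
    FiniteRootSystem (braidingOf q β) :=
  hAAH m _ (braidedStr _) <| (hGK.leadIdeal_comap hy).mono <|
    le_sSup (hI.isPreNicholsIdeal_leadIdeal_comap _ hy hprim hind)

end BraidedSubspace

/-! ### Dynkin diagrams whose labels are powers of a root of unity -/

section LabelExponents

/-- The exponents of the labels of a Dynkin diagram all of whose labels are powers of a fixed root
of unity. -/
structure LabelExponents (m : ℕ) where
  vertex : Fin m → ℤ
  edge : Fin m → Fin m → ℤ

/-- The exponent of `q̃_{ab}`, which for `a = b` is the square of the label of the vertex `a`. -/
def LabelExponents.form {m : ℕ} (L : LabelExponents m) (a b : Fin m) : ℤ :=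
  if a = b then 2 * L.vertex a else L.edge a b

/-- The labels of the Dynkin diagram of `q` are the powers of `ω` with exponents `L`. -/
structure HasLabels {m : ℕ} (ω : ℂ) (q : Fin m → Fin m → ℂˣ) (L : LabelExponents m) : Prop where
  vertex (a : Fin m) : (q a a : ℂ) = ω ^ L.vertex a
  edge (a b : Fin m) (hab : a ≠ b) : qtil q a b = ω ^ L.edge a b

/-- Membership of `n` in `cSet`, in terms of the exponents `d` of the vertex and `e` of the edge
with respect to a primitive `N`-th root of unity. -/
abbrev MemCSetExp (N d e : ℤ) (n : ℕ) : Prop := (¬ N ∣ d ∧ N ∣ d * (n + 1)) ∨ N ∣ d * n + e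

/-- `c` is the `p`-th row of the generalized Cartan matrix of a diagram with exponents `L`. -/
abbrev IsCartanRow {m : ℕ} (N : ℤ) (L : LabelExponents m) (p : Fin m) (c : Fin m → ℤ) : Prop :=
  c p = 2 ∧ ∀ b, b ≠ p → c b ≤ 0 ∧ MemCSetExp N (L.vertex p) (L.edge p b) (c b).natAbs ∧
    ∀ n < (c b).natAbs, ¬ MemCSetExp N (L.vertex p) (L.edge p b) n

/-- `L'` are the exponents of the reflection at `p` of a diagram with exponents `L`, where `c` is
the `p`-th row of the generalized Cartan matrix. -/
abbrev IsReflection {m : ℕ} (N : ℤ) (L : LabelExponents m) (p : Fin m) (c : Fin m → ℤ)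
    (L' : LabelExponents m) : Prop :=
  (∀ a, L'.vertex a ≡ L.vertex a - c a * L.form p a + c a ^ 2 * L.vertex p [ZMOD N]) ∧
  ∀ a b, a ≠ b → L'.edge a b ≡
    L.edge a b - c b * L.form p a - c a * L.form p b + 2 * c a * c b * L.vertex p [ZMOD N]

variable {m N : ℕ} {ω : ℂ} {q : Fin m → Fin m → ℂˣ} {L L' : LabelExponents m}

lemma qnum_eq_zero_iff (t : ℂ) (n : ℕ) : qnum t (n + 1) = 0 ↔ t ≠ 1 ∧ t ^ (n + 1) = 1 := by
  have telescope : qnum t (n + 1) * (t - 1) = t ^ (n + 1) - 1 := geom_sum_mul t (n + 1)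
  refine ⟨fun h0 => ⟨?_, ?_⟩, fun ⟨ht, htn⟩ => ?_⟩
  · rintro rfl
    simp only [qnum, one_pow, Finset.sum_const, Finset.card_range, nsmul_eq_mul, mul_one] at h0
    exact Nat.cast_ne_zero.2 n.succ_ne_zero h0
  · rwa [h0, zero_mul, eq_comm, sub_eq_zero] at telescope
  · rw [htn, sub_self] at telescope
    exact (mul_eq_zero.1 telescope).resolve_right (sub_ne_zero.2 ht)

lemma zpow_eq_zpow_of_modEq (hω : IsPrimitiveRoot ω N) (hN : N ≠ 0) {a b : ℤ}
    (h : a ≡ b [ZMOD N]) : ω ^ a = ω ^ b := by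
  have hω0 := hω.ne_zero hN
  have zpow_sub_eq_one := (hω.zpow_eq_one_iff_dvd (b - a)).2 h.dvd
  rwa [zpow_sub₀ hω0, div_eq_one_iff_eq (zpow_ne_zero _ hω0), eq_comm] at zpow_sub_eq_one

lemma reflectMat_self_apply (p a : Fin m) : (reflectMat q p a a : ℂ) =
    q a a * qtil q p a ^ (-cij q p a) * (q p p : ℂ) ^ (cij q p a ^ 2) := by
  simp only [reflectMat, qtil, Units.val_mul, Units.val_zpow_eq_zpow_val, mul_zpow, sq]
  ring

lemma qtil_reflectMat (p a b : Fin m) : qtil (reflectMat q p) a b =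
    qtil q a b * qtil q p a ^ (-cij q p b) * qtil q p b ^ (-cij q p a) *
      (q p p : ℂ) ^ (2 * cij q p a * cij q p b) := by
  simp only [reflectMat, qtil, Units.val_mul, Units.val_zpow_eq_zpow_val, mul_zpow, mul_assoc,
    two_mul, add_mul, zpow_add₀ (q p p).ne_zero, mul_comm (cij q p b) (cij q p a)]
  ring

namespace HasLabels

lemma qtil_eq (h : HasLabels ω q L) (hω : ω ≠ 0) (a b : Fin m) :
    qtil q a b = ω ^ L.form a b := by
  rw [LabelExponents.form]
  split_ifs with hab
  · rw [← hab, qtil, h.vertex, ← zpow_add₀ hω, two_mul]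
  · exact h.edge a b hab

lemma congr (h : HasLabels ω q L) (hω : IsPrimitiveRoot ω N) (hN : N ≠ 0)
    (hv : ∀ a, L.vertex a ≡ L'.vertex a [ZMOD N])
    (he : ∀ a b, a ≠ b → L.edge a b ≡ L'.edge a b [ZMOD N]) : HasLabels ω q L' where
  vertex a := (h.vertex a).trans (zpow_eq_zpow_of_modEq hω hN (hv a))
  edge a b hab := (h.edge a b hab).trans (zpow_eq_zpow_of_modEq hω hN (he a b hab))

lemma mem_cSet_iff (h : HasLabels ω q L) (hω : IsPrimitiveRoot ω N) (hN : N ≠ 0) {a b : Fin m}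
    (hab : a ≠ b) (n : ℕ) : n ∈ cSet q a b ↔ MemCSetExp N (L.vertex a) (L.edge a b) n := by
  rw [cSet, Set.mem_ofPred_eq, mul_eq_zero, qnum_eq_zero_iff, h.vertex, h.edge a b hab, sub_eq_zero,
    eq_comm (a := (1 : ℂ)), MemCSetExp, ne_eq, hω.zpow_eq_one_iff_dvd, ← zpow_natCast, ← zpow_mul,
    ← zpow_natCast, ← zpow_mul, hω.zpow_eq_one_iff_dvd, ← zpow_add₀ (hω.ne_zero hN),
    hω.zpow_eq_one_iff_dvd, Nat.cast_succ]

variable {p : Fin m} {c : Fin m → ℤ}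

lemma cij_eq (h : HasLabels ω q L) (hω : IsPrimitiveRoot ω N) (hN : N ≠ 0)
    (hc : IsCartanRow N L p c) : cij q p = c := by
  funext b
  rw [cij]
  split_ifs with hb
  · rw [← hb, hc.1]
  · obtain ⟨nonpos, mem, lt_min⟩ := hc.2 b (Ne.symm hb)
    have mem_cSet := (h.mem_cSet_iff hω hN hb _).2 mem
    have sInf_eq : sInf (cSet q p b) = (c b).natAbs :=
      le_antisymm (Nat.sInf_le mem_cSet) <| not_lt.1 fun hlt =>
        lt_min _ hlt ((h.mem_cSet_iff hω hN hb _).1 (Nat.sInf_mem ⟨_, mem_cSet⟩))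
    rw [sInf_eq, Int.ofNat_eq_natCast, Int.ofNat_natAbs_of_nonpos nonpos, neg_neg]

lemma reflect (h : HasLabels ω q L) (hω : IsPrimitiveRoot ω N) (hN : N ≠ 0)
    (hc : IsCartanRow N L p c) (hr : IsReflection N L p c L') :
    HasLabels ω (reflectMat q p) L' where
  vertex a := by
    have hω0 := hω.ne_zero hN
    rw [zpow_eq_zpow_of_modEq hω hN (hr.1 a), reflectMat_self_apply, h.cij_eq hω hN hc,
      h.qtil_eq hω0, h.vertex, h.vertex, ← zpow_mul, ← zpow_mul, ← zpow_add₀ hω0, ← zpow_add₀ hω0]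
    ring_nf
  edge a b hab := by
    have hω0 := hω.ne_zero hN
    rw [zpow_eq_zpow_of_modEq hω hN (hr.2 a b hab), qtil_reflectMat, h.cij_eq hω hN hc,
      h.edge a b hab, h.qtil_eq hω0, h.qtil_eq hω0, h.vertex, ← zpow_mul, ← zpow_mul, ← zpow_mul,
      ← zpow_add₀ hω0, ← zpow_add₀ hω0, ← zpow_add₀ hω0]
    ring_nf

end HasLabels

/-- `β` is a root of `q` based at a point of the Weyl groupoid whose diagram has the label
exponents `L`. -/
def HasRootAt (ω : ℂ) (q : Fin m → Fin m → ℂˣ) (L : LabelExponents m) (β : Fin m → ℤ) : Prop :=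
  ∃ q', HasLabels ω q' L ∧ ReachRoot q q' β

lemma HasLabels.hasRootAt (h : HasLabels ω q L) (b : Fin m) : HasRootAt ω q L (Pi.single b 1) :=
  ⟨q, h, by convert ReachRoot.simple b using 1; funext k; simp [Pi.single_apply]⟩

lemma HasRootAt.reflect {β : Fin m → ℤ} (h : HasRootAt ω q L β) (hω : IsPrimitiveRoot ω N)
    (hN : N ≠ 0) (p : Fin m) (c : Fin m → ℤ) (hc : IsCartanRow N L p c)
    (hr : IsReflection N L p c L') :
    HasRootAt ω q L' (β - Pi.single p (∑ b, c b * β b)) := by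
  obtain ⟨q', hq', hβ⟩ := h
  refine ⟨reflectMat q' p, hq'.reflect hω hN hc hr, ?_⟩
  convert hβ.reflect p using 1
  funext k
  simp only [sRefl, hq'.cij_eq hω hN hc, Pi.sub_apply, Pi.single_apply]

lemma HasRootAt.not_finiteRootSystem {β : Fin m → ℤ} (h : HasRootAt ω q L β)
    (hω : IsPrimitiveRoot ω N) (hN : N ≠ 0) (a b : Fin m) (hab : a ≠ b)
    (ha : (N : ℤ) ∣ L.vertex a) (hb : ¬ (N : ℤ) ∣ L.edge a b) : ¬ FiniteRootSystem q := by
  intro hF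
  obtain ⟨q', hq', hβ⟩ := h
  obtain ⟨n, hn⟩ := hF.1 q' a ⟨β, hβ⟩ b hab.symm
  rcases (hq'.mem_cSet_iff hω hN hab n).1 hn with ⟨hna, -⟩ | hdvd
  · exact hna ha
  · exact hb ((Int.dvd_add_right (dvd_mul_of_dvd_left ha _)).1 hdvd)

lemma not_finiteRootSystem_of_forall_exists_lt {R : Set (Fin m → ℤ)} (f : (Fin m → ℤ) → ℤ)
    (hR : ∀ β ∈ R, HasRootAt ω q L β) (hne : R.Nonempty)
    (hlt : ∀ β ∈ R, ∃ γ ∈ R, f β < f γ) : ¬ FiniteRootSystem q := by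
  intro hF
  have hfin : R.Finite := hF.2.subset fun β hβ => (hR β hβ).imp fun _ h => h.2
  obtain ⟨β, hβ, hmax⟩ := Set.exists_max_image R f hfin hne
  obtain ⟨γ, hγ, hβγ⟩ := hlt β hβ
  exact (hmax γ hγ).not_gt hβγ

end LabelExponents

/-! ### Primitive elements of forbidden degree -/

section ForbiddenDegree

variable {θ : ℕ} {q : Fin θ → Fin θ → ℂˣ} {S : BraidedStr θ q} {I : Submodule ℂ (TV θ)}

lemma isPrimitiveMod_gen (i : Fin θ) : IsPrimitiveMod q I (gen θ i) := by
  rw [IsPrimitiveMod, braidedΔ_gen, sub_self]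
  exact Submodule.zero_mem _

lemma eq_wordCoeff_smul_add_sum_of_mem_Wfil_one {m : ℕ} {x : TV m} (hx : x ∈ Wfil m 1) :
    x = wordCoeff [] x • 1 + ∑ a, wordCoeff [a] x • gen m a := by
  induction hx using Submodule.span_induction with
  | mem x h =>
    obtain ⟨w, hw, rfl⟩ := h
    match w, hw with
    | [], _ => simp only [wordCoeff_wordElem]; simp [wordElem_nil]
    | [a], _ => simp only [wordCoeff_wordElem]; simp [wordElem_singleton]
  | zero => simp
  | add x y _ _ hx hy =>
    simp only [map_add, add_smul, Finset.sum_add_distrib]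
    nth_rewrite 1 [hx, hy]
    abel
  | smul c x _ hx =>
    simp only [map_smul, smul_eq_mul, mul_smul, ← Finset.smul_sum, ← smul_add]
    rw [← hx]

/-- The multidegree `a α_i + b α_j`, for `d = (a, b)`. -/
def bideg (i j : Fin θ) (d : ℕ × ℕ) : Fin θ → ℕ := d.1 • δ θ i + d.2 • δ θ j

lemma sum_bideg (i j : Fin θ) (d : ℕ × ℕ) : ∑ k, bideg i j d k = d.1 + d.2 := by
  simp [bideg, δ, Finset.sum_add_distrib]

lemma bideg_one_zero (i j : Fin θ) : bideg i j (1, 0) = δ θ i := by simp [bideg]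

lemma bideg_zero_one (i j : Fin θ) : bideg i j (0, 1) = δ θ j := by simp [bideg]

lemma bideg_add (i j : Fin θ) (d e : ℕ × ℕ) : bideg i j (d + e) = bideg i j d + bideg i j e := by
  simp only [bideg, Prod.fst_add, Prod.snd_add, add_smul]
  abel

lemma qf_bideg (i j : Fin θ) (d e : ℕ × ℕ) : qf q (bideg i j d) (bideg i j e) =
    (q i i : ℂ) ^ (d.1 * e.1) * (q i j : ℂ) ^ (d.1 * e.2) * (q j i : ℂ) ^ (d.2 * e.1) *
      (q j j : ℂ) ^ (d.2 * e.2) := by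
  simp only [bideg, qf_add_left, qf_add_right, qf_smul_left, qf_smul_right, qf_δ]
  ring

/-- `d = (a, b)` is forbidden if a primitive element of degree `a α_i + b α_j` would span, together
with `x_i`, with `x_j` or with both, a braided vector space with infinite root system. -/
def IsForbiddenDegree (q : Fin θ → Fin θ → ℂˣ) (i j : Fin θ) (d : ℕ × ℕ) : Prop :=
  ¬ FiniteRootSystem (braidingOf q (bideg i j ∘ ![d, (1, 0)])) ∨
    ¬ FiniteRootSystem (braidingOf q (bideg i j ∘ ![d, (0, 1)])) ∨
    ¬ FiniteRootSystem (braidingOf q (bideg i j ∘ ![d, (1, 0), (0, 1)]))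

namespace IsPreNicholsIdeal

lemma disjoint_Wfil_one_comap_lift_cons (hI : IsPreNicholsIdeal S I) {m n : ℕ}
    {e : Fin m → Fin θ} (he : Function.Injective e) {u : TV θ} (hu : u ∈ homogTot θ n) (hn : 2 ≤ n)
    (huI : u ∉ I) :
    Disjoint (Wfil (m + 1) 1) (I.comap (FreeAlgebra.lift ℂ
      (Fin.cons u (gen θ ∘ e) : Fin (m + 1) → TV θ)).toLinearMap) := by
  rw [Submodule.disjoint_def]
  intro x hx hxI
  have wordCoeff_u : ∀ v : List (Fin θ), v.length ≤ 1 → wordCoeff v u = 0 := fun v hv =>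
    wordCoeff_eq_zero_of_mem_wordSpan (by omega) hu
  have lift_x : wordCoeff [] x • 1 +
      (wordCoeff [0] x • u + ∑ a : Fin m, wordCoeff [a.succ] x • gen θ (e a)) ∈ I := by
    rw [Submodule.mem_comap, AlgHom.toLinearMap_apply,
      eq_wordCoeff_smul_add_sum_of_mem_Wfil_one hx] at hxI
    simpa only [map_add, map_smul, map_one, map_sum, lift_gen, Fin.sum_univ_succ, Fin.cons_zero,
      Fin.cons_succ, Function.comp_apply] using hxI
  have coeff_nil : wordCoeff [] x = 0 := by
    have := (Submodule.mem_dualAnnihilator _).1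
      (hI.wordCoeff_mem_dualAnnihilator (v := []) (by simp)) _ lift_x
    simpa [wordCoeff_u, wordCoeff_nil_gen, wordCoeff_nil_one] using this
  have coeff_succ : ∀ a : Fin m, wordCoeff [a.succ] x = 0 := fun a => by
    have := (Submodule.mem_dualAnnihilator _).1
      (hI.wordCoeff_mem_dualAnnihilator (v := [e a]) (by simp)) _ lift_x
    simpa [wordCoeff_u, coeff_nil, ← wordElem_singleton, wordCoeff_wordElem, he.eq_iff] using this
  have coeff_zero : wordCoeff [0] x = 0 := by
    by_contra hc
    simp only [coeff_nil, coeff_succ, zero_smul, Finset.sum_const_zero, zero_add, add_zero]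
      at lift_x
    exact huI ((I.smul_mem_iff hc).1 lift_x)
  rw [eq_wordCoeff_smul_add_sum_of_mem_Wfil_one hx]
  simp [Fin.sum_univ_succ, coeff_nil, coeff_succ, coeff_zero]

lemma mem_of_isPrimitiveMod (hI : IsPreNicholsIdeal S I) (hGK : FinGK I) (hAAH : AAH) {m : ℕ}
    {β : Fin (m + 1) → Fin θ → ℕ} {e : Fin m → Fin θ} (he : Function.Injective e)
    (hβ : ∀ a : Fin m, β a.succ = δ θ (e a)) {u : TV θ} (hu : u ∈ homogD θ (β 0))
    (hd : 2 ≤ ∑ k, β 0 k) (hp : IsPrimitiveMod q I u)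
    (hF : ¬ FiniteRootSystem (braidingOf q β)) : u ∈ I := by
  by_contra huI
  let y : Fin (m + 1) → TV θ := Fin.cons u (gen θ ∘ e)
  have hind : Disjoint (Wfil (m + 1) 1) (I.comap (FreeAlgebra.lift ℂ y).toLinearMap) :=
    hI.disjoint_Wfil_one_comap_lift_cons he (homogD_le_homogTot _ hu) hd huI
  refine hF (hI.finiteRootSystem_braidingOf hGK hAAH (fun a => ?_) (fun a => ?_) hind)
  · induction a using Fin.cases with
    | zero => exact hu
    | succ a => rw [hβ]; exact gen_mem_homogD _
  · induction a using Fin.cases with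
    | zero => exact hp
    | succ a => exact isPrimitiveMod_gen _

lemma mem_of_isForbiddenDegree (hI : IsPreNicholsIdeal S I) (hGK : FinGK I) (hAAH : AAH)
    {i j : Fin θ} (hij : i ≠ j) {d : ℕ × ℕ} (h : IsForbiddenDegree q i j d) (hd : 2 ≤ d.1 + d.2)
    {u : TV θ} (hu : u ∈ homogD θ (bideg i j d)) (hp : IsPrimitiveMod q I u) : u ∈ I := by
  rw [← sum_bideg i j] at hd
  rcases h with h | h | h
  · exact hI.mem_of_isPrimitiveMod hGK hAAH (β := bideg i j ∘ ![d, (1, 0)])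
      (e := ![i]) (Function.injective_of_subsingleton _)
      (Fin.forall_fin_one.2 (bideg_one_zero i j)) hu hd hp h
  · exact hI.mem_of_isPrimitiveMod hGK hAAH (β := bideg i j ∘ ![d, (0, 1)])
      (e := ![j]) (Function.injective_of_subsingleton _)
      (Fin.forall_fin_one.2 (bideg_zero_one i j)) hu hd hp h
  · refine hI.mem_of_isPrimitiveMod hGK hAAH (β := bideg i j ∘ ![d, (1, 0), (0, 1)])
      (e := ![i, j]) (fun k l hkl => ?_) (fun k => ?_) hu hd hp h
    · fin_cases k <;> fin_cases l <;> simp_all [hij.symm]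
    · fin_cases k
      exacts [bideg_one_zero i j, bideg_zero_one i j]

end IsPreNicholsIdeal

end ForbiddenDegree

/-! ### The rank-two diagrams and their forbidden degrees -/

section RankTwoDiagram

/-- The exponents of the labels of the diagram spanned by elements of degrees
`s k = a_k α_i + b_k α_j`, when the diagram of `i` and `j` has the exponents `D₁`, `T`, `D₂`. -/
def LabelExponents.ofDegrees (D₁ T D₂ : ℤ) {m : ℕ} (s : Fin m → ℕ × ℕ) : LabelExponents m where
  vertex k := (s k).1 ^ 2 * D₁ + (s k).1 * (s k).2 * T + (s k).2 ^ 2 * D₂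
  edge k l := 2 * (s k).1 * (s l).1 * D₁ + ((s k).1 * (s l).2 + (s k).2 * (s l).1) * T +
    2 * (s k).2 * (s l).2 * D₂

variable {θ : ℕ}

/-- The Dynkin diagram of the vertices `i ≠ j` is `(ω ^ D₁, ω ^ T, ω ^ D₂)`, for a primitive `N`-th
root of unity `ω`. -/
structure HasRankTwoDiagram (q : Fin θ → Fin θ → ℂˣ) (i j : Fin θ) (ω : ℂ) (N D₁ T D₂ : ℕ) :
    Prop where
  ne : i ≠ j
  isPrimitiveRoot : IsPrimitiveRoot ω N
  left : (q i i : ℂ) = ω ^ D₁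
  edge : (q i j * q j i : ℂ) = ω ^ T
  right : (q j j : ℂ) = ω ^ D₂

variable {q : Fin θ → Fin θ → ℂˣ} {i j : Fin θ} {ω : ℂ} {N D₁ T D₂ : ℕ}

lemma HasRankTwoDiagram.qf_mul_qf (h : HasRankTwoDiagram q i j ω N D₁ T D₂) (d e : ℕ × ℕ) :
    qf q (bideg i j d) (bideg i j e) * qf q (bideg i j e) (bideg i j d) =
      ω ^ (2 * d.1 * e.1 * D₁ + (d.1 * e.2 + d.2 * e.1) * T + 2 * d.2 * e.2 * D₂) := by
  simp only [pow_add, pow_mul', ← h.left, ← h.edge, ← h.right, qf_bideg]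
  ring

lemma HasRankTwoDiagram.qf_self (h : HasRankTwoDiagram q i j ω N D₁ T D₂) (d : ℕ × ℕ) :
    qf q (bideg i j d) (bideg i j d) = ω ^ (d.1 ^ 2 * D₁ + d.1 * d.2 * T + d.2 ^ 2 * D₂) := by
  simp only [pow_add, pow_mul', ← h.left, ← h.edge, ← h.right, qf_bideg]
  ring

lemma HasRankTwoDiagram.hasLabels (h : HasRankTwoDiagram q i j ω N D₁ T D₂) {m : ℕ}
    (s : Fin m → ℕ × ℕ) :
    HasLabels ω (braidingOf q (bideg i j ∘ s)) (.ofDegrees D₁ T D₂ s) where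
  vertex k := by
    rw [braidingOf_apply, Function.comp_apply, h.qf_self, ← zpow_natCast]
    rfl
  edge k l _ := by
    rw [qtil, braidingOf_apply, braidingOf_apply, Function.comp_apply, Function.comp_apply,
      h.qf_mul_qf, ← zpow_natCast]
    rfl

lemma HasRootAt.ufoSeven_loop {p : Fin 2 → Fin 2 → ℂˣ} {β : Fin 2 → ℤ}
    (h : HasRootAt ω p ⟨![6, 1], fun _ _ => 3⟩ β) (hω : IsPrimitiveRoot ω 12) :
    HasRootAt ω p ⟨![6, 1], fun _ _ => 3⟩ ![8 * β 1 - 11 * β 0, 61 * β 1 - 84 * β 0] := by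
  have h12 : 12 ≠ 0 := by decide
  have h₁ := h.reflect hω h12 (L' := ⟨![6, 10], fun _ _ => 9⟩) 0 ![2, -1] (by decide) (by decide)
  have h₂ := h₁.reflect hω h12 (L' := ⟨![1, 10], fun _ _ => 11⟩) 1 ![-5, 2] (by decide) (by decide)
  have h₃ := h₂.reflect hω h12 (L' := ⟨![1, 10], fun _ _ => 11⟩) 0 ![2, -1] (by decide) (by decide)
  have h₄ := h₃.reflect hω h12 (L' := ⟨![6, 10], fun _ _ => 9⟩) 1 ![-5, 2] (by decide) (by decide)
  have h₅ := h₄.reflect hω h12 (L' := ⟨![6, 1], fun _ _ => 3⟩) 0 ![2, -1] (by decide) (by decide)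
  have h₆ := h₅.reflect hω h12 (L' := ⟨![6, 1], fun _ _ => 3⟩) 1 ![-9, 2] (by decide) (by decide)
  convert h₆ using 1
  funext k
  fin_cases k <;> simp <;> ring

lemma HasRootAt.gTwo_loop {p : Fin 2 → Fin 2 → ℂˣ} {β : Fin 2 → ℤ}
    (h : HasRootAt ω p ⟨![1, 1], fun _ _ => 2⟩ β) (hω : IsPrimitiveRoot ω 6) :
    HasRootAt ω p ⟨![1, 1], fun _ _ => 2⟩ ![4 * β 1 - β 0, 15 * β 1 - 4 * β 0] := by
  have h6 : 6 ≠ 0 := by decide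
  have h₁ := h.reflect hω h6 (L' := ⟨![1, 1], fun _ _ => 2⟩) 0 ![2, -4] (by decide) (by decide)
  have h₂ := h₁.reflect hω h6 (L' := ⟨![1, 1], fun _ _ => 2⟩) 1 ![-4, 2] (by decide) (by decide)
  convert h₂ using 1
  funext k
  fin_cases k <;> simp <;> ring

/-- The exponents of the labels of the chain with vertices `ω`, `ω`, `-1` and edges `ω⁻¹`, `-1`,
where `ω` is a primitive sixth root of unity. -/
def gTwoChain : LabelExponents 3 := ⟨![1, 1, 3], ![![0, 5, 0], ![5, 0, 3], ![0, 3, 0]]⟩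

lemma HasRootAt.gTwoChain_loop {p : Fin 3 → Fin 3 → ℂˣ} {β : Fin 3 → ℤ}
    (h : HasRootAt ω p gTwoChain β) (hω : IsPrimitiveRoot ω 6) (h₁ : β 1 = 2 * β 2)
    (h₀ : β 0 = β 2 + 1) : HasRootAt ω p gTwoChain (β - ![2, 4, 2]) := by
  have s₀ {γ : Fin 3 → ℤ} (h : HasRootAt ω p gTwoChain γ) :=
    h.reflect hω (by decide) (L' := gTwoChain) 0 ![2, -1, 0] (by decide) (by decide)
  have s₁ {γ : Fin 3 → ℤ} (h : HasRootAt ω p gTwoChain γ) :=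
    h.reflect hω (by decide) (L' := gTwoChain) 1 ![-1, 2, -3] (by decide) (by decide)
  have s₂ {γ : Fin 3 → ℤ} (h : HasRootAt ω p gTwoChain γ) :=
    h.reflect hω (by decide) (L' := gTwoChain) 2 ![0, -1, 2] (by decide) (by decide)
  convert s₁ (s₂ (s₁ (s₂ (s₁ (s₀ h))))) using 1
  funext k
  fin_cases k <;> simp [Fin.sum_univ_three, Pi.single_apply, h₁, h₀] <;> ring

lemma not_finiteRootSystem_of_gTwoChain {p : Fin 3 → Fin 3 → ℂˣ} (hω : IsPrimitiveRoot ω 6)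
    (h : HasLabels ω p gTwoChain) : ¬ FiniteRootSystem p := by
  refine not_finiteRootSystem_of_forall_exists_lt (ω := ω) (L := gTwoChain)
    (R := {β | HasRootAt ω p gTwoChain β ∧ β 1 = 2 * β 2 ∧ β 0 = β 2 + 1})
    (fun β => -β 2) (fun β hβ => hβ.1) ⟨_, h.hasRootAt 0, by simp, by simp⟩ ?_
  rintro β ⟨hβ, h₁, h₀⟩
  exact ⟨_, ⟨hβ.gTwoChain_loop hω h₁ h₀, by simp; lia, by simp; lia⟩, by simp⟩

namespace HasRankTwoDiagram

lemma not_finiteRootSystem [NeZero N] (h : HasRankTwoDiagram q i j ω N D₁ T D₂) {m : ℕ}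
    (s : Fin (m + 2) → ℕ × ℕ)
    (h0 : (N : ℤ) ∣ (LabelExponents.ofDegrees D₁ T D₂ s).vertex 0)
    (h1 : ¬ (N : ℤ) ∣ (LabelExponents.ofDegrees D₁ T D₂ s).edge 0 1) :
    ¬ FiniteRootSystem (braidingOf q (bideg i j ∘ s)) :=
  ((h.hasLabels s).hasRootAt 0).not_finiteRootSystem h.isPrimitiveRoot (NeZero.ne N) 0 1 zero_ne_one
    h0 h1

lemma isForbiddenDegree_ufoSeven_three_zero (h : HasRankTwoDiagram q i j ω 12 4 11 1) :
    IsForbiddenDegree q i j (3, 0) :=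
  .inr <| .inl <| h.not_finiteRootSystem _ (by decide) (by decide)

lemma isForbiddenDegree_ufoSeven_one_two (h : HasRankTwoDiagram q i j ω 12 4 11 1) :
    IsForbiddenDegree q i j (1, 2) := by
  have hlabels := (h.hasLabels ![(1, 2), (0, 1)]).congr h.isPrimitiveRoot (by decide)
    (L' := ⟨![6, 1], fun _ _ => 3⟩) (by decide) (by decide)
  refine .inr <| .inl <| not_finiteRootSystem_of_forall_exists_lt (ω := ω)
    (L := ⟨![6, 1], fun _ _ => 3⟩) (R := {β | HasRootAt ω _ _ β ∧ 0 ≤ β 0 ∧ 2 * β 0 < β 1})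
    (· 0) (fun β hβ => hβ.1) ⟨_, hlabels.hasRootAt 1, by simp, by simp⟩ ?_
  rintro β ⟨hβ, h₀, h₁⟩
  exact ⟨_, ⟨hβ.ufoSeven_loop h.isPrimitiveRoot, by simp; lia, by simp; lia⟩, by simp; lia⟩

lemma isForbiddenDegree_ufoEight_zero_two (h : HasRankTwoDiagram q i j ω 12 8 3 6) :
    IsForbiddenDegree q i j (0, 2) :=
  .inl <| h.not_finiteRootSystem _ (by decide) (by decide)

lemma isForbiddenDegree_ufoEight_three_zero (h : HasRankTwoDiagram q i j ω 12 8 3 6) :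
    IsForbiddenDegree q i j (3, 0) :=
  .inr <| .inl <| h.not_finiteRootSystem _ (by decide) (by decide)

lemma isForbiddenDegree_ufoEight_four_three (h : HasRankTwoDiagram q i j ω 12 8 3 6) :
    IsForbiddenDegree q i j (4, 3) :=
  .inl <| (((h.hasLabels _).hasRootAt 0).reflect h.isPrimitiveRoot (by decide)
    (L' := ⟨![0, 8], fun _ _ => 3⟩) 1 ![-2, 2] (by decide) (by decide)).not_finiteRootSystem
    h.isPrimitiveRoot (by decide) 0 1 (by decide) (by decide) (by decide)

lemma isForbiddenDegree_ufoNine_four_zero (h : HasRankTwoDiagram q i j ω 24 6 1 23) :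
    IsForbiddenDegree q i j (4, 0) :=
  .inr <| .inl <| h.not_finiteRootSystem _ (by decide) (by decide)

lemma isForbiddenDegree_ufoNine_one_two (h : HasRankTwoDiagram q i j ω 24 6 1 23) :
    IsForbiddenDegree q i j (1, 2) :=
  .inl <| ((((h.hasLabels _).hasRootAt 0).reflect h.isPrimitiveRoot (by decide)
    (L' := ⟨![4, 8], fun _ _ => 18⟩) 0 ![2, -5] (by decide) (by decide)).reflect h.isPrimitiveRoot
    (by decide) (L' := ⟨![0, 8], fun _ _ => 22⟩) 1 ![-2, 2] (by decide)
    (by decide)).not_finiteRootSystem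
    h.isPrimitiveRoot (by decide) 0 1 (by decide) (by decide) (by decide)

lemma isForbiddenDegree_ufoEleven_zero_three (h : HasRankTwoDiagram q i j ω 30 1 27 20) :
    IsForbiddenDegree q i j (0, 3) :=
  .inl <| h.not_finiteRootSystem _ (by decide) (by decide)

lemma isForbiddenDegree_ufoEleven_two_two (h : HasRankTwoDiagram q i j ω 30 1 27 20) :
    IsForbiddenDegree q i j (2, 2) :=
  .inr <| .inl <| (((h.hasLabels _).hasRootAt 0).reflect h.isPrimitiveRoot (by decide)
    (L' := ⟨![0, 20], fun _ _ => 26⟩) 1 ![-2, 2] (by decide) (by decide)).not_finiteRootSystem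
    h.isPrimitiveRoot (by decide) 0 1 (by decide) (by decide) (by decide)

lemma isForbiddenDegree_ufoEleven_four_one (h : HasRankTwoDiagram q i j ω 30 1 27 20) :
    IsForbiddenDegree q i j (4, 1) :=
  .inr <| .inr <| ((((h.hasLabels _).hasRootAt 0).reflect h.isPrimitiveRoot (by decide)
    (L' := ⟨![10, 15, 20], ![![0, 5, 12], ![5, 0, 13], ![12, 13, 0]]⟩) 2 ![-2, -2, 2] (by decide)
    (by decide)).reflect h.isPrimitiveRoot (by decide)
    (L' := ⟨![0, 15, 18], ![![0, 25, 0], ![25, 0, 17], ![0, 17, 0]]⟩) 1 ![-1, 2, -1] (by decide)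
    (by decide)).not_finiteRootSystem
    h.isPrimitiveRoot (by decide) 0 1 (by decide) (by decide) (by decide)

lemma isForbiddenDegree_brj_zero_three (h : HasRankTwoDiagram q i j ω 18 1 16 12) :
    IsForbiddenDegree q i j (0, 3) :=
  .inl <| h.not_finiteRootSystem _ (by decide) (by decide)

lemma isForbiddenDegree_brj_two_two (h : HasRankTwoDiagram q i j ω 18 1 16 12) :
    IsForbiddenDegree q i j (2, 2) :=
  .inr <| .inl <| (((h.hasLabels _).hasRootAt 0).reflect h.isPrimitiveRoot (by decide)
    (L' := ⟨![0, 12], fun _ _ => 16⟩) 1 ![-2, 2] (by decide) (by decide)).not_finiteRootSystem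
    h.isPrimitiveRoot (by decide) 0 1 (by decide) (by decide) (by decide)

lemma isForbiddenDegree_brj_three_one (h : HasRankTwoDiagram q i j ω 18 1 16 12) :
    IsForbiddenDegree q i j (3, 1) :=
  .inl <| (((h.hasLabels _).hasRootAt 0).reflect h.isPrimitiveRoot (by decide)
    (L' := ⟨![15, 0], fun _ _ => 8⟩) 0 ![2, -5] (by decide) (by decide)).not_finiteRootSystem
    h.isPrimitiveRoot (by decide) 1 0 (by decide) (by decide) (by decide)

lemma isForbiddenDegree_gTwo_one_two (h : HasRankTwoDiagram q i j ω 6 1 3 3) :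
    IsForbiddenDegree q i j (1, 2) := by
  have hlabels := (h.hasLabels ![(1, 2), (1, 0)]).congr h.isPrimitiveRoot (by decide)
    (L' := ⟨![1, 1], fun _ _ => 2⟩) (by decide) (by decide)
  refine .inl <| not_finiteRootSystem_of_forall_exists_lt (ω := ω)
    (L := ⟨![1, 1], fun _ _ => 2⟩) (R := {β | HasRootAt ω _ _ β ∧ 0 ≤ β 0 ∧ β 0 < β 1})
    (· 0) (fun β hβ => hβ.1) ⟨_, hlabels.hasRootAt 1, by simp, by simp⟩ ?_
  rintro β ⟨hβ, h₀, h₁⟩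
  exact ⟨_, ⟨hβ.gTwo_loop h.isPrimitiveRoot, by simp; lia, by simp; lia⟩, by simp; lia⟩

lemma isForbiddenDegree_gTwo_four_one (h : HasRankTwoDiagram q i j ω 6 1 3 3) :
    IsForbiddenDegree q i j (4, 1) :=
  .inr <| .inr <| not_finiteRootSystem_of_gTwoChain h.isPrimitiveRoot <|
    (h.hasLabels _).congr h.isPrimitiveRoot (by decide) (by decide) (by decide)

lemma isForbiddenDegree_gTwo_four_three (h : HasRankTwoDiagram q i j ω 6 1 3 3) :
    IsForbiddenDegree q i j (4, 3) :=
  .inr <| .inr <| not_finiteRootSystem_of_gTwoChain h.isPrimitiveRoot <|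
    (h.hasLabels _).congr h.isPrimitiveRoot (by decide) (by decide) (by decide)

end HasRankTwoDiagram

end RankTwoDiagram

/-! ### Gaussian binomial coefficients -/

open Finset.HasAntidiagonal (antidiagonal mem_antidiagonal)

section

variable {R : Type*} [CommRing R]

/-- The Gaussian binomial coefficient of `k + m` over `k` at `Q`. Indexing by the two parts of
`k + m` keeps its recursion free of truncated subtraction. -/
def gaussBinom (Q : R) : ℕ → ℕ → R
  | 0, _ => 1
  | _ + 1, 0 => 1
  | k + 1, m + 1 => gaussBinom Q k (m + 1) + Q ^ (k + 1) * gaussBinom Q (k + 1) m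

@[simp]
lemma gaussBinom_zero_left (Q : R) (m : ℕ) : gaussBinom Q 0 m = 1 := by
  rw [gaussBinom]

@[simp]
lemma gaussBinom_zero_right (Q : R) (k : ℕ) : gaussBinom Q k 0 = 1 := by
  cases k <;> rw [gaussBinom]

lemma gaussBinom_succ_succ (Q : R) (k m : ℕ) : gaussBinom Q (k + 1) (m + 1) =
    gaussBinom Q k (m + 1) + Q ^ (k + 1) * gaussBinom Q (k + 1) m := by
  rw [gaussBinom]

lemma pow_sub_one_mul_gaussBinom_comm (Q : R) : ∀ k m : ℕ,
    (Q ^ (k + 1) - 1) * gaussBinom Q (k + 1) m = (Q ^ (m + 1) - 1) * gaussBinom Q k (m + 1)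
  | 0, 0 => by simp
  | 0, m + 1 => by
    have h := pow_sub_one_mul_gaussBinom_comm Q 0 m
    simp only [gaussBinom_succ_succ, gaussBinom_zero_left] at h ⊢
    linear_combination Q * h
  | k + 1, 0 => by
    have h := pow_sub_one_mul_gaussBinom_comm Q k 0
    simp only [gaussBinom_succ_succ, gaussBinom_zero_right] at h ⊢
    linear_combination h
  | k + 1, m + 1 => by
    have h₁ := pow_sub_one_mul_gaussBinom_comm Q (k + 1) m
    have h₂ := pow_sub_one_mul_gaussBinom_comm Q k (m + 1)
    rw [gaussBinom_succ_succ Q (k + 1), gaussBinom_succ_succ Q k (m + 1)]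
    linear_combination Q ^ (k + 2) * h₁ + h₂

lemma gaussBinom_succ_succ' (Q : R) (k m : ℕ) : gaussBinom Q (k + 1) (m + 1) =
    Q ^ (m + 1) * gaussBinom Q k (m + 1) + gaussBinom Q (k + 1) m := by
  rw [gaussBinom_succ_succ]
  linear_combination pow_sub_one_mul_gaussBinom_comm Q k m

lemma pow_sub_one_mul_gaussBinom_succ_succ (Q : R) (k m : ℕ) :
    (Q ^ (k + 1) - 1) * gaussBinom Q (k + 1) (m + 1) =
      (Q ^ (k + m + 2) - 1) * gaussBinom Q k (m + 1) := by
  rw [gaussBinom_succ_succ]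
  linear_combination Q ^ (k + 1) * pow_sub_one_mul_gaussBinom_comm Q k m

lemma gaussBinom_succ_succ_eq_zero [IsDomain R] {Q : R} {k m : ℕ}
    (h : IsPrimitiveRoot Q (k + m + 2)) : gaussBinom Q (k + 1) (m + 1) = 0 := by
  have hk : Q ^ (k + 1) - 1 ≠ 0 :=
    sub_ne_zero.2 (h.pow_ne_one_of_pos_of_lt k.succ_ne_zero (by omega))
  refine (mul_eq_zero.1 ?_).resolve_left hk
  rw [pow_sub_one_mul_gaussBinom_succ_succ, h.pow_eq_one, sub_self, zero_mul]

lemma sum_antidiagonal_succ_of_pascal {M : Type*} [AddCommGroup M] [Module R M]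
    {c α β : ℕ → ℕ → R} (hc : ∀ k m, c (k + 1) (m + 1) =
      α k (m + 1) * c k (m + 1) + β (k + 1) m * c (k + 1) m)
    (hk : ∀ k, c (k + 1) 0 = α k 0 * c k 0) (hm : ∀ m, c 0 (m + 1) = β 0 m * c 0 m)
    (F : ℕ → ℕ → M) (n : ℕ) :
    ∑ p ∈ antidiagonal (n + 1), c p.1 p.2 • F p.1 p.2 =
      ∑ p ∈ antidiagonal n,
        c p.1 p.2 • (α p.1 p.2 • F (p.1 + 1) p.2 + β p.1 p.2 • F p.1 (p.2 + 1)) := by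
  let l : ℕ × ℕ → M := fun p => (Nat.casesOn p.1 0 fun k => α k p.2 * c k p.2 : R) • F p.1 p.2
  let r : ℕ × ℕ → M := fun p => (Nat.casesOn p.2 0 fun m => β p.1 m * c p.1 m : R) • F p.1 p.2
  have hlr : ∀ p ∈ antidiagonal (n + 1), c p.1 p.2 • F p.1 p.2 = l p + r p := by
    rintro ⟨_ | k, _ | m⟩ hp <;> simp_all [l, r, add_smul]
  have hl : ∑ p ∈ antidiagonal (n + 1), l p =
      ∑ p ∈ antidiagonal n, (α p.1 p.2 * c p.1 p.2) • F (p.1 + 1) p.2 := by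
    simp [Finset.Nat.sum_antidiagonal_succ, l]
  have hr : ∑ p ∈ antidiagonal (n + 1), r p =
      ∑ p ∈ antidiagonal n, (β p.1 p.2 * c p.1 p.2) • F p.1 (p.2 + 1) := by
    simp [Finset.Nat.sum_antidiagonal_succ', r]
  rw [Finset.sum_congr rfl hlr, Finset.sum_add_distrib, hl, hr, ← Finset.sum_add_distrib]
  simp only [smul_add, smul_smul, mul_comm]

variable {E : Type*} [Ring E] [Algebra R E]

lemma mul_pow_of_mul_eq_smul {A B : E} {r : R} (h : B * A = r • (A * B)) (k : ℕ) :
    B * A ^ k = r ^ k • (A ^ k * B) := by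
  induction k with
  | zero => simp
  | succ k ih =>
    rw [pow_succ, ← mul_assoc, ih, smul_mul_assoc, mul_assoc, h, mul_smul_comm, smul_smul,
      ← pow_succ, mul_assoc]

lemma add_pow_of_mul_eq_smul {A B : E} {r : R} (h : B * A = r • (A * B)) (n : ℕ) :
    (A + B) ^ n = ∑ p ∈ antidiagonal n, gaussBinom r p.1 p.2 • (A ^ p.1 * B ^ p.2) := by
  induction n with
  | zero => simp
  | succ n ih =>
    rw [pow_succ', ih, Finset.mul_sum, sum_antidiagonal_succ_of_pascal (α := fun _ _ => 1)
      (β := fun k _ => r ^ k) (fun k m => by rw [gaussBinom_succ_succ, one_mul])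
      (by simp) (by simp) fun k m => A ^ k * B ^ m]
    refine Finset.sum_congr rfl fun p _ => ?_
    rw [mul_smul_comm, add_mul, ← mul_assoc B, mul_pow_of_mul_eq_smul h, one_smul, pow_succ',
      pow_succ', smul_mul_assoc, mul_assoc, mul_assoc]

lemma sum_antidiagonal_gaussBinom_of_isPrimitiveRoot [IsDomain R] {M : Type*} [AddCommGroup M]
    [Module R M] {Q : R} {n : ℕ} (hQ : IsPrimitiveRoot Q n) (hn : 0 < n) (F : ℕ → ℕ → M) :
    ∑ p ∈ antidiagonal n, gaussBinom Q p.1 p.2 • F p.1 p.2 = F n 0 + F 0 n := by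
  rw [← Finset.sum_subset (s₁ := {(n, 0), (0, n)}), Finset.sum_pair (by simp [hn.ne'])]
  · simp
  · simp [Finset.insert_subset_iff]
  · rintro ⟨_ | k, _ | m⟩ hp hp'
    case succ.succ =>
      obtain rfl : k + m + 2 = n := by rw [← mem_antidiagonal.1 hp]; omega
      rw [gaussBinom_succ_succ_eq_zero hQ, zero_smul]
    all_goals simp_all

lemma add_pow_eq_add_pow_of_isPrimitiveRoot [IsDomain R] {A B : E} {r : R} {n : ℕ}
    (h : B * A = r • (A * B)) (hr : IsPrimitiveRoot r n) (hn : 0 < n) :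
    (A + B) ^ n = A ^ n + B ^ n := by
  rw [add_pow_of_mul_eq_smul h,
    sum_antidiagonal_gaussBinom_of_isPrimitiveRoot hr hn fun k m => A ^ k * B ^ m]
  simp

end

/-! ### Iterated skew derivations -/

lemma mul_mul_of_mul_eq {G : Type*} [Semigroup G] {x y z : G} (h : x * y = z) (w : G) :
    x * (y * w) = z * w := by
  rw [← mul_assoc, h]

section IsAdSeq

variable {R E : Type*} [CommRing R] [Ring E] [Algebra R E] {Q a b : R} {X : E} {Y Z : ℕ → E}

/-- The sequence `Y m = (ad_c X)^m (Y 0)` of iterated braided adjoint actions of `X`, where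
`Q = q(deg X, deg X)` and `a = q(deg X, deg (Y 0))`. -/
structure IsAdSeq (Q a : R) (X : E) (Y : ℕ → E) : Prop where
  mul (m : ℕ) : X * Y m = (Q ^ m * a) • (Y m * X) + Y (m + 1)

/-- The sequence `(ad_c X)^n (Y 0 * Z 0)`, expanded by the quantum Leibniz rule for
`Y k = (ad_c X)^k (Y 0)` and `Z m = (ad_c X)^m (Z 0)`. -/
def adSeqMul (Q a : R) (Y Z : ℕ → E) (n : ℕ) : E :=
  ∑ p ∈ antidiagonal n, gaussBinom Q p.1 p.2 • (a ^ p.2 • (Y p.1 * Z p.2))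

lemma adSeqMul_zero (Q a : R) (Y Z : ℕ → E) : adSeqMul Q a Y Z 0 = Y 0 * Z 0 := by
  simp [adSeqMul]

lemma adSeqMul_one (Q a : R) (Y Z : ℕ → E) :
    adSeqMul Q a Y Z 1 = Y 1 * Z 0 + a • (Y 0 * Z 1) := by
  simp [adSeqMul, Finset.Nat.antidiagonal_succ, add_comm]

lemma adSeqMul_two (Q a : R) (Y Z : ℕ → E) : adSeqMul Q a Y Z 2 =
    Y 2 * Z 0 + ((1 + Q) * a) • (Y 1 * Z 1) + a ^ 2 • (Y 0 * Z 2) := by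
  simp only [adSeqMul, Finset.Nat.sum_antidiagonal_succ, Finset.HasAntidiagonal.antidiagonal_zero,
    Finset.sum_singleton, gaussBinom_succ_succ, gaussBinom_zero_left, gaussBinom_zero_right,
    Nat.reduceAdd]
  match_scalars <;> ring

lemma adSeqMul_three (Q a : R) (Y Z : ℕ → E) : adSeqMul Q a Y Z 3 =
    Y 3 * Z 0 + ((1 + Q + Q ^ 2) * a) • (Y 2 * Z 1) + ((1 + Q + Q ^ 2) * a ^ 2) • (Y 1 * Z 2) +
      a ^ 3 • (Y 0 * Z 3) := by
  simp only [adSeqMul, Finset.Nat.sum_antidiagonal_succ, Finset.HasAntidiagonal.antidiagonal_zero,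
    Finset.sum_singleton, gaussBinom_succ_succ, gaussBinom_zero_left, gaussBinom_zero_right,
    Nat.reduceAdd]
  match_scalars <;> ring

lemma adSeqMul_four (Q a : R) (Y Z : ℕ → E) : adSeqMul Q a Y Z 4 =
    Y 4 * Z 0 + ((1 + Q + Q ^ 2 + Q ^ 3) * a) • (Y 3 * Z 1) +
      ((1 + Q + 2 * Q ^ 2 + Q ^ 3 + Q ^ 4) * a ^ 2) • (Y 2 * Z 2) +
      ((1 + Q + Q ^ 2 + Q ^ 3) * a ^ 3) • (Y 1 * Z 3) + a ^ 4 • (Y 0 * Z 4) := by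
  simp only [adSeqMul, Finset.Nat.sum_antidiagonal_succ, Finset.HasAntidiagonal.antidiagonal_zero,
    Finset.sum_singleton, gaussBinom_succ_succ, gaussBinom_zero_left, gaussBinom_zero_right,
    Nat.reduceAdd]
  match_scalars <;> ring

namespace IsAdSeq

lemma eq_zero (h : IsAdSeq Q a X Y) (h₀ : Y 0 = 0) (n : ℕ) : Y n = 0 := by
  induction n with
  | zero => exact h₀
  | succ n ih => simpa [ih] using (h.mul n).symm

lemma smul (h : IsAdSeq Q a X Y) (r : R) : IsAdSeq Q a X fun n => r • Y n where
  mul m := by rw [mul_smul_comm, h.mul, smul_add, smul_mul_assoc, smul_comm]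

lemma add (hY : IsAdSeq Q a X Y) (hZ : IsAdSeq Q a X Z) : IsAdSeq Q a X fun n => Y n + Z n where
  mul m := by
    rw [mul_add, hY.mul, hZ.mul, add_mul, smul_add]
    abel

lemma shift (h : IsAdSeq Q a X Y) (k : ℕ) : IsAdSeq Q (Q ^ k * a) X fun n => Y (n + k) where
  mul m := by rw [h.mul, pow_add, mul_assoc, add_right_comm]

lemma isAdSeq_adSeqMul (hY : IsAdSeq Q a X Y) (hZ : IsAdSeq Q b X Z) :
    IsAdSeq Q (a * b) X (adSeqMul Q a Y Z) where
  mul n := by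
    rw [adSeqMul, adSeqMul,
      sum_antidiagonal_succ_of_pascal (α := fun _ _ => 1) (β := fun k _ => Q ^ k)
        (fun k m => by rw [gaussBinom_succ_succ, one_mul]) (by simp) (by simp)
        fun k m => a ^ m • (Y k * Z m),
      Finset.mul_sum, Finset.sum_mul, Finset.smul_sum, ← Finset.sum_add_distrib]
    refine Finset.sum_congr rfl fun p hp => ?_
    rw [← mem_antidiagonal.1 hp]
    simp only [mul_smul_comm, smul_mul_assoc, ← mul_assoc X, hY.mul, add_mul, mul_assoc _ X,
      hZ.mul, mul_add, mul_assoc]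
    match_scalars <;> ring

lemma eq_sum_pow_mul_mul_pow (h : IsAdSeq Q a X Y) (n : ℕ) :
    Y n = ∑ p ∈ antidiagonal n, gaussBinom Q p.1 p.2 •
      (((-a) ^ p.2 * Q ^ p.2.choose 2) • (X ^ p.1 * Y 0 * X ^ p.2)) := by
  induction n with
  | zero => simp
  | succ n ih =>
    rw [sum_antidiagonal_succ_of_pascal (α := fun _ _ => 1) (β := fun k _ => Q ^ k)
        (fun k m => by rw [gaussBinom_succ_succ, one_mul]) (by simp) (by simp)
        fun k m => ((-a) ^ m * Q ^ m.choose 2) • (X ^ k * Y 0 * X ^ m),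
      ← sub_eq_of_eq_add' (h.mul n), ih, Finset.mul_sum, Finset.sum_mul, Finset.smul_sum,
      ← Finset.sum_sub_distrib]
    refine Finset.sum_congr rfl fun p hp => ?_
    rw [← mem_antidiagonal.1 hp, Nat.choose_succ_succ, Nat.choose_one_right]
    simp only [mul_smul_comm, smul_mul_assoc, pow_succ' X p.1, pow_succ X p.2, mul_assoc]
    match_scalars <;> ring

lemma eq_zero_of_pow_eq_zero [IsDomain R] (h : IsAdSeq Q a X Y) {n : ℕ} (hQ : IsPrimitiveRoot Q n)
    (hn : 0 < n) (hX : X ^ n = 0) : Y n = 0 := by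
  rw [h.eq_sum_pow_mul_mul_pow, sum_antidiagonal_gaussBinom_of_isPrimitiveRoot hQ hn
    fun k m => ((-a) ^ m * Q ^ m.choose 2) • (X ^ k * Y 0 * X ^ m)]
  simp [hX]

end IsAdSeq

end IsAdSeq

section IsBraidedPair

variable {R E : Type*} [CommRing R] [Ring E] [Algebra R E] {Q a b s : R} {X X' : E}
  {Y Y' D : ℕ → E}

/-- `X`, `Y m` and `X'`, `Y' m` satisfy the relations between the two copies of `x_i` and
`(ad_c x_i)^m x_j` in a braided tensor square, with `Q = q_{ii}`, `a = q_{ij}`, `b = q_{ji}` and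
`s = q_{jj}`. -/
structure IsBraidedPair (Q a b s : R) (X : E) (Y : ℕ → E) (X' : E) (Y' : ℕ → E) : Prop where
  fst : IsAdSeq Q a X Y
  snd : IsAdSeq Q a X' Y'
  right_mul_left : X' * X = Q • (X * X')
  right_mul_left_seq (m : ℕ) : X' * Y m = (Q ^ m * a) • (Y m * X')
  right_seq_mul_left (k : ℕ) : Y' k * X = (Q ^ k * b) • (X * Y' k)
  right_seq_mul_left_seq (k m : ℕ) :
    Y' k * Y m = (Q ^ (k * m) * a ^ k * b ^ m * s) • (Y m * Y' k)

/-- `D m` satisfies the relations of the coproduct of `(ad_c x_i)^m x_j`, when `X`, `Y m` and `X'`,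
`Y' m` are the two copies of `x_i` and `(ad_c x_i)^m x_j` in a braided tensor square. -/
structure IsCoproductSeq (Q a : R) (X : E) (Y : ℕ → E) (X' : E) (Y' : ℕ → E) (D : ℕ → E) :
    Prop where
  zero : D 0 = Y 0 + Y' 0
  isAdSeq : IsAdSeq Q a (X + X') D

/-- The coefficient of `X ^ k * Y' m` in the coproduct of `(ad_c x_i)^(k + m) x_j`, where
`t = q_{ij} q_{ji}`. -/
def adCoproductCoeff (Q t : R) (k m : ℕ) : R :=
  gaussBinom Q k m * ∏ l ∈ Finset.range k, (1 - Q ^ (m + l) * t)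

lemma adCoproductCoeff_succ_succ (Q t : R) (k m : ℕ) : adCoproductCoeff Q t (k + 1) (m + 1) =
    (1 - Q ^ (k + 2 * (m + 1)) * t) * adCoproductCoeff Q t k (m + 1) +
      Q ^ (k + 1) * adCoproductCoeff Q t (k + 1) m := by
  have h : ∏ l ∈ Finset.range (k + 1), (1 - Q ^ (m + l) * t) =
      (1 - Q ^ m * t) * ∏ l ∈ Finset.range k, (1 - Q ^ (m + 1 + l) * t) := by
    simp only [Finset.prod_range_succ', add_zero, mul_comm, add_assoc, add_comm 1]
  rw [adCoproductCoeff, adCoproductCoeff, adCoproductCoeff, h, Finset.prod_range_succ]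
  linear_combination (∏ l ∈ Finset.range k, (1 - Q ^ (m + 1 + l) * t)) *
    (gaussBinom_succ_succ Q k m - Q ^ (m + 1 + k) * t * gaussBinom_succ_succ' Q k m)

namespace IsCoproductSeq

lemma eq_add_sum (hD : IsCoproductSeq Q a X Y X' Y' D) (h : IsBraidedPair Q a b s X Y X' Y')
    (n : ℕ) : D n = Y n +
      ∑ p ∈ antidiagonal n, adCoproductCoeff Q (a * b) p.1 p.2 • (X ^ p.1 * Y' p.2) := by
  induction n with
  | zero => simp [hD.zero, adCoproductCoeff]
  | succ n ih =>
    have hY : Y (n + 1) = (X + X') * Y n - (Q ^ n * a) • (Y n * (X + X')) := by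
      rw [add_mul, h.fst.mul, h.right_mul_left_seq, mul_add, smul_add]
      abel
    rw [sum_antidiagonal_succ_of_pascal (α := fun k m => 1 - Q ^ (k + 2 * m) * (a * b))
        (β := fun k _ => Q ^ k) (adCoproductCoeff_succ_succ Q (a * b))
        (fun k => by simp [adCoproductCoeff, Finset.prod_range_succ, mul_comm])
        (fun m => by simp [adCoproductCoeff]) fun k m => X ^ k * Y' m,
      ← sub_eq_of_eq_add' (hD.isAdSeq.mul n), ih, hY, mul_add, add_mul (Y n), smul_add,
      add_sub_add_comm, add_right_inj, Finset.mul_sum, Finset.sum_mul, Finset.smul_sum,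
      ← Finset.sum_sub_distrib]
    refine Finset.sum_congr rfl fun p hp => ?_
    rw [← mem_antidiagonal.1 hp]
    simp only [mul_smul_comm, smul_mul_assoc, add_mul, mul_add, mul_assoc, pow_succ,
      h.right_seq_mul_left, ← mul_assoc X', mul_pow_of_mul_eq_smul h.right_mul_left, h.snd.mul]
    simp only [← mul_assoc X, ← pow_succ', pow_succ, mul_assoc]
    match_scalars <;> ring

lemma eq_add (hD : IsCoproductSeq Q a X Y X' Y' D) (h : IsBraidedPair Q a b s X Y X' Y') {n : ℕ}
    (ht : Q ^ n * (a * b) = 1) : D (n + 1) = Y (n + 1) + Y' (n + 1) := by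
  rw [hD.eq_add_sum h, add_right_inj, Finset.Nat.sum_antidiagonal_succ, Finset.sum_eq_zero]
  · simp [adCoproductCoeff]
  · intro p hp
    have h₀ : ∏ l ∈ Finset.range (p.1 + 1), (1 - Q ^ (p.2 + l) * (a * b)) = 0 := by
      refine Finset.prod_eq_zero (Finset.self_mem_range_succ _) ?_
      rw [add_comm p.2, mem_antidiagonal.1 hp, ht, sub_self]
    rw [adCoproductCoeff, h₀, mul_zero, zero_smul]

lemma one (hD : IsCoproductSeq Q a X Y X' Y' D) (h : IsBraidedPair Q a b s X Y X' Y') :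
    D 1 = Y 1 + Y' 1 + (1 - a * b) • (X * Y' 0) := by
  rw [hD.eq_add_sum h]
  simp [Finset.Nat.antidiagonal_succ, adCoproductCoeff, add_assoc]

lemma two (hD : IsCoproductSeq Q a X Y X' Y' D) (h : IsBraidedPair Q a b s X Y X' Y') :
    D 2 = Y 2 + Y' 2 + ((1 + Q) * (1 - Q * (a * b))) • (X * Y' 1) +
      ((1 - a * b) * (1 - Q * (a * b))) • (X * (X * Y' 0)) := by
  rw [hD.eq_add_sum h]
  simp [Finset.Nat.antidiagonal_succ, adCoproductCoeff, Finset.prod_range_succ,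
    gaussBinom_succ_succ, pow_succ, mul_assoc, add_assoc]

end IsCoproductSeq

end IsBraidedPair

/-! ### Identities for the bracket of degree `4α_i + 3α_j` -/

section Identities

variable {R E : Type*} [CommRing R] [Ring E] [Algebra R E] {Q a b s : R} {X X' : E}
  {Y Y' D : ℕ → E}

/-- The element `[x_{iij}, x_{ij}]_c`, for `Y m` the element `(ad_c x_i)^m x_j` and `Q = q_{ii}`,
`a = q_{ij}`, `b = q_{ji}`, `s = q_{jj}`. -/
def bracketThreeTwo (Q a b s : R) (Y : ℕ → E) : E :=
  Y 2 * Y 1 - (Q ^ 2 * a ^ 2 * b * s) • (Y 1 * Y 2)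

/-- The element `[[x_{iij}, x_{ij}]_c, x_{ij}]_c`, for `Y m` the element `(ad_c x_i)^m x_j` and
`Q = q_{ii}`, `a = q_{ij}`, `b = q_{ji}`, `s = q_{jj}`. -/
def bracketFourThree (Q a b s : R) (Y : ℕ → E) : E :=
  bracketThreeTwo Q a b s Y * Y 1 -
    (Q ^ 3 * a ^ 3 * b ^ 2 * s ^ 2) • (Y 1 * bracketThreeTwo Q a b s Y)

/-- The sequence `(ad_c x_i)^n` of `x_{ij} x_j - q_{ij} q_{jj} x_j x_{ij}`, the quantum Serre
element of degree `α_i + 2α_j`. -/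
def serreSeq (Q a s : R) (Y : ℕ → E) (n : ℕ) : E :=
  adSeqMul Q (Q ^ 1 * a) (fun k => Y (k + 1)) Y n - (a * s) • adSeqMul Q a Y (fun k => Y (k + 1)) n

/-- The sequence `(ad_c x_i)^n` of `x_{iij} x_j + c q_{ij} x_{ij}^2 + d q_{ij}^2 x_j x_{iij}`, which
is primitive for suitable `c` and `d` in types `ufo(11)` and `brj(2,3)`. -/
def quadSeq (Q a c d : R) (Y : ℕ → E) (n : ℕ) : E :=
  adSeqMul Q (Q ^ 2 * a) (fun k => Y (k + 2)) Y n +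
    (c * a) • adSeqMul Q (Q ^ 1 * a) (fun k => Y (k + 1)) (fun k => Y (k + 1)) n +
    (d * a ^ 2) • adSeqMul Q a Y (fun k => Y (k + 2)) n

lemma serreSeq_zero (Q a s : R) (Y : ℕ → E) :
    serreSeq Q a s Y 0 = Y 1 * Y 0 - (a * s) • (Y 0 * Y 1) := by
  simp only [serreSeq, adSeqMul_zero, zero_add]

lemma quadSeq_zero (Q a c d : R) (Y : ℕ → E) :
    quadSeq Q a c d Y 0 = Y 2 * Y 0 + (c * a) • (Y 1 * Y 1) + (d * a ^ 2) • (Y 0 * Y 2) := by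
  simp only [quadSeq, adSeqMul_zero, zero_add]

lemma IsAdSeq.serreSeq_eq_zero (h : IsAdSeq Q a X Y) (h₀ : serreSeq Q a s Y 0 = 0) (n : ℕ) :
    serreSeq Q a s Y n = 0 := by
  have h' : IsAdSeq Q (Q ^ 1 * a * a) X fun n => serreSeq Q a s Y n := by
    have e : a * (Q ^ 1 * a) = Q ^ 1 * a * a := by ring
    simpa only [serreSeq, sub_eq_add_neg, ← neg_smul] using
      ((h.shift 1).isAdSeq_adSeqMul h).add ((e ▸ h.isAdSeq_adSeqMul (h.shift 1)).smul (-(a * s)))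
  exact h'.eq_zero h₀ n

lemma IsAdSeq.quadSeq_eq_zero (h : IsAdSeq Q a X Y) {c d : R} (h₀ : quadSeq Q a c d Y 0 = 0)
    (n : ℕ) : quadSeq Q a c d Y n = 0 := by
  have h' : IsAdSeq Q (Q ^ 2 * a * a) X (quadSeq Q a c d Y) := by
    have e : a * (Q ^ 2 * a) = Q ^ 2 * a * a := by ring
    have e' : Q ^ 1 * a * (Q ^ 1 * a) = Q ^ 2 * a * a := by ring
    exact (((h.shift 2).isAdSeq_adSeqMul h).add
      ((e' ▸ (h.shift 1).isAdSeq_adSeqMul (h.shift 1)).smul (c * a))).add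
        ((e ▸ h.isAdSeq_adSeqMul (h.shift 2)).smul (d * a ^ 2))
  exact h'.eq_zero h₀ n

namespace IsCoproductSeq

lemma serreSeq_zero_eq_add (hD : IsCoproductSeq Q a X Y X' Y' D)
    (h : IsBraidedPair Q a b s X Y X' Y') (hs : a * b * s = 1) :
    serreSeq Q a s D 0 = serreSeq Q a s Y 0 + serreSeq Q a s Y' 0 := by
  simp only [serreSeq_zero, hD.one h, hD.zero, mul_add, add_mul, h.right_seq_mul_left_seq,
    mul_assoc, smul_mul_assoc, mul_smul_comm, mul_mul_of_mul_eq (h.fst.mul _),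
    mul_mul_of_mul_eq (h.right_seq_mul_left _), Nat.reduceAdd]
  match_scalars
  all_goals grind

lemma quadSeq_zero_eq_add_ufoEleven (hD : IsCoproductSeq Q a X Y X' Y' D)
    (h : IsBraidedPair Q a b s X Y X' Y')
    (hQ : Q ^ 8 = -Q ^ 7 + Q ^ 5 + Q ^ 4 + Q ^ 3 - Q - 1) (hab : a * b = -Q ^ 12)
    (hs : s = -Q ^ 5) : quadSeq Q a (1 - Q ^ 2 - Q ^ 3 - Q ^ 4 + Q ^ 6) (Q ^ 5) D 0 =
      quadSeq Q a (1 - Q ^ 2 - Q ^ 3 - Q ^ 4 + Q ^ 6) (Q ^ 5) Y 0 +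
        quadSeq Q a (1 - Q ^ 2 - Q ^ 3 - Q ^ 4 + Q ^ 6) (Q ^ 5) Y' 0 := by
  simp only [quadSeq_zero, hD.two h, hD.one h, hD.zero, mul_add, add_mul, h.right_seq_mul_left_seq,
    mul_assoc, smul_mul_assoc, mul_smul_comm, mul_mul_of_mul_eq (h.fst.mul _),
    mul_mul_of_mul_eq (h.right_seq_mul_left _), Nat.reduceAdd]
  match_scalars
  all_goals grind

lemma quadSeq_zero_eq_add_brj (hD : IsCoproductSeq Q a X Y X' Y' D)
    (h : IsBraidedPair Q a b s X Y X' Y') (hQ : Q ^ 6 = Q ^ 3 - 1) (hab : a * b = -Q ^ 7)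
    (hs : s = -Q ^ 3) : quadSeq Q a (-Q ^ 2) (Q ^ 3) D 0 =
      quadSeq Q a (-Q ^ 2) (Q ^ 3) Y 0 + quadSeq Q a (-Q ^ 2) (Q ^ 3) Y' 0 := by
  simp only [quadSeq_zero, hD.two h, hD.one h, hD.zero, mul_add, add_mul, h.right_seq_mul_left_seq,
    mul_assoc, smul_mul_assoc, mul_smul_comm, mul_mul_of_mul_eq (h.fst.mul _),
    mul_mul_of_mul_eq (h.right_seq_mul_left _), Nat.reduceAdd]
  match_scalars
  all_goals grind

end IsCoproductSeq

end Identities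

section IdentitiesOverField

variable {K E : Type*} [Field K] [Ring E] [Algebra K E] {Q a b s ω : K} {X X' : E}
  {Y Y' D : ℕ → E}

lemma IsAdSeq.bracketFourThree_eq_zero_ufoSeven (h : IsAdSeq Q a X Y) (hQ : 1 + Q + Q ^ 2 = 0)
    (ha : a ≠ 0) (hs : a * b * s = 1) (hs' : 1 + s ≠ 0) (hY : Y 3 = 0)
    (hr : serreSeq Q a s Y 0 = 0) : bracketFourThree Q a b s Y = 0 := by
  have hz : bracketThreeTwo Q a b s Y = 0 := by
    refine (smul_eq_zero.1 ?_).resolve_left (mul_ne_zero ha hs')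
    rw [← neg_eq_zero, ← h.serreSeq_eq_zero hr 2]
    simp only [bracketThreeTwo, serreSeq, adSeqMul_two, Nat.reduceAdd, hY, zero_mul, mul_zero]
    match_scalars
    all_goals grind
  rw [bracketFourThree, hz, zero_mul, mul_zero, smul_zero, sub_zero]

lemma IsAdSeq.bracketFourThree_eq_zero_ufoNine [CharZero K] (h : IsAdSeq Q a X Y) (ha : a ≠ 0)
    (hω : ω ^ 8 = ω ^ 4 - 1) (hQ : Q = ω ^ 6) (hs : s = ω ^ 3 - ω ^ 7) (hab : a * b = ω)
    (hY : Y 4 = 0) (hr : serreSeq Q a s Y 0 = 0) : bracketFourThree Q a b s Y = 0 := by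
  -- In the words `Y k * Y l * Y m`, the bracket lies in the span of the consequences of degree
  -- `4α_i + 3α_j` of the Serre relation; the coefficients solve this linear system over `ℚ(ω)`.
  have e : (2 * a ^ 3) • bracketFourThree Q a b s Y =
      ((-ω - ω ^ 2 + 2 * ω ^ 3 - ω ^ 4 + ω ^ 6 - ω ^ 7) * a) • (Y 3 * serreSeq Q a s Y 0) +
      ((-1 + ω - ω ^ 3 + 2 * ω ^ 4 - ω ^ 5 - ω ^ 6) * a ^ 6) • (serreSeq Q a s Y 0 * Y 3) +
      ((-ω + ω ^ 2 - ω ^ 4 + 2 * ω ^ 5 - ω ^ 6 - ω ^ 7) * a ^ 2) • (Y 2 * serreSeq Q a s Y 1) +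
      ((-1 + ω - ω ^ 3 + 2 * ω ^ 4 - ω ^ 5 - ω ^ 6) * a ^ 4) • (serreSeq Q a s Y 1 * Y 2) +
      ((-ω + ω ^ 2 - ω ^ 4 + 2 * ω ^ 5 - ω ^ 6 - ω ^ 7) * a ^ 3) • (Y 1 * serreSeq Q a s Y 2) +
      ((-1 - ω + 2 * ω ^ 2 - ω ^ 3 + ω ^ 5 - ω ^ 6) * a ^ 2) • (serreSeq Q a s Y 2 * Y 1) +
      ((2 - ω - ω ^ 2 + 2 * ω ^ 3 - 3 * ω ^ 4 + 2 * ω ^ 5 - ω ^ 6 + ω ^ 7) * a ^ 4) •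
        (Y 0 * serreSeq Q a s Y 3) +
      (-1 + ω - 2 * ω ^ 2 + ω ^ 3 + 2 * ω ^ 4 - 3 * ω ^ 5 + 3 * ω ^ 6 - 2 * ω ^ 7) •
        (serreSeq Q a s Y 3 * Y 0) := by
    simp only [bracketFourThree, bracketThreeTwo, serreSeq, adSeqMul_zero, adSeqMul_one,
      adSeqMul_two, adSeqMul_three, Nat.reduceAdd, hY, zero_mul, mul_zero, mul_sub, sub_mul,
      mul_add, add_mul, mul_assoc, smul_mul_assoc, mul_smul_comm]
    match_scalars
    all_goals grind
  refine (smul_eq_zero.1 ?_).resolve_left (show 2 * a ^ 3 ≠ 0 by simp [ha])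
  simp only [e, h.serreSeq_eq_zero hr, mul_zero, zero_mul, smul_zero, add_zero]

lemma bracketFourThree_eq_ufoEleven (hQ : Q ^ 8 = -Q ^ 7 + Q ^ 5 + Q ^ 4 + Q ^ 3 - Q - 1)
    (hab : a * b = -Q ^ 12) (hs : s = -Q ^ 5) (Y : ℕ → E) : bracketFourThree Q a b s Y =
      Y 2 * (Y 1 * Y 1) + ((Q ^ 4 - Q ^ 7) * a) • (Y 1 * (Y 2 * Y 1)) -
        (Q ^ 11 * a ^ 2) • (Y 1 * (Y 1 * Y 2)) := by
  have h15 : Q ^ 15 = -1 := by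
    linear_combination (Q ^ 3 + 1) * (Q ^ 4 - Q ^ 3 + Q ^ 2 - Q + 1) * hQ
  have hz : Q ^ 2 * a ^ 2 * b * s = -Q ^ 4 * a := by
    rw [hs]
    linear_combination -Q ^ 7 * a * hab + Q ^ 4 * a * h15
  have hu : Q ^ 3 * a ^ 3 * b ^ 2 * s ^ 2 = Q ^ 7 * a := by
    rw [hs]
    linear_combination Q ^ 13 * a * (a * b - Q ^ 12) * hab + Q ^ 7 * a * (Q ^ 15 - 1) * h15
  rw [bracketFourThree, bracketThreeTwo, hz, hu]
  simp only [mul_sub, sub_mul, mul_assoc, smul_mul_assoc, mul_smul_comm]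
  match_scalars <;> ring

lemma IsAdSeq.bracketFourThree_eq_zero_ufoEleven [CharZero K] (h : IsAdSeq Q a X Y) (ha : a ≠ 0)
    (hQ : Q ^ 8 = -Q ^ 7 + Q ^ 5 + Q ^ 4 + Q ^ 3 - Q - 1) (hab : a * b = -Q ^ 12)
    (hs : s = -Q ^ 5) (hY : Y 4 = 0)
    (hr : quadSeq Q a (1 - Q ^ 2 - Q ^ 3 - Q ^ 4 + Q ^ 6) (Q ^ 5) Y 0 = 0)
    (hr' : Y 0 * (Y 0 * Y 0) = 0) : bracketFourThree Q a b s Y = 0 := by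
  have hR := h.quadSeq_eq_zero hr
  have hc := (h.isAdSeq_adSeqMul (h.isAdSeq_adSeqMul h)).eq_zero
    (by simpa only [adSeqMul_zero] using hr') 4
  set c := 1 - Q ^ 2 - Q ^ 3 - Q ^ 4 + Q ^ 6 with hc'
  have e : (5 * a ^ 3) • bracketFourThree Q a b s Y =
      ((8 - 5 * Q + Q ^ 2 - 7 * Q ^ 3 - 5 * Q ^ 5 + 6 * Q ^ 6 + 4 * Q ^ 7) * a ^ 2) •
        (Y 2 * quadSeq Q a c (Q ^ 5) Y 0) +
      ((7 - 4 * Q + Q ^ 2 - 7 * Q ^ 3 + 3 * Q ^ 4 - 4 * Q ^ 5 + 6 * Q ^ 6 + 2 * Q ^ 7) * a ^ 4) •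
        (quadSeq Q a c (Q ^ 5) Y 0 * Y 2) +
      ((10 + Q - 3 * Q ^ 2 - 4 * Q ^ 3 - 7 * Q ^ 4 - 4 * Q ^ 5 + 2 * Q ^ 6 + 11 * Q ^ 7) * a ^ 3) •
        (Y 1 * quadSeq Q a c (Q ^ 5) Y 1) +
      ((1 + 2 * Q - 4 * Q ^ 2 + 3 * Q ^ 3 - 4 * Q ^ 4 + 2 * Q ^ 5 - 4 * Q ^ 6 +
        5 * Q ^ 7) * a ^ 2) • (quadSeq Q a c (Q ^ 5) Y 1 * Y 1) +
      ((18 - 3 * Q - 15 * Q ^ 3 - 4 * Q ^ 4 - 8 * Q ^ 5 + 10 * Q ^ 6 + 11 * Q ^ 7) * a ^ 4) •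
        (Y 0 * quadSeq Q a c (Q ^ 5) Y 2) +
      (19 + 5 * Q - 7 * Q ^ 2 - 11 * Q ^ 3 - 15 * Q ^ 4 - 5 * Q ^ 5 + 3 * Q ^ 6 + 22 * Q ^ 7) •
        (quadSeq Q a c (Q ^ 5) Y 2 * Y 0) +
      (-12 - 5 * Q + Q ^ 2 + 8 * Q ^ 3 + 15 * Q ^ 4 + 5 * Q ^ 5 - 4 * Q ^ 6 - 16 * Q ^ 7) •
        adSeqMul Q a Y (adSeqMul Q a Y Y) 4 := by
    rw [bracketFourThree_eq_ufoEleven hQ hab hs]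
    simp only [quadSeq, adSeqMul_zero, adSeqMul_one, adSeqMul_two, adSeqMul_three, adSeqMul_four,
      Nat.reduceAdd, hY, zero_mul, mul_zero, mul_add, add_mul, mul_assoc,
      smul_mul_assoc, mul_smul_comm]
    clear hab hs h hr hr' hR hc
    clear_value c
    subst hc'
    match_scalars
    all_goals grind
  refine (smul_eq_zero.1 ?_).resolve_left (show 5 * a ^ 3 ≠ 0 by simp [ha])
  simp only [e, hR, hc, mul_zero, zero_mul, smul_zero, add_zero]

lemma IsAdSeq.bracketFourThree_eq_zero_brj (h : IsAdSeq Q a X Y) (ha : a ≠ 0)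
    (hQ : Q ^ 6 = Q ^ 3 - 1) (hab : a * b = -Q ^ 7) (hs : s = -Q ^ 3) (hY : Y 3 = 0)
    (hY' : Y 4 = 0) (hr : quadSeq Q a (-Q ^ 2) (Q ^ 3) Y 0 = 0) (hr' : Y 0 * (Y 0 * Y 0) = 0) :
    bracketFourThree Q a b s Y = 0 := by
  have e : (a ^ 3) • bracketFourThree Q a b s Y =
      ((-Q ^ 3 + Q ^ 4) * a ^ 2) • (Y 2 * quadSeq Q a (-Q ^ 2) (Q ^ 3) Y 0) +
      ((-1 + Q) * a ^ 4) • (quadSeq Q a (-Q ^ 2) (Q ^ 3) Y 0 * Y 2) +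
      (-3 + 2 * Q ^ 2 + 3 * Q ^ 3 - 2 * Q ^ 4 - 2 * Q ^ 5) •
        adSeqMul Q a Y (adSeqMul Q a Y Y) 4 := by
    simp only [bracketFourThree, bracketThreeTwo, quadSeq_zero, adSeqMul_zero, adSeqMul_one,
      adSeqMul_two, adSeqMul_three, adSeqMul_four, hY, hY', zero_mul, mul_zero, mul_sub, sub_mul,
      mul_add, add_mul, mul_assoc, smul_mul_assoc, mul_smul_comm]
    match_scalars
    all_goals grind
  have hc := (h.isAdSeq_adSeqMul (h.isAdSeq_adSeqMul h)).eq_zero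
    (by simpa only [adSeqMul_zero] using hr') 4
  refine (smul_eq_zero.1 ?_).resolve_left (pow_ne_zero 3 ha)
  simp only [e, hr, hc, mul_zero, zero_mul, smul_zero, add_zero]

namespace IsCoproductSeq

lemma bracketFourThree_eq_add_ufoEight (hD : IsCoproductSeq Q a X Y X' Y' D)
    (h : IsBraidedPair Q a b s X Y X' Y') (hω : ω ^ 4 = ω ^ 2 - 1) (hQ : Q = -ω ^ 2)
    (hab : a * b = ω ^ 3) (hs : s = -1) (hY : Y 3 = 0) (hY' : Y' 0 * Y' 0 = 0) :
    bracketFourThree Q a b s D = bracketFourThree Q a b s Y + bracketFourThree Q a b s Y' := by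
  have hsq := (h.snd.isAdSeq_adSeqMul h.snd).eq_zero (by rw [adSeqMul_zero, hY'])
  have h1 : Y' 1 * Y' 0 = (-a) • (Y' 0 * Y' 1) := by
    rw [neg_smul, eq_neg_iff_add_eq_zero, ← hsq 1, adSeqMul_one]
  have h2 : Y' 2 * Y' 0 = (-(1 + Q) * a) • (Y' 1 * Y' 1) - a ^ 2 • (Y' 0 * Y' 2) := by
    rw [← sub_eq_zero, ← hsq 2, adSeqMul_two]
    match_scalars <;> ring
  simp only [bracketFourThree, bracketThreeTwo, hD.one h, hD.two h, mul_sub, sub_mul, mul_add,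
    add_mul, h.right_seq_mul_left_seq, mul_assoc, smul_mul_assoc, mul_smul_comm,
    mul_mul_of_mul_eq (h.right_seq_mul_left _), mul_mul_of_mul_eq (h.right_seq_mul_left_seq _ _),
    mul_mul_of_mul_eq (h.fst.mul _), h1, h2, mul_mul_of_mul_eq h1, mul_mul_of_mul_eq h2,
    mul_mul_of_mul_eq hY', hY', hY, Nat.reduceAdd, zero_mul, mul_zero]
  match_scalars
  all_goals grind

lemma bracketFourThree_eq_add_gTwo [CharZero K] (hD : IsCoproductSeq Q a X Y X' Y' D)
    (h : IsBraidedPair Q a b s X Y X' Y') (hQ : Q ^ 2 = Q - 1) (hab : a * b = -1) (hs : s = -1)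
    (ha : a ≠ 0) (hY : Y 4 = 0) (hr : serreSeq Q a s Y 0 = 0) (hr' : serreSeq Q a s Y' 0 = 0) :
    bracketFourThree Q a b s D = bracketFourThree Q a b s Y + bracketFourThree Q a b s Y' := by
  have h1 : Y' 1 * Y' 0 = (-a) • (Y' 0 * Y' 1) := by
    rw [sub_eq_zero.1 ((serreSeq_zero ..).symm.trans hr'), hs, mul_neg_one]
  have h2 : Y' 2 * Y' 0 = (-(1 + Q) * a) • (Y' 1 * Y' 1) - a ^ 2 • (Y' 0 * Y' 2) := by
    rw [← sub_eq_zero, ← h.snd.serreSeq_eq_zero hr' 1, hs]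
    simp only [serreSeq, adSeqMul_one, Nat.reduceAdd]
    match_scalars <;> ring
  have h3 : Y 3 * Y 1 = (-a ^ 2) • (Y 1 * Y 3) - ((2 + 2 * Q) / 3 * a) • (Y 2 * Y 2) := by
    have hq : 2 * Q - 1 ≠ 0 := by
      intro hq
      have : (3 : K) = 0 := by linear_combination -(2 * Q - 1) * hq + 4 * hQ
      norm_num at this
    rw [← sub_eq_zero]
    refine (smul_eq_zero.1 ?_).resolve_left (mul_ne_zero ha hq)
    rw [← h.fst.serreSeq_eq_zero hr 3, hs]
    simp only [serreSeq, adSeqMul_three, Nat.reduceAdd, hY, zero_mul, mul_zero]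
    match_scalars
    all_goals grind
  simp only [bracketFourThree, bracketThreeTwo, hD.one h, hD.two h, mul_sub, sub_mul, mul_add,
    add_mul, h.right_seq_mul_left_seq, mul_assoc, smul_mul_assoc, mul_smul_comm,
    mul_mul_of_mul_eq (h.right_seq_mul_left _), mul_mul_of_mul_eq (h.right_seq_mul_left_seq _ _),
    mul_mul_of_mul_eq (h.fst.mul _), h1, h2, mul_mul_of_mul_eq h1, mul_mul_of_mul_eq h2,
    mul_mul_of_mul_eq h3, hY, Nat.reduceAdd, zero_mul]
  match_scalars
  all_goals grind

end IsCoproductSeq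

end IdentitiesOverField

/-! ### Primitive elements of rank two -/

section RankTwo

variable {θ : ℕ} {q : Fin θ → Fin θ → ℂˣ} {i j : Fin θ}

lemma adpow_succ (q : Fin θ → Fin θ → ℂˣ) (i j : Fin θ) (m : ℕ) :
    adpow q i j (m + 1) = gen θ i * adpow q i j m -
      ((q i i : ℂ) ^ m * q i j) • (adpow q i j m * gen θ i) := by
  have h : (fun k => m * δ θ i k + δ θ j k) = bideg i j (m, 1) := by
    funext k
    simp [bideg]
  rw [adpow, ad1, brk, h, ← bideg_one_zero i j, qf_bideg]
  simp

lemma isAdSeq_adpow {E : Type*} [Ring E] [Algebra ℂ E] (f : TV θ →ₐ[ℂ] E) :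
    IsAdSeq (q i i : ℂ) (q i j : ℂ) (f (gen θ i)) fun m => f (adpow q i j m) where
  mul m := by simp [adpow_succ]

lemma xw_pair (q : Fin θ → Fin θ → ℂˣ) (i j : Fin θ) : xw q [i, j] = adpow q i j 1 := by
  have h : (fun k => 0 * δ θ i k + δ θ j k) = δ θ j := by simp
  rw [xw, xw, degW_singleton, adpow, adpow, h]
  simp

lemma xw_triple (q : Fin θ → Fin θ → ℂˣ) (i j : Fin θ) : xw q [i, i, j] = adpow q i j 2 := by
  have h : (fun k => 1 * δ θ i k + δ θ j k) = δ θ i + δ θ j := by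
    funext k
    simp
  rw [xw, xw_pair, degW_cons, degW_singleton, ← h]
  · rfl
  · simp

lemma brk_brk_eq_bracketFourThree (q : Fin θ → Fin θ → ℂˣ) (i j : Fin θ) :
    brk q (δ θ i + δ θ i + δ θ i + δ θ j + δ θ j) (δ θ i + δ θ j)
      (brk q (δ θ i + δ θ i + δ θ j) (δ θ i + δ θ j) (xw q [i, i, j]) (xw q [i, j]))
      (xw q [i, j]) = bracketFourThree (q i i : ℂ) (q i j) (q j i) (q j j) (adpow q i j) := by
  have h₁ : δ θ i + δ θ j = bideg i j (1, 1) := by simp [bideg]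
  have h₂ : δ θ i + δ θ i + δ θ j = bideg i j (2, 1) := by simp [bideg, two_smul]
  have h₃ : δ θ i + δ θ i + δ θ i + δ θ j + δ θ j = bideg i j (3, 2) := by
    rw [bideg]
    abel
  rw [xw_pair, xw_triple, h₃, h₂, h₁, brk, brk, qf_bideg, qf_bideg]
  simp [bracketFourThree, bracketThreeTwo]

section Map

variable {R A B : Type*} [CommRing R] [Ring A] [Ring B] [Algebra R A] [Algebra R B]

lemma map_bracketFourThree (f : A →ₐ[R] B) (Q a b s : R) (Y : ℕ → A) :
    f (bracketFourThree Q a b s Y) = bracketFourThree Q a b s fun m => f (Y m) := by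
  simp [bracketFourThree, bracketThreeTwo]

lemma map_serreSeq_zero (f : A →ₐ[R] B) (Q a s : R) (Y : ℕ → A) :
    f (serreSeq Q a s Y 0) = serreSeq Q a s (fun m => f (Y m)) 0 := by
  simp [serreSeq_zero]

lemma map_quadSeq_zero (f : A →ₐ[R] B) (Q a c d : R) (Y : ℕ → A) :
    f (quadSeq Q a c d Y 0) = quadSeq Q a c d (fun m => f (Y m)) 0 := by
  simp [quadSeq_zero]

end Map

lemma mul_mem_homogD_bideg {d e f : ℕ × ℕ} {x y : TV θ} (hx : x ∈ homogD θ (bideg i j d))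
    (hy : y ∈ homogD θ (bideg i j e)) (hf : d + e = f) : x * y ∈ homogD θ (bideg i j f) := by
  rw [← hf, bideg_add]
  exact mul_mem_homogD hx hy

lemma gen_left_mem_homogD_bideg (i j : Fin θ) : gen θ i ∈ homogD θ (bideg i j (1, 0)) := by
  rw [bideg_one_zero]
  exact gen_mem_homogD i

lemma gen_left_pow_mem_homogD_bideg (i j : Fin θ) (n : ℕ) :
    gen θ i ^ n ∈ homogD θ (bideg i j (n, 0)) := by
  induction n with
  | zero => simpa [bideg] using one_mem_homogD
  | succ n ih =>
    rw [pow_succ]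
    exact mul_mem_homogD_bideg ih (gen_left_mem_homogD_bideg i j) rfl

lemma gen_right_pow_mem_homogD_bideg (i j : Fin θ) (n : ℕ) :
    gen θ j ^ n ∈ homogD θ (bideg i j (0, n)) := by
  simpa [bideg] using gen_left_pow_mem_homogD_bideg j i n

lemma adpow_mem_homogD_bideg (q : Fin θ → Fin θ → ℂˣ) (i j : Fin θ) (m : ℕ) :
    adpow q i j m ∈ homogD θ (bideg i j (m, 1)) := by
  induction m with
  | zero => simpa [bideg, adpow] using gen_mem_homogD j
  | succ m ih =>
    rw [adpow_succ]
    exact sub_mem (mul_mem_homogD_bideg (gen_left_mem_homogD_bideg i j) ih (by simp [add_comm]))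
      (Submodule.smul_mem _ _ (mul_mem_homogD_bideg ih (gen_left_mem_homogD_bideg i j) rfl))

lemma adpow_mul_adpow_mem_homogD_bideg (k m : ℕ) :
    adpow q i j k * adpow q i j m ∈ homogD θ (bideg i j (k + m, 2)) :=
  mul_mem_homogD_bideg (adpow_mem_homogD_bideg q i j k) (adpow_mem_homogD_bideg q i j m) rfl

lemma bracketFourThree_adpow_mem_homogD_bideg (Q a b s : ℂ) :
    bracketFourThree Q a b s (adpow q i j) ∈ homogD θ (bideg i j (4, 3)) := by
  have h : bracketThreeTwo Q a b s (adpow q i j) ∈ homogD θ (bideg i j (3, 2)) :=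
    sub_mem (adpow_mul_adpow_mem_homogD_bideg 2 1)
      (Submodule.smul_mem _ _ (adpow_mul_adpow_mem_homogD_bideg 1 2))
  exact sub_mem (mul_mem_homogD_bideg h (adpow_mem_homogD_bideg q i j 1) rfl)
    (Submodule.smul_mem _ _ (mul_mem_homogD_bideg (adpow_mem_homogD_bideg q i j 1) h rfl))

lemma serreSeq_zero_adpow_mem_homogD_bideg (Q a s : ℂ) :
    serreSeq Q a s (adpow q i j) 0 ∈ homogD θ (bideg i j (1, 2)) := by
  rw [serreSeq_zero]
  exact sub_mem (adpow_mul_adpow_mem_homogD_bideg 1 0)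
    (Submodule.smul_mem _ _ (adpow_mul_adpow_mem_homogD_bideg 0 1))

lemma quadSeq_zero_adpow_mem_homogD_bideg (Q a c d : ℂ) :
    quadSeq Q a c d (adpow q i j) 0 ∈ homogD θ (bideg i j (2, 2)) := by
  rw [quadSeq_zero]
  exact add_mem (add_mem (adpow_mul_adpow_mem_homogD_bideg 2 0)
    (Submodule.smul_mem _ _ (adpow_mul_adpow_mem_homogD_bideg 1 1)))
    (Submodule.smul_mem _ _ (adpow_mul_adpow_mem_homogD_bideg 0 2))

namespace IsPreNicholsIdeal

open BraidedSquare

variable {S : BraidedStr θ q} {I : Submodule ℂ (TV θ)}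

/-- The map from `T(V)` to the first factor of the braided tensor square of `T(V)/I`. -/
def fst (hI : IsPreNicholsIdeal S I) : TV θ →ₐ[ℂ] hI.QuotientSquare := hI.squareMk.comp (inl q)

/-- The map from `T(V)` to the second factor of the braided tensor square of `T(V)/I`. -/
def snd (hI : IsPreNicholsIdeal S I) : TV θ →ₐ[ℂ] hI.QuotientSquare := hI.squareMk.comp (inr q)

/-- The coproduct of `T(V)`, with values in the braided tensor square of `T(V)/I`. -/
def comul (hI : IsPreNicholsIdeal S I) : TV θ →ₐ[ℂ] hI.QuotientSquare :=
  hI.squareMk.comp (braidedΔ q)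

lemma isPrimitiveMod_iff (hI : IsPreNicholsIdeal S I) {x : TV θ} :
    IsPrimitiveMod q I x ↔ hI.comul x = hI.fst x + hI.snd x := by
  rw [IsPrimitiveMod, ← hI.squareMk_eq_zero_iff, map_sub, map_add, sub_eq_zero]
  rfl

lemma fst_eq_zero_iff (hI : IsPreNicholsIdeal S I) {x : TV θ} : hI.fst x = 0 ↔ x ∈ I := by
  rw [fst, AlgHom.comp_apply, hI.squareMk_eq_zero_iff]
  refine ⟨fun h => ?_, fun h => ?_⟩
  · simpa [contractRight_inl, wordCoeff_nil_one] using
      contractRight_mem_of_mem_mixed (hI.wordCoeff_mem_dualAnnihilator (v := []) (by simp)) h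
  · simpa using inl_mul_inr_mem_mixed_left (q := q) h 1

lemma snd_eq_zero (hI : IsPreNicholsIdeal S I) {x : TV θ} (h : x ∈ I) : hI.snd x = 0 := by
  rw [snd, AlgHom.comp_apply, hI.squareMk_eq_zero_iff]
  simpa using inl_mul_inr_mem_mixed_right (q := q) 1 h

lemma comul_gen (hI : IsPreNicholsIdeal S I) (i : Fin θ) :
    hI.comul (gen θ i) = hI.fst (gen θ i) + hI.snd (gen θ i) :=
  hI.isPrimitiveMod_iff.1 (isPrimitiveMod_gen i)

lemma snd_mul_fst (hI : IsPreNicholsIdeal S I) {d e : ℕ × ℕ} {x y : TV θ}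
    (hx : x ∈ homogD θ (bideg i j d)) (hy : y ∈ homogD θ (bideg i j e)) :
    hI.snd x * hI.fst y = qf q (bideg i j d) (bideg i j e) • (hI.fst y * hI.snd x) := by
  simp only [fst, snd, AlgHom.comp_apply, ← map_mul, inr_mul_inl q hx hy, map_smul]

lemma isBraidedPair (hI : IsPreNicholsIdeal S I) (i j : Fin θ) :
    IsBraidedPair (q i i : ℂ) (q i j) (q j i) (q j j) (hI.fst (gen θ i))
      (fun m => hI.fst (adpow q i j m)) (hI.snd (gen θ i)) fun m => hI.snd (adpow q i j m) where
  fst := isAdSeq_adpow _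
  snd := isAdSeq_adpow _
  right_mul_left := by
    simpa [qf_bideg] using
      hI.snd_mul_fst (gen_left_mem_homogD_bideg i j) (gen_left_mem_homogD_bideg i j)
  right_mul_left_seq m := by
    simpa [qf_bideg] using
      hI.snd_mul_fst (gen_left_mem_homogD_bideg i j) (adpow_mem_homogD_bideg q i j m)
  right_seq_mul_left k := by
    simpa [qf_bideg] using
      hI.snd_mul_fst (adpow_mem_homogD_bideg q i j k) (gen_left_mem_homogD_bideg i j)
  right_seq_mul_left_seq k m := by
    simpa [qf_bideg] using
      hI.snd_mul_fst (adpow_mem_homogD_bideg q i j k) (adpow_mem_homogD_bideg q i j m)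

lemma isCoproductSeq (hI : IsPreNicholsIdeal S I) (i j : Fin θ) :
    IsCoproductSeq (q i i : ℂ) (q i j : ℂ) (hI.fst (gen θ i)) (fun m => hI.fst (adpow q i j m))
      (hI.snd (gen θ i)) (fun m => hI.snd (adpow q i j m)) fun m => hI.comul (adpow q i j m) where
  zero := hI.comul_gen j
  isAdSeq := by simpa only [← hI.comul_gen] using isAdSeq_adpow hI.comul

lemma isPrimitiveMod_gen_pow (hI : IsPreNicholsIdeal S I) {n : ℕ} (hn : 0 < n)
    (h : IsPrimitiveRoot (q i i : ℂ) n) : IsPrimitiveMod q I (gen θ i ^ n) := by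
  rw [hI.isPrimitiveMod_iff]
  simpa only [map_pow, hI.comul_gen] using
    add_pow_eq_add_pow_of_isPrimitiveRoot (hI.isBraidedPair i i).right_mul_left h hn

lemma isPrimitiveMod_adpow_succ (hI : IsPreNicholsIdeal S I) {n : ℕ}
    (h : (q i i : ℂ) ^ n * (q i j * q j i) = 1) : IsPrimitiveMod q I (adpow q i j (n + 1)) :=
  hI.isPrimitiveMod_iff.2 ((hI.isCoproductSeq i j).eq_add (hI.isBraidedPair i j) h)

lemma isPrimitiveMod_serreSeq_zero (hI : IsPreNicholsIdeal S I)
    (h : (q i j : ℂ) * q j i * q j j = 1) :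
    IsPrimitiveMod q I (serreSeq (q i i : ℂ) (q i j) (q j j) (adpow q i j) 0) := by
  simpa only [hI.isPrimitiveMod_iff, map_serreSeq_zero] using
    (hI.isCoproductSeq i j).serreSeq_zero_eq_add (hI.isBraidedPair i j) h

lemma bracketFourThree_fst_eq_zero_iff (hI : IsPreNicholsIdeal S I) {Q a b s : ℂ} :
    bracketFourThree Q a b s (fun m => hI.fst (adpow q i j m)) = 0 ↔
      bracketFourThree Q a b s (adpow q i j) ∈ I := by
  rw [← map_bracketFourThree, hI.fst_eq_zero_iff]

lemma gen_left_pow_mem (hI : IsPreNicholsIdeal S I) (hGK : FinGK I) (hAAH : AAH) (hij : i ≠ j)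
    {n : ℕ} (hn : 2 ≤ n) (hq : IsPrimitiveRoot (q i i : ℂ) n)
    (h : IsForbiddenDegree q i j (n, 0)) : gen θ i ^ n ∈ I :=
  hI.mem_of_isForbiddenDegree hGK hAAH hij h hn (gen_left_pow_mem_homogD_bideg i j n)
    (hI.isPrimitiveMod_gen_pow (by lia) hq)

lemma gen_right_pow_mem (hI : IsPreNicholsIdeal S I) (hGK : FinGK I) (hAAH : AAH) (hij : i ≠ j)
    {n : ℕ} (hn : 2 ≤ n) (hq : IsPrimitiveRoot (q j j : ℂ) n)
    (h : IsForbiddenDegree q i j (0, n)) : gen θ j ^ n ∈ I :=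
  hI.mem_of_isForbiddenDegree hGK hAAH hij h (by simpa using hn)
    (gen_right_pow_mem_homogD_bideg i j n) (hI.isPrimitiveMod_gen_pow (by lia) hq)

lemma adpow_succ_mem (hI : IsPreNicholsIdeal S I) (hGK : FinGK I) (hAAH : AAH) (hij : i ≠ j)
    {n : ℕ} (hq : (q i i : ℂ) ^ n * (q i j * q j i) = 1)
    (h : IsForbiddenDegree q i j (n + 1, 1)) : adpow q i j (n + 1) ∈ I :=
  hI.mem_of_isForbiddenDegree hGK hAAH hij h (by simp) (adpow_mem_homogD_bideg q i j (n + 1))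
    (hI.isPrimitiveMod_adpow_succ hq)

lemma serreSeq_zero_adpow_mem (hI : IsPreNicholsIdeal S I) (hGK : FinGK I) (hAAH : AAH)
    (hij : i ≠ j) (hq : (q i j : ℂ) * q j i * q j j = 1) (h : IsForbiddenDegree q i j (1, 2)) :
    serreSeq (q i i : ℂ) (q i j) (q j j) (adpow q i j) 0 ∈ I :=
  hI.mem_of_isForbiddenDegree hGK hAAH hij h (by decide)
    (serreSeq_zero_adpow_mem_homogD_bideg _ _ _) (hI.isPrimitiveMod_serreSeq_zero hq)

end IsPreNicholsIdeal

end RankTwo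

/-! ### The relation for each type -/

section RootsOfUnity

variable {R : Type*} [CommRing R] {ω : R} {n : ℕ}

lemma pow_add_one_ne_zero_of_isPrimitiveRoot {k : ℕ} (h : IsPrimitiveRoot ω n) (hk : 0 < k)
    (hkn : 2 * k < n) : ω ^ k + 1 ≠ 0 := fun e =>
  h.pow_ne_one_of_pos_of_lt (l := k * 2) (by lia) (by lia)
    (by linear_combination (ω ^ k - 1) * e)

lemma isPrimitiveRoot_neg_of_odd [CharZero R] (h : IsPrimitiveRoot ω n) (hn : Odd n) :
    IsPrimitiveRoot (-ω) (2 * n) := by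
  have h2 : orderOf (-1 : R) = 2 := by
    rw [orderOf_neg_one, if_neg (by rw [ringChar.eq_zero]; decide)]
  have hco : (orderOf (-1 : R)).Coprime (orderOf ω) := by
    rw [h2, ← h.eq_orderOf]
    exact hn.coprime_two_left
  rw [IsPrimitiveRoot.iff_orderOf, neg_eq_neg_one_mul,
    (Commute.all _ _).orderOf_mul_eq_mul_orderOf_of_coprime hco, h2, ← h.eq_orderOf]

variable [IsDomain R]

lemma pow_half_of_isPrimitiveRoot (h : IsPrimitiveRoot ω (2 * n)) (hn : 0 < n) : ω ^ n = -1 :=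
  (h.pow (by lia) (mul_comm 2 n)).eq_neg_one_of_two_right

lemma pow_four_of_isPrimitiveRoot_twelve (h : IsPrimitiveRoot ω 12) : ω ^ 4 = ω ^ 2 - 1 := by
  refine mul_left_cancel₀ (pow_add_one_ne_zero_of_isPrimitiveRoot (k := 2) h (by lia) (by lia)) ?_
  linear_combination pow_half_of_isPrimitiveRoot (n := 6) h (by lia)

lemma pow_eight_of_isPrimitiveRoot_twentyFour (h : IsPrimitiveRoot ω 24) : ω ^ 8 = ω ^ 4 - 1 := by
  refine mul_left_cancel₀ (pow_add_one_ne_zero_of_isPrimitiveRoot (k := 4) h (by lia) (by lia)) ?_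
  linear_combination pow_half_of_isPrimitiveRoot (n := 12) h (by lia)

lemma pow_eight_of_isPrimitiveRoot_thirty (h : IsPrimitiveRoot ω 30) :
    ω ^ 8 = -ω ^ 7 + ω ^ 5 + ω ^ 4 + ω ^ 3 - ω - 1 := by
  refine mul_left_cancel₀ (mul_ne_zero
    (pow_add_one_ne_zero_of_isPrimitiveRoot (k := 5) h (by lia) (by lia))
    (pow_add_one_ne_zero_of_isPrimitiveRoot (k := 3) h (by lia) (by lia))) ?_
  linear_combination (ω + 1) * pow_half_of_isPrimitiveRoot (n := 15) h (by lia)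

lemma pow_six_of_isPrimitiveRoot_eighteen (h : IsPrimitiveRoot ω 18) : ω ^ 6 = ω ^ 3 - 1 := by
  refine mul_left_cancel₀ (pow_add_one_ne_zero_of_isPrimitiveRoot (k := 3) h (by lia) (by lia)) ?_
  linear_combination pow_half_of_isPrimitiveRoot (n := 9) h (by lia)

lemma pow_two_of_isPrimitiveRoot_six (h : IsPrimitiveRoot ω 6) : ω ^ 2 = ω - 1 := by
  refine mul_left_cancel₀ (pow_add_one_ne_zero_of_isPrimitiveRoot (k := 1) h (by lia) (by lia)) ?_
  linear_combination pow_half_of_isPrimitiveRoot (n := 3) h (by lia)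

lemma inv_eq_pow_of_isPrimitiveRoot {G : Type*} [DivisionCommMonoid G] {ζ : G}
    (h : IsPrimitiveRoot ζ (n + 1)) : ζ⁻¹ = ζ ^ n :=
  inv_eq_of_mul_eq_one_right ((pow_succ' ζ n).symm.trans h.pow_eq_one)

end RootsOfUnity

section Types

variable {θ : ℕ} {q : Fin θ → Fin θ → ℂˣ} {S : BraidedStr θ q} {I : Submodule ℂ (TV θ)}
  {i j : Fin θ} {ω : ℂ}

namespace HasRankTwoDiagram

variable {ζ : ℂ}

lemma ufoSeven (hij : i ≠ j) (hζ : IsPrimitiveRoot ζ 12) (hi : (q i i : ℂ) = -(ζ⁻¹) ^ 2)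
    (he : qtil q i j = ζ⁻¹) (hj : (q j j : ℂ) = ζ) : HasRankTwoDiagram q i j ζ 12 4 11 1 := by
  have h6 : ζ ^ 6 = -1 := pow_half_of_isPrimitiveRoot (n := 6) hζ (by decide)
  have hinv : ζ⁻¹ = ζ ^ 11 := inv_eq_pow_of_isPrimitiveRoot hζ
  rw [hinv] at hi he
  exact ⟨hij, hζ, hi.trans (by linear_combination (-ζ ^ 16 + ζ ^ 10 - ζ ^ 4) * h6), he,
    hj.trans (pow_one ζ).symm⟩

lemma ufoEight (hij : i ≠ j) (hζ : IsPrimitiveRoot ζ 12) (hi : (q i i : ℂ) = -ζ ^ 2)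
    (he : qtil q i j = ζ ^ 3) (hj : (q j j : ℂ) = -1) : HasRankTwoDiagram q i j ζ 12 8 3 6 := by
  have h6 : ζ ^ 6 = -1 := pow_half_of_isPrimitiveRoot (n := 6) hζ (by decide)
  exact ⟨hij, hζ, hi.trans (by linear_combination -ζ ^ 2 * h6), he, hj.trans h6.symm⟩

lemma ufoNine (hij : i ≠ j) (hζ : IsPrimitiveRoot ζ 24) (hi : (q i i : ℂ) = ζ ^ 6)
    (he : qtil q i j = ζ) (hj : (q j j : ℂ) = ζ⁻¹) : HasRankTwoDiagram q i j ζ 24 6 1 23 :=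
  ⟨hij, hζ, hi, he.trans (pow_one ζ).symm, hj.trans (inv_eq_pow_of_isPrimitiveRoot hζ)⟩

lemma ufoEleven (hij : i ≠ j) (hζ : IsPrimitiveRoot ζ 15) (hi : (q i i : ℂ) = -ζ)
    (he : qtil q i j = -(ζ⁻¹) ^ 3) (hj : (q j j : ℂ) = ζ ^ 5) :
    HasRankTwoDiagram q i j (-ζ) 30 1 27 20 := by
  have h15 := hζ.pow_eq_one
  have hinv : ζ⁻¹ = ζ ^ 14 := inv_eq_pow_of_isPrimitiveRoot hζ
  rw [hinv] at he
  exact ⟨hij, isPrimitiveRoot_neg_of_odd hζ (by decide), hi.trans (pow_one _).symm,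
    he.trans (by linear_combination -(ζ ^ 27) * h15), hj.trans (by linear_combination -ζ ^ 5 * h15)⟩

lemma brj (hij : i ≠ j) (hζ : IsPrimitiveRoot ζ 9) (hi : (q i i : ℂ) = -ζ)
    (he : qtil q i j = (ζ⁻¹) ^ 2) (hj : (q j j : ℂ) = ζ ^ 3) :
    HasRankTwoDiagram q i j (-ζ) 18 1 16 12 := by
  have h9 := hζ.pow_eq_one
  have hinv : ζ⁻¹ = ζ ^ 8 := inv_eq_pow_of_isPrimitiveRoot hζ
  rw [hinv] at he
  exact ⟨hij, isPrimitiveRoot_neg_of_odd hζ (by decide), hi.trans (pow_one _).symm,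
    he.trans (by ring), hj.trans (by linear_combination -ζ ^ 3 * h9)⟩

lemma gTwo (hij : i ≠ j) (hζ : IsPrimitiveRoot ζ 6) (hi : (q i i : ℂ) = ζ)
    (he : qtil q i j = -1) (hj : (q j j : ℂ) = -1) : HasRankTwoDiagram q i j ζ 6 1 3 3 := by
  have h3 : ζ ^ 3 = -1 := pow_half_of_isPrimitiveRoot (n := 3) hζ (by decide)
  exact ⟨hij, hζ, hi.trans (pow_one ζ).symm, he.trans h3.symm, hj.trans h3.symm⟩

end HasRankTwoDiagram

namespace IsPreNicholsIdeal

lemma bracketFourThree_adpow_mem_ufoSeven (hI : IsPreNicholsIdeal S I) (hGK : FinGK I)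
    (hAAH : AAH) (h : HasRankTwoDiagram q i j ω 12 4 11 1) :
    bracketFourThree (q i i : ℂ) (q i j) (q j i) (q j j) (adpow q i j) ∈ I := by
  have hω := pow_four_of_isPrimitiveRoot_twelve h.isPrimitiveRoot
  have hQ : IsPrimitiveRoot (q i i : ℂ) 3 :=
    h.left ▸ h.isPrimitiveRoot.pow (by decide) (a := 4) (b := 3) rfl
  have hs : (q i j : ℂ) * q j i * q j j = 1 := by
    rw [h.edge, h.right, ← pow_add, h.isPrimitiveRoot.pow_eq_one]
  have hs' : 1 + (q j j : ℂ) ≠ 0 := by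
    rw [h.right, add_comm]
    exact pow_add_one_ne_zero_of_isPrimitiveRoot h.isPrimitiveRoot (by decide) (by decide)
  have hX := hI.gen_left_pow_mem hGK hAAH h.ne (by decide) hQ
    h.isForbiddenDegree_ufoSeven_three_zero
  have hr := hI.serreSeq_zero_adpow_mem hGK hAAH h.ne hs h.isForbiddenDegree_ufoSeven_one_two
  rw [← hI.fst_eq_zero_iff, map_pow] at hX
  rw [← hI.fst_eq_zero_iff, map_serreSeq_zero] at hr
  have hY := (isAdSeq_adpow (j := j) hI.fst).eq_zero_of_pow_eq_zero hQ (by decide) hX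
  exact hI.bracketFourThree_fst_eq_zero_iff.1 <|
    (isAdSeq_adpow hI.fst).bracketFourThree_eq_zero_ufoSeven (by rw [h.left]; grind)
      (q i j).ne_zero hs hs' hY hr

lemma bracketFourThree_adpow_mem_ufoEight (hI : IsPreNicholsIdeal S I) (hGK : FinGK I)
    (hAAH : AAH) (h : HasRankTwoDiagram q i j ω 12 8 3 6) :
    bracketFourThree (q i i : ℂ) (q i j) (q j i) (q j j) (adpow q i j) ∈ I := by
  have hω := pow_four_of_isPrimitiveRoot_twelve h.isPrimitiveRoot
  have hQ : IsPrimitiveRoot (q i i : ℂ) 3 := by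
    rw [h.left, show 8 = 4 * 2 from rfl, pow_mul]
    exact (h.isPrimitiveRoot.pow (by decide) rfl).pow_of_coprime 2 (by decide)
  have hs : IsPrimitiveRoot (q j j : ℂ) 2 :=
    h.right ▸ h.isPrimitiveRoot.pow (by decide) (a := 6) (b := 2) rfl
  have hX := hI.gen_left_pow_mem hGK hAAH h.ne (by decide) hQ
    h.isForbiddenDegree_ufoEight_three_zero
  have hY' := hI.snd_eq_zero <| hI.gen_right_pow_mem hGK hAAH h.ne (by decide) hs
    h.isForbiddenDegree_ufoEight_zero_two
  rw [← hI.fst_eq_zero_iff, map_pow] at hX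
  rw [map_pow, pow_two] at hY'
  have hY := (isAdSeq_adpow (j := j) hI.fst).eq_zero_of_pow_eq_zero hQ (by decide) hX
  refine hI.mem_of_isForbiddenDegree hGK hAAH h.ne h.isForbiddenDegree_ufoEight_four_three
    (by decide) (bracketFourThree_adpow_mem_homogD_bideg _ _ _ _) ?_
  simpa only [hI.isPrimitiveMod_iff, map_bracketFourThree] using
    (hI.isCoproductSeq i j).bracketFourThree_eq_add_ufoEight (hI.isBraidedPair i j) hω
      (by rw [h.left]; grind) h.edge hs.eq_neg_one_of_two_right hY hY'

lemma bracketFourThree_adpow_mem_ufoNine (hI : IsPreNicholsIdeal S I) (hGK : FinGK I)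
    (hAAH : AAH) (h : HasRankTwoDiagram q i j ω 24 6 1 23) :
    bracketFourThree (q i i : ℂ) (q i j) (q j i) (q j j) (adpow q i j) ∈ I := by
  have hω := pow_eight_of_isPrimitiveRoot_twentyFour h.isPrimitiveRoot
  have hQ : IsPrimitiveRoot (q i i : ℂ) 4 :=
    h.left ▸ h.isPrimitiveRoot.pow (by decide) (a := 6) (b := 4) rfl
  have hs : (q i j : ℂ) * q j i * q j j = 1 := by
    rw [h.edge, h.right, ← pow_add, h.isPrimitiveRoot.pow_eq_one]
  have hX := hI.gen_left_pow_mem hGK hAAH h.ne (by decide) hQ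
    h.isForbiddenDegree_ufoNine_four_zero
  have hr := hI.serreSeq_zero_adpow_mem hGK hAAH h.ne hs h.isForbiddenDegree_ufoNine_one_two
  rw [← hI.fst_eq_zero_iff, map_pow] at hX
  rw [← hI.fst_eq_zero_iff, map_serreSeq_zero] at hr
  have hY := (isAdSeq_adpow (j := j) hI.fst).eq_zero_of_pow_eq_zero hQ (by decide) hX
  exact hI.bracketFourThree_fst_eq_zero_iff.1 <|
    (isAdSeq_adpow hI.fst).bracketFourThree_eq_zero_ufoNine (q i j).ne_zero hω h.left
      (by rw [h.right]; grind) (by rw [h.edge, pow_one]) hY hr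

lemma bracketFourThree_adpow_mem_ufoEleven (hI : IsPreNicholsIdeal S I) (hGK : FinGK I)
    (hAAH : AAH) (h : HasRankTwoDiagram q i j ω 30 1 27 20) :
    bracketFourThree (q i i : ℂ) (q i j) (q j i) (q j j) (adpow q i j) ∈ I := by
  have h15 : ω ^ 15 = -1 := pow_half_of_isPrimitiveRoot (n := 15) h.isPrimitiveRoot (by decide)
  have hω : (q i i : ℂ) = ω := by rw [h.left, pow_one]
  have hQ := pow_eight_of_isPrimitiveRoot_thirty (hω ▸ h.isPrimitiveRoot)
  have hab : (q i j : ℂ) * q j i = -(q i i : ℂ) ^ 12 := by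
    rw [h.edge, hω]
    linear_combination ω ^ 12 * h15
  have hs : (q j j : ℂ) = -(q i i : ℂ) ^ 5 := by
    rw [h.right, hω]
    linear_combination ω ^ 5 * h15
  have hs' : IsPrimitiveRoot (q j j : ℂ) 3 := by
    rw [h.right, show 20 = 10 * 2 from rfl, pow_mul]
    exact (h.isPrimitiveRoot.pow (by decide) rfl).pow_of_coprime 2 (by decide)
  have hY : adpow q i j 4 ∈ I := by
    refine hI.adpow_succ_mem hGK hAAH h.ne ?_ h.isForbiddenDegree_ufoEleven_four_one
    rw [h.left, h.edge, ← pow_mul, ← pow_add, h.isPrimitiveRoot.pow_eq_one]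
  have hr := hI.mem_of_isForbiddenDegree hGK hAAH h.ne h.isForbiddenDegree_ufoEleven_two_two
    (by decide) (quadSeq_zero_adpow_mem_homogD_bideg _ _ _ _) <| by
      simpa only [hI.isPrimitiveMod_iff, map_quadSeq_zero] using
        (hI.isCoproductSeq i j).quadSeq_zero_eq_add_ufoEleven (hI.isBraidedPair i j) hQ hab hs
  have hr' := hI.gen_right_pow_mem hGK hAAH h.ne (by decide) hs'
    h.isForbiddenDegree_ufoEleven_zero_three
  rw [← hI.fst_eq_zero_iff] at hY
  rw [← hI.fst_eq_zero_iff, map_quadSeq_zero] at hr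
  rw [← hI.fst_eq_zero_iff, map_pow, pow_three] at hr'
  exact hI.bracketFourThree_fst_eq_zero_iff.1 <|
    (isAdSeq_adpow hI.fst).bracketFourThree_eq_zero_ufoEleven (q i j).ne_zero hQ hab hs hY hr hr'

lemma bracketFourThree_adpow_mem_brj (hI : IsPreNicholsIdeal S I) (hGK : FinGK I)
    (hAAH : AAH) (h : HasRankTwoDiagram q i j ω 18 1 16 12) :
    bracketFourThree (q i i : ℂ) (q i j) (q j i) (q j j) (adpow q i j) ∈ I := by
  have h9 : ω ^ 9 = -1 := pow_half_of_isPrimitiveRoot (n := 9) h.isPrimitiveRoot (by decide)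
  have hω : (q i i : ℂ) = ω := by rw [h.left, pow_one]
  have hQ := pow_six_of_isPrimitiveRoot_eighteen (hω ▸ h.isPrimitiveRoot)
  have hab : (q i j : ℂ) * q j i = -(q i i : ℂ) ^ 7 := by
    rw [h.edge, hω]
    linear_combination ω ^ 7 * h9
  have hs : (q j j : ℂ) = -(q i i : ℂ) ^ 3 := by
    rw [h.right, hω]
    linear_combination ω ^ 3 * h9
  have hs' : IsPrimitiveRoot (q j j : ℂ) 3 := by
    rw [h.right, show 12 = 6 * 2 from rfl, pow_mul]
    exact (h.isPrimitiveRoot.pow (by decide) rfl).pow_of_coprime 2 (by decide)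
  have hY : adpow q i j 3 ∈ I := by
    refine hI.adpow_succ_mem hGK hAAH h.ne ?_ h.isForbiddenDegree_brj_three_one
    rw [h.left, h.edge, ← pow_mul, ← pow_add, h.isPrimitiveRoot.pow_eq_one]
  have hY' : adpow q i j 4 ∈ I := by
    rw [adpow_succ]
    exact sub_mem (hI.mul_left _ _ hY) (I.smul_mem _ (hI.mul_right _ _ hY))
  have hr := hI.mem_of_isForbiddenDegree hGK hAAH h.ne h.isForbiddenDegree_brj_two_two
    (by decide) (quadSeq_zero_adpow_mem_homogD_bideg _ _ _ _) <| by
      simpa only [hI.isPrimitiveMod_iff, map_quadSeq_zero] using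
        (hI.isCoproductSeq i j).quadSeq_zero_eq_add_brj (hI.isBraidedPair i j) hQ hab hs
  have hr' := hI.gen_right_pow_mem hGK hAAH h.ne (by decide) hs'
    h.isForbiddenDegree_brj_zero_three
  rw [← hI.fst_eq_zero_iff] at hY hY'
  rw [← hI.fst_eq_zero_iff, map_quadSeq_zero] at hr
  rw [← hI.fst_eq_zero_iff, map_pow, pow_three] at hr'
  exact hI.bracketFourThree_fst_eq_zero_iff.1 <|
    (isAdSeq_adpow hI.fst).bracketFourThree_eq_zero_brj (q i j).ne_zero hQ hab hs hY hY' hr hr'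

lemma bracketFourThree_adpow_mem_gTwo (hI : IsPreNicholsIdeal S I) (hGK : FinGK I)
    (hAAH : AAH) (h : HasRankTwoDiagram q i j ω 6 1 3 3) :
    bracketFourThree (q i i : ℂ) (q i j) (q j i) (q j j) (adpow q i j) ∈ I := by
  have h3 : ω ^ 3 = -1 := pow_half_of_isPrimitiveRoot (n := 3) h.isPrimitiveRoot (by decide)
  have hω : (q i i : ℂ) = ω := by rw [h.left, pow_one]
  have hQ := pow_two_of_isPrimitiveRoot_six (hω ▸ h.isPrimitiveRoot)
  have hab : (q i j : ℂ) * q j i = -1 := by rw [h.edge, h3]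
  have hs : (q j j : ℂ) = -1 := by rw [h.right, h3]
  have hY : adpow q i j 4 ∈ I := by
    refine hI.adpow_succ_mem hGK hAAH h.ne ?_ h.isForbiddenDegree_gTwo_four_one
    rw [h.left, h.edge, ← pow_mul, ← pow_add, h.isPrimitiveRoot.pow_eq_one]
  have hr := hI.serreSeq_zero_adpow_mem hGK hAAH h.ne (by rw [hab, hs]; norm_num)
    h.isForbiddenDegree_gTwo_one_two
  have hr' := hI.snd_eq_zero hr
  rw [← hI.fst_eq_zero_iff] at hY
  rw [← hI.fst_eq_zero_iff, map_serreSeq_zero] at hr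
  rw [map_serreSeq_zero] at hr'
  refine hI.mem_of_isForbiddenDegree hGK hAAH h.ne h.isForbiddenDegree_gTwo_four_three
    (by decide) (bracketFourThree_adpow_mem_homogD_bideg _ _ _ _) ?_
  simpa only [hI.isPrimitiveMod_iff, map_bracketFourThree] using
    (hI.isCoproductSeq i j).bracketFourThree_eq_add_gTwo (hI.isBraidedPair i j) hQ hab hs
      (q i j).ne_zero hY hr hr'

end IsPreNicholsIdeal

end Types

theorem statement_16_general (θ : ℕ) (q : Fin θ → Fin θ → ℂˣ) (S : BraidedStr θ q) (hAAH : AAH)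
    (I : Submodule ℂ (TV θ)) (hI : IsPreNicholsIdeal S I) (hGK : FinGK I)
    (i j : Fin θ) (hij : i ≠ j)
    (hyp :
      (∃ ζ : ℂ, IsPrimitiveRoot ζ 12 ∧
        (q i i : ℂ) = -(ζ⁻¹) ^ 2 ∧ qtil q i j = ζ⁻¹ ∧ (q j j : ℂ) = ζ) ∨
      (∃ ζ : ℂ, IsPrimitiveRoot ζ 12 ∧
        (q i i : ℂ) = -ζ ^ 2 ∧ qtil q i j = ζ ^ 3 ∧ (q j j : ℂ) = -1) ∨
      (∃ ζ : ℂ, IsPrimitiveRoot ζ 24 ∧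
        (q i i : ℂ) = ζ ^ 6 ∧ qtil q i j = ζ ∧ (q j j : ℂ) = ζ⁻¹) ∨
      (∃ ζ : ℂ, IsPrimitiveRoot ζ 15 ∧
        (q i i : ℂ) = -ζ ∧ qtil q i j = -(ζ⁻¹) ^ 3 ∧ (q j j : ℂ) = ζ ^ 5) ∨
      (∃ ζ : ℂ, IsPrimitiveRoot ζ 9 ∧
        (q i i : ℂ) = -ζ ∧ qtil q i j = (ζ⁻¹) ^ 2 ∧ (q j j : ℂ) = ζ ^ 3) ∨
      (∃ ζ : ℂ, IsPrimitiveRoot ζ 6 ∧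
        (q i i : ℂ) = ζ ∧ qtil q i j = -1 ∧ (q j j : ℂ) = -1)) :
    brk q (δ θ i + δ θ i + δ θ i + δ θ j + δ θ j) (δ θ i + δ θ j)
      (brk q (δ θ i + δ θ i + δ θ j) (δ θ i + δ θ j) (xw q [i, i, j]) (xw q [i, j]))
      (xw q [i, j]) ∈ I := by
  rw [brk_brk_eq_bracketFourThree]
  rcases hyp with ⟨ζ, hζ, h1, h2, h3⟩ | ⟨ζ, hζ, h1, h2, h3⟩ | ⟨ζ, hζ, h1, h2, h3⟩ |
    ⟨ζ, hζ, h1, h2, h3⟩ | ⟨ζ, hζ, h1, h2, h3⟩ | ⟨ζ, hζ, h1, h2, h3⟩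
  · exact hI.bracketFourThree_adpow_mem_ufoSeven hGK hAAH (.ufoSeven hij hζ h1 h2 h3)
  · exact hI.bracketFourThree_adpow_mem_ufoEight hGK hAAH (.ufoEight hij hζ h1 h2 h3)
  · exact hI.bracketFourThree_adpow_mem_ufoNine hGK hAAH (.ufoNine hij hζ h1 h2 h3)
  · exact hI.bracketFourThree_adpow_mem_ufoEleven hGK hAAH (.ufoEleven hij hζ h1 h2 h3)
  · exact hI.bracketFourThree_adpow_mem_brj hGK hAAH (.brj hij hζ h1 h2 h3)
  · exact hI.bracketFourThree_adpow_mem_gTwo hGK hAAH (.gTwo hij hζ h1 h2 h3)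

/-- Lemma 3.13: if the rank-two Dynkin diagram
`(q_{ii}, q̃_{ij}, q_{jj})` of vertices `i, j` is one of the listed diagrams of types
`ufo(7)`, `ufo(8)`, `ufo(9)`, `ufo(11)`, `brj(2,3)`, `G₂`, then
`[x_{3α_i+2α_j}, x_{ij}]_c = 0` in every finite-GKdim pre-Nichols algebra of `q`,
where `x_{3α_i+2α_j} = [x_{iij}, x_{ij}]_c`. -/
theorem statement_16 (θ : ℕ) (q : Fin θ → Fin θ → ℂˣ) (S : BraidedStr θ q)
    (hconn : (dynkin q).Connected)
    (hfd : FiniteDimensional ℂ (TV θ ⧸ Jq S))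
    (hAAH : AAH)
    (I : Submodule ℂ (TV θ)) (hI : IsPreNicholsIdeal S I) (hGK : FinGK I)
    (i j : Fin θ) (hij : i ≠ j)
    (hyp :
      -- ufo(7)
      (∃ ζ : ℂ, IsPrimitiveRoot ζ 12 ∧
        (q i i : ℂ) = -(ζ⁻¹) ^ 2 ∧ qtil q i j = ζ⁻¹ ∧ (q j j : ℂ) = ζ) ∨
      -- ufo(8)
      (∃ ζ : ℂ, IsPrimitiveRoot ζ 12 ∧
        (q i i : ℂ) = -ζ ^ 2 ∧ qtil q i j = ζ ^ 3 ∧ (q j j : ℂ) = -1) ∨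
      -- ufo(9)
      (∃ ζ : ℂ, IsPrimitiveRoot ζ 24 ∧
        (q i i : ℂ) = ζ ^ 6 ∧ qtil q i j = ζ ∧ (q j j : ℂ) = ζ⁻¹) ∨
      -- ufo(11)
      (∃ ζ : ℂ, IsPrimitiveRoot ζ 15 ∧
        (q i i : ℂ) = -ζ ∧ qtil q i j = -(ζ⁻¹) ^ 3 ∧ (q j j : ℂ) = ζ ^ 5) ∨
      -- brj(2,3)
      (∃ ζ : ℂ, IsPrimitiveRoot ζ 9 ∧
        (q i i : ℂ) = -ζ ∧ qtil q i j = (ζ⁻¹) ^ 2 ∧ (q j j : ℂ) = ζ ^ 3) ∨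
      -- G₂
      (∃ ζ : ℂ, IsPrimitiveRoot ζ 6 ∧
        (q i i : ℂ) = ζ ∧ qtil q i j = -1 ∧ (q j j : ℂ) = -1)) :
    brk q (δ θ i + δ θ i + δ θ i + δ θ j + δ θ j) (δ θ i + δ θ j)
      (brk q (δ θ i + δ θ i + δ θ j) (δ θ i + δ θ j) (xw q [i, i, j]) (xw q [i, j]))
      (xw q [i, j]) ∈ I :=
  statement_16_general θ q S hAAH I hI hGK i j hij hyp

end PreNicholsPaper
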